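/- arXiv:2410.05929 — 3 statements merged into one kernel-verified Lean document; each statement's English description precedes it below -/
import Mathlib

section
/- There exists an infinitely differentiable surjective map φ(x,y) = (φ₁(x), φ₂(x,y)) : [0,1]² → [0,1]² such that φ(0,y) = (0,y) and φ(1,y) = (1,y) for all y ∈ [0,1], ∂φ₂/∂y(x,y) ≥ 0 for all (x,y), and with the following property: for every normed real vector space E and every map F : [0,1]² → E whose restriction to {(x,y) ∈ [0,1]² : x ≤ y} is infinitely differentiable and whose restriction to {(x,y) ∈ [0,1]² : x ≥ y} is infinitely differentiable, the composite F ∘ φ is infinitely differentiable on [0,1]². -/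
open Set

/-!
The horizontal coordinate `φ₁` stays at `0` until `x = 2/5` and is `1` from `x = 3/5` on, so before
and after that window `φ` lands on the edge `x = 0` of the upper triangle or the edge `x = 1` of the
lower one. Throughout a neighbourhood of the window, `y ↦ φ₂ (x, y)` is a smooth monotone map of
`[0, 1]` onto itself that pauses at height `φ₁ x` on the middle third, so `φ` lies below the
diagonal for `y ≤ 2/3` and above it for `1/3 ≤ y`. As these regions overlap, every point of the
square has a neighbourhood that `φ` maps into a single closed triangle, and there the composite is
smooth by the chain rule. Near `x = 0` and `x = 1` the pausing map is deformed to the identity.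
-/

open scoped Topology

theorem contDiffOn_comp_of_locally_mapsTo {𝕜 E F G : Type*}
    [NontriviallyNormedField 𝕜] [NormedAddCommGroup E] [NormedSpace 𝕜 E] [NormedAddCommGroup F]
    [NormedSpace 𝕜 F] [NormedAddCommGroup G] [NormedSpace 𝕜 G] {n : WithTop ℕ∞} {g : F → G}
    {f : E → F} {s : Set E} (hf : ContDiffOn 𝕜 n f s)
    (hg : ∀ x ∈ s, ∃ t, ContDiffOn 𝕜 n g t ∧ f ⁻¹' t ∈ 𝓝[s] x) : ContDiffOn 𝕜 n (g ∘ f) s := by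
  intro x hx
  obtain ⟨t, hgt, hft⟩ := hg x hx
  have hfx : x ∈ f ⁻¹' t := mem_of_mem_nhdsWithin hx hft
  exact (hgt (f x) hfx).comp_of_preimage_mem_nhdsWithin x (hf x hx) hft

theorem surjOn_prodMk_of_surjOn_fiber {α β γ δ : Type*} {f : α → γ} {g : α × β → δ} {s : Set α}
    {t : Set β} {u : Set γ} {v : Set δ} (hf : SurjOn f s u)
    (hg : ∀ x ∈ s, SurjOn (fun y => g (x, y)) t v) :
    SurjOn (fun p : α × β => (f p.1, g p)) (s ×ˢ t) (u ×ˢ v) := by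
  rintro ⟨c, d⟩ ⟨hc, hd⟩
  obtain ⟨x, hx, rfl⟩ := hf hc
  obtain ⟨y, hy, rfl⟩ := hg x hx hd
  exact ⟨(x, y), ⟨hx, hy⟩, rfl⟩

namespace DiagonalSmoothing

/-- The smooth transition from `0` on `(-∞, a]` to `1` on `[b, ∞)`, meant for `a < b`; for `a = b`
division by zero makes it vanish identically. -/
noncomputable def smoothStep (a b x : ℝ) : ℝ :=
  Real.smoothTransition ((x - a) / (b - a))

section smoothStep

variable {a b x : ℝ}

theorem smoothStep_mem_Icc (a b x : ℝ) : smoothStep a b x ∈ Icc 0 1 :=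
  ⟨Real.smoothTransition.nonneg _, Real.smoothTransition.le_one _⟩

theorem smoothStep_eq_zero (hab : a ≤ b) (hx : x ≤ a) : smoothStep a b x = 0 :=
  Real.smoothTransition.zero_of_nonpos
    (div_nonpos_of_nonpos_of_nonneg (sub_nonpos.2 hx) (sub_nonneg.2 hab))

theorem smoothStep_eq_one (hab : a < b) (hx : b ≤ x) : smoothStep a b x = 1 :=
  Real.smoothTransition.one_of_one_le
    ((one_le_div (sub_pos.2 hab)).2 (sub_le_sub_right hx a))

theorem monotone_smoothStep (hab : a ≤ b) : Monotone (smoothStep a b) := fun _ _ hxy =>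
  Real.smoothTransition.monotone
    (div_le_div_of_nonneg_right (sub_le_sub_right hxy a) (sub_nonneg.2 hab))

@[fun_prop]
theorem contDiff_smoothStep {n : ℕ∞} (a b : ℝ) : ContDiff ℝ n (smoothStep a b) := by
  unfold smoothStep
  fun_prop

end smoothStep

/-- For `0 ≤ s ≤ 1`, the smooth map of `[0, 1]` onto itself that rises from `0` to `s` on
`[0, 1/3]`, is constant on the middle third, and rises from `s` to `1` on `[2/3, 1]`. -/
noncomputable def plateau (s y : ℝ) : ℝ :=
  s * smoothStep 0 (1 / 3) y + (1 - s) * smoothStep (2 / 3) 1 y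

section plateau

variable {s y : ℝ}

theorem plateau_zero (s : ℝ) : plateau s 0 = 0 := by
  have hfirst : smoothStep 0 (1 / 3) 0 = 0 := smoothStep_eq_zero (by norm_num) le_rfl
  have hlast : smoothStep (2 / 3) 1 0 = 0 := smoothStep_eq_zero (by norm_num) (by norm_num)
  rw [plateau, hfirst, hlast, mul_zero, mul_zero, add_zero]

theorem plateau_one (s : ℝ) : plateau s 1 = 1 := by
  have hfirst : smoothStep 0 (1 / 3) 1 = 1 := smoothStep_eq_one (by norm_num) (by norm_num)
  have hlast : smoothStep (2 / 3) 1 1 = 1 := smoothStep_eq_one (by norm_num) le_rfl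
  rw [plateau, hfirst, hlast, mul_one, mul_one, add_sub_cancel]

theorem plateau_le (hs : 0 ≤ s) (hy : y ≤ 2 / 3) : plateau s y ≤ s := by
  have hlast : smoothStep (2 / 3) 1 y = 0 := smoothStep_eq_zero (by norm_num) hy
  rw [plateau, hlast, mul_zero, add_zero]
  exact mul_le_of_le_one_right hs (smoothStep_mem_Icc 0 (1 / 3) y).2

theorem le_plateau (hs : s ≤ 1) (hy : 1 / 3 ≤ y) : s ≤ plateau s y := by
  have hfirst : smoothStep 0 (1 / 3) y = 1 := smoothStep_eq_one (by norm_num) hy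
  rw [plateau, hfirst, mul_one]
  exact le_add_of_nonneg_right
    (mul_nonneg (sub_nonneg.2 hs) (smoothStep_mem_Icc (2 / 3) 1 y).1)

theorem monotone_plateau (hs : s ∈ Icc 0 1) : Monotone (plateau s) :=
  ((monotone_smoothStep (by norm_num)).const_mul hs.1).add
    ((monotone_smoothStep (by norm_num)).const_mul (sub_nonneg.2 hs.2))

end plateau

/-- The first component `φ₁` of the smoothing map. -/
noncomputable def abscissa : ℝ → ℝ :=
  smoothStep (2 / 5) (3 / 5)

/-- The weight with which `plateau` replaces the identity on the fibre over `x`: it vanishes at the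
vertical edges of the square and is `1` on `[1/5, 4/5]`. -/
noncomputable def weight (x : ℝ) : ℝ :=
  smoothStep 0 (1 / 5) x * (1 - smoothStep (4 / 5) 1 x)

/-- The second component `φ₂` of the smoothing map. -/
noncomputable def ordinate (p : ℝ × ℝ) : ℝ :=
  (1 - weight p.1) * p.2 + weight p.1 * plateau (abscissa p.1) p.2

/-- The smoothing map `φ = (φ₁, φ₂)`, defined on the whole plane. -/
noncomputable def smoothingMap (p : ℝ × ℝ) : ℝ × ℝ :=
  (abscissa p.1, ordinate p)

section smoothingMap

variable {x y : ℝ}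

theorem abscissa_mem_Icc (x : ℝ) : abscissa x ∈ Icc 0 1 :=
  smoothStep_mem_Icc _ _ x

theorem abscissa_eq_zero (hx : x ≤ 2 / 5) : abscissa x = 0 :=
  smoothStep_eq_zero (by norm_num) hx

theorem abscissa_eq_one (hx : 3 / 5 ≤ x) : abscissa x = 1 :=
  smoothStep_eq_one (by norm_num) hx

theorem weight_mem_Icc (x : ℝ) : weight x ∈ Icc 0 1 :=
  unitInterval.mul_mem (smoothStep_mem_Icc _ _ x) (Icc.one_sub_mem (smoothStep_mem_Icc _ _ x))

theorem weight_zero : weight 0 = 0 := by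
  simp [weight, smoothStep_eq_zero]

theorem weight_one : weight 1 = 0 := by
  have hfall : smoothStep (4 / 5) 1 1 = 1 := smoothStep_eq_one (by norm_num) le_rfl
  rw [weight, hfall, sub_self, mul_zero]

theorem weight_eq_one (hx : x ∈ Icc (1 / 5) (4 / 5)) : weight x = 1 := by
  have hrise : smoothStep 0 (1 / 5) x = 1 := smoothStep_eq_one (by norm_num) hx.1
  have hfall : smoothStep (4 / 5) 1 x = 0 := smoothStep_eq_zero (by norm_num) hx.2
  rw [weight, hrise, hfall, sub_zero, one_mul]

theorem ordinate_left (y : ℝ) : ordinate (0, y) = y := by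
  simp [ordinate, weight_zero]

theorem ordinate_right (y : ℝ) : ordinate (1, y) = y := by
  simp [ordinate, weight_one]

theorem ordinate_bottom (x : ℝ) : ordinate (x, 0) = 0 := by
  simp [ordinate, plateau_zero]

theorem ordinate_top (x : ℝ) : ordinate (x, 1) = 1 := by
  simp [ordinate, plateau_one]

theorem ordinate_eq_plateau (hx : x ∈ Icc (1 / 5) (4 / 5)) (y : ℝ) :
    ordinate (x, y) = plateau (abscissa x) y := by
  simp [ordinate, weight_eq_one hx]

theorem monotone_ordinate (x : ℝ) : Monotone fun y => ordinate (x, y) :=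
  (monotone_id.const_mul (sub_nonneg.2 (weight_mem_Icc x).2)).add
    ((monotone_plateau (abscissa_mem_Icc x)).const_mul (weight_mem_Icc x).1)

theorem ordinate_mem_Icc (x : ℝ) (hy : y ∈ Icc 0 1) : ordinate (x, y) ∈ Icc 0 1 := by
  simpa only [ordinate_bottom, ordinate_top] using (monotone_ordinate x).mapsTo_Icc hy

theorem contDiff_smoothingMap {n : ℕ∞} : ContDiff ℝ n smoothingMap := by
  unfold smoothingMap ordinate weight plateau abscissa
  fun_prop

theorem mapsTo_smoothingMap :
    MapsTo smoothingMap (Icc 0 1 ×ˢ Icc 0 1) (Icc 0 1 ×ˢ Icc 0 1) := fun p hp =>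
  ⟨abscissa_mem_Icc p.1, ordinate_mem_Icc p.1 hp.2⟩

theorem surjOn_smoothingMap :
    SurjOn smoothingMap (Icc 0 1 ×ˢ Icc 0 1) (Icc 0 1 ×ˢ Icc 0 1) := by
  refine surjOn_prodMk_of_surjOn_fiber ?_ fun x _ => ?_
  · have hcont : Continuous abscissa := (contDiff_smoothStep (n := 0) _ _).continuous
    have hzero : abscissa 0 = 0 := abscissa_eq_zero (by norm_num)
    have hone : abscissa 1 = 1 := abscissa_eq_one (by norm_num)
    simpa only [SurjOn, hzero, hone] using intermediate_value_Icc zero_le_one hcont.continuousOn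
  · have hcont : Continuous fun y => ordinate (x, y) :=
      (contDiff_smoothingMap (n := 0)).continuous.snd.comp (.prodMk_right x)
    simpa only [SurjOn, ordinate_bottom, ordinate_top]
      using intermediate_value_Icc zero_le_one hcont.continuousOn

theorem abscissa_le_ordinate (hy : y ∈ Icc 0 1) (h : x ≤ 2 / 5 ∨ x ≤ 4 / 5 ∧ 1 / 3 ≤ y) :
    abscissa x ≤ ordinate (x, y) := by
  rcases le_or_gt x (2 / 5) with hx | hx
  · exact (abscissa_eq_zero hx).trans_le (ordinate_mem_Icc x hy).1
  · obtain ⟨hx', hy'⟩ := h.resolve_left hx.not_ge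
    rw [ordinate_eq_plateau ⟨by linarith, hx'⟩]
    exact le_plateau (abscissa_mem_Icc x).2 hy'

theorem ordinate_le_abscissa (hy : y ∈ Icc 0 1) (h : 3 / 5 ≤ x ∨ 1 / 5 ≤ x ∧ y ≤ 2 / 3) :
    ordinate (x, y) ≤ abscissa x := by
  rcases le_or_gt (3 / 5) x with hx | hx
  · exact (ordinate_mem_Icc x hy).2.trans_eq (abscissa_eq_one hx).symm
  · obtain ⟨hx', hy'⟩ := h.resolve_left hx.not_ge
    rw [ordinate_eq_plateau ⟨hx', by linarith⟩]
    exact plateau_le (abscissa_mem_Icc x).1 hy'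

theorem eventually_abscissa_le_ordinate_or_ge (p : ℝ × ℝ) :
    (∀ᶠ q in 𝓝[Icc 0 1 ×ˢ Icc 0 1] p, abscissa q.1 ≤ ordinate q) ∨
      ∀ᶠ q in 𝓝[Icc 0 1 ×ˢ Icc 0 1] p, ordinate q ≤ abscissa q.1 := by
  let U : Set (ℝ × ℝ) := Iio (2 / 5) ×ˢ univ ∪ Iio (4 / 5) ×ˢ Ioi (1 / 3)
  let L : Set (ℝ × ℝ) := Ioi (3 / 5) ×ˢ univ ∪ Ioi (1 / 5) ×ˢ Iio (2 / 3)
  have hU : IsOpen U := (isOpen_Iio.prod isOpen_univ).union (isOpen_Iio.prod isOpen_Ioi)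
  have hL : IsOpen L := (isOpen_Ioi.prod isOpen_univ).union (isOpen_Ioi.prod isOpen_Iio)
  have hcover : p ∈ U ∨ p ∈ L := by
    simp only [U, L, mem_union, mem_prod, mem_Iio, mem_Ioi, mem_univ, and_true]
    grind
  refine hcover.imp (fun hp => ?_) (fun hp => ?_)
  · filter_upwards [mem_nhdsWithin_of_mem_nhds (hU.mem_nhds hp), self_mem_nhdsWithin] with q hq hsq
    exact abscissa_le_ordinate hsq.2 (hq.imp (fun h => h.1.le) (And.imp le_of_lt le_of_lt))
  · filter_upwards [mem_nhdsWithin_of_mem_nhds (hL.mem_nhds hp), self_mem_nhdsWithin] with q hq hsq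
    exact ordinate_le_abscissa hsq.2 (hq.imp (fun h => h.1.le) (And.imp le_of_lt le_of_lt))

theorem contDiffOn_comp_smoothingMap {E : Type*} [NormedAddCommGroup E] [NormedSpace ℝ E] {n : ℕ∞}
    {F : ℝ × ℝ → E} (hupper : ContDiffOn ℝ n F {p | p ∈ Icc 0 1 ×ˢ Icc 0 1 ∧ p.1 ≤ p.2})
    (hlower : ContDiffOn ℝ n F {p | p ∈ Icc 0 1 ×ˢ Icc 0 1 ∧ p.2 ≤ p.1}) :
    ContDiffOn ℝ n (F ∘ smoothingMap) (Icc 0 1 ×ˢ Icc 0 1) := by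
  refine contDiffOn_comp_of_locally_mapsTo contDiff_smoothingMap.contDiffOn fun p _ => ?_
  have hsquare : ∀ᶠ q in 𝓝[Icc 0 1 ×ˢ Icc 0 1] p, smoothingMap q ∈ Icc 0 1 ×ˢ Icc 0 1 :=
    eventually_nhdsWithin_of_forall mapsTo_smoothingMap
  rcases eventually_abscissa_le_ordinate_or_ge p with habove | hbelow
  · exact ⟨_, hupper, hsquare.and habove⟩
  · exact ⟨_, hlower, hsquare.and hbelow⟩

end smoothingMap

end DiagonalSmoothing

open DiagonalSmoothing

universe u

theorem smoothing_out_the_diagonal_general :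
    ∃ (φ₁ : ℝ → ℝ) (φ₂ : ℝ × ℝ → ℝ),
      ContDiffOn ℝ (⊤ : ℕ∞) (fun p : ℝ × ℝ => (φ₁ p.1, φ₂ p)) (Icc (0:ℝ) 1 ×ˢ Icc (0:ℝ) 1) ∧
      MapsTo (fun p : ℝ × ℝ => (φ₁ p.1, φ₂ p))
        (Icc (0:ℝ) 1 ×ˢ Icc (0:ℝ) 1) (Icc (0:ℝ) 1 ×ˢ Icc (0:ℝ) 1) ∧
      SurjOn (fun p : ℝ × ℝ => (φ₁ p.1, φ₂ p))
        (Icc (0:ℝ) 1 ×ˢ Icc (0:ℝ) 1) (Icc (0:ℝ) 1 ×ˢ Icc (0:ℝ) 1) ∧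
      (∀ y ∈ Icc (0:ℝ) 1, φ₁ 0 = 0 ∧ φ₂ (0, y) = y) ∧
      (∀ y ∈ Icc (0:ℝ) 1, φ₁ 1 = 1 ∧ φ₂ (1, y) = y) ∧
      (∀ x ∈ Icc (0:ℝ) 1, ∀ y ∈ Icc (0:ℝ) 1,
        0 ≤ derivWithin (fun y' => φ₂ (x, y')) (Icc (0:ℝ) 1) y) ∧
      (∀ (n : ℕ∞) (E : Type u) [NormedAddCommGroup E] [NormedSpace ℝ E] (F : ℝ × ℝ → E),
        ContDiffOn ℝ n F {p : ℝ × ℝ | p ∈ Icc (0:ℝ) 1 ×ˢ Icc (0:ℝ) 1 ∧ p.1 ≤ p.2} →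
        ContDiffOn ℝ n F {p : ℝ × ℝ | p ∈ Icc (0:ℝ) 1 ×ˢ Icc (0:ℝ) 1 ∧ p.2 ≤ p.1} →
        ContDiffOn ℝ n (F ∘ fun p : ℝ × ℝ => (φ₁ p.1, φ₂ p))
          (Icc (0:ℝ) 1 ×ˢ Icc (0:ℝ) 1)) :=
  ⟨abscissa, ordinate, contDiff_smoothingMap.contDiffOn, mapsTo_smoothingMap, surjOn_smoothingMap,
    fun y _ => ⟨abscissa_eq_zero (by norm_num), ordinate_left y⟩,
    fun y _ => ⟨abscissa_eq_one (by norm_num), ordinate_right y⟩,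
    fun x _ _ _ => ((monotone_ordinate x).monotoneOn _).derivWithin_nonneg,
    fun _ _ _ _ _ => contDiffOn_comp_smoothingMap⟩

theorem smoothing_out_the_diagonal :
    ∃ (φ₁ : ℝ → ℝ) (φ₂ : ℝ × ℝ → ℝ),
      ContDiffOn ℝ (⊤ : ℕ∞) (fun p : ℝ × ℝ => (φ₁ p.1, φ₂ p)) (Icc (0:ℝ) 1 ×ˢ Icc (0:ℝ) 1) ∧
      MapsTo (fun p : ℝ × ℝ => (φ₁ p.1, φ₂ p))
        (Icc (0:ℝ) 1 ×ˢ Icc (0:ℝ) 1) (Icc (0:ℝ) 1 ×ˢ Icc (0:ℝ) 1) ∧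
      SurjOn (fun p : ℝ × ℝ => (φ₁ p.1, φ₂ p))
        (Icc (0:ℝ) 1 ×ˢ Icc (0:ℝ) 1) (Icc (0:ℝ) 1 ×ˢ Icc (0:ℝ) 1) ∧
      (∀ y ∈ Icc (0:ℝ) 1, φ₁ 0 = 0 ∧ φ₂ (0, y) = y) ∧
      (∀ y ∈ Icc (0:ℝ) 1, φ₁ 1 = 1 ∧ φ₂ (1, y) = y) ∧
      (∀ x ∈ Icc (0:ℝ) 1, ∀ y ∈ Icc (0:ℝ) 1,
        0 ≤ derivWithin (fun y' => φ₂ (x, y')) (Icc (0:ℝ) 1) y) ∧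
      (∀ (E : Type) [NormedAddCommGroup E] [NormedSpace ℝ E] (F : ℝ × ℝ → E),
        ContDiffOn ℝ (⊤ : ℕ∞) F {p : ℝ × ℝ | p ∈ Icc (0:ℝ) 1 ×ˢ Icc (0:ℝ) 1 ∧ p.1 ≤ p.2} →
        ContDiffOn ℝ (⊤ : ℕ∞) F {p : ℝ × ℝ | p ∈ Icc (0:ℝ) 1 ×ˢ Icc (0:ℝ) 1 ∧ p.2 ≤ p.1} →
        ContDiffOn ℝ (⊤ : ℕ∞) (F ∘ fun p : ℝ × ℝ => (φ₁ p.1, φ₂ p))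
          (Icc (0:ℝ) 1 ×ˢ Icc (0:ℝ) 1)) := by
  obtain ⟨φ₁, φ₂, hsmooth, hmaps, hsurj, hleft, hright, hmono, hcomp⟩ :=
    smoothing_out_the_diagonal_general
  exact ⟨φ₁, φ₂, hsmooth, hmaps, hsurj, hleft, hright, hmono, hcomp ⊤⟩
end

section
/- Let h be a framing datum with image A = h(ℝ × [0,1]) and associated path X, and assume the topological frontier of A in ℂ is contained in h(ℝ × {0}) ∪ h(ℝ × {1}). Let f : ℝ × ℝ → ℂ be X-holomorphic on ℝ × [0,1] with f(θ + 2π, t) = f(θ, t). Then there exists a unique continuous map g : A → ℂ such that f(θ, t) = g(h(θ, t)) for all θ ∈ ℝ and t ∈ [0,1]; moreover θ ↦ g(h(θ, 0)) and θ ↦ g(h(θ, 1)) are infinitely differentiable. -/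
open Set Complex Real

/-!
The loops `h (·, t)` move towards their right-hand side, so a point `z` that leaves a loop passes
to its left, and a point that is about to be reached lies on the right. In a collar of the loop the
winding numbers around the two sides differ, while the winding number around `z` does not change
as long as the loops miss `z`. Hence the times at which the loops pass through `z` form an interval.
The equation `∂f/∂t = -X ∂f/∂θ` says that `f` is to first order a function of `h`, so `f` is
constant along the visits to `z`, and `f` descends to the image of `h`.
-/

section PartialDerivatives

variable {E : Type*} [NormedAddCommGroup E] [NormedSpace ℝ E] {h : ℝ × ℝ → E}

/-- The partial derivative of a family of curves `θ ↦ h (θ, t)` in the curve parameter `θ`. -/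
noncomputable def angularDeriv (h : ℝ × ℝ → E) (p : ℝ × ℝ) : E :=
  deriv (fun x => h (x, p.2)) p.1

/-- The partial derivative of a family of curves `θ ↦ h (θ, t)` in the time `t`. -/
noncomputable def timeDeriv (h : ℝ × ℝ → E) (p : ℝ × ℝ) : E :=
  deriv (fun s => h (p.1, s)) p.2

lemma hasDerivAt_angularDeriv (hh : Differentiable ℝ h) (θ t : ℝ) :
    HasDerivAt (fun x => h (x, t)) (angularDeriv h (θ, t)) θ :=
  (hh.comp (by fun_prop : Differentiable ℝ fun x : ℝ => (x, t)) θ).hasDerivAt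

lemma hasDerivAt_timeDeriv (hh : Differentiable ℝ h) (θ t : ℝ) :
    HasDerivAt (fun s => h (θ, s)) (timeDeriv h (θ, t)) t :=
  (hh.comp (by fun_prop : Differentiable ℝ fun s : ℝ => (θ, s)) t).hasDerivAt

lemma angularDeriv_eq_fderiv (hh : Differentiable ℝ h) (p : ℝ × ℝ) :
    angularDeriv h p = fderiv ℝ h p (1, 0) :=
  ((hh p).hasFDerivAt.comp_hasDerivAt p.1
    ((hasDerivAt_id p.1).prodMk (hasDerivAt_const p.1 p.2))).deriv

lemma timeDeriv_eq_fderiv (hh : Differentiable ℝ h) (p : ℝ × ℝ) :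
    timeDeriv h p = fderiv ℝ h p (0, 1) :=
  ((hh p).hasFDerivAt.comp_hasDerivAt p.2
    ((hasDerivAt_const p.2 p.1).prodMk (hasDerivAt_id p.2))).deriv

lemma continuous_angularDeriv (hh : ContDiff ℝ 1 h) : Continuous (angularDeriv h) := by
  rw [funext (angularDeriv_eq_fderiv (hh.differentiable one_ne_zero))]
  exact (hh.continuous_fderiv one_ne_zero).clm_apply continuous_const

lemma periodic_deriv {γ : ℝ → E} {T : ℝ} (hγ : Function.Periodic γ T) :
    Function.Periodic (deriv γ) T := fun θ => by
  rw [← deriv_comp_add_const]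
  exact congrArg (deriv · θ) (funext hγ)

end PartialDerivatives

section WindingIntegral

/-- The integral of `dw / (w - z)` along `γ` restricted to `[0, T]`. For a loop `γ` of period `T`
it is `2πi` times the winding number of `γ` around `z`. -/
noncomputable def windingIntegral (γ : ℝ → ℂ) (T : ℝ) (z : ℂ) : ℂ :=
  ∫ x in 0..T, deriv γ x / (γ x - z)

variable {γ : ℝ → ℂ} {z : ℂ}

lemma continuous_windingIntegrand (hγ : ContDiff ℝ 1 γ) (hz : ∀ x, γ x ≠ z) :
    Continuous fun x => deriv γ x / (γ x - z) :=
  (hγ.continuous_deriv le_rfl).div (hγ.continuous.sub continuous_const)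
    fun x => sub_ne_zero.2 (hz x)

lemma hasDerivAt_windingIntegral (hγ : ContDiff ℝ 1 γ) (hz : ∀ x, γ x ≠ z) (T : ℝ) :
    HasDerivAt (fun T => windingIntegral γ T z) (deriv γ T / (γ T - z)) T :=
  (continuous_windingIntegrand hγ hz).integral_hasStrictDerivAt 0 T |>.hasDerivAt

lemma exp_windingIntegral_mul (hγ : ContDiff ℝ 1 γ) (hz : ∀ x, γ x ≠ z) (T : ℝ) :
    cexp (windingIntegral γ T z) * (γ 0 - z) = γ T - z := by
  have hderiv : ∀ x, HasDerivAt (fun x => cexp (-windingIntegral γ x z) * (γ x - z)) 0 x := by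
    intro x
    have hγx := ((hγ.differentiable one_ne_zero x).hasDerivAt).sub_const z
    refine ((hasDerivAt_windingIntegral hγ hz x).neg.cexp.mul hγx).congr_deriv ?_
    have := sub_ne_zero.2 (hz x)
    field_simp
    ring
  have hconst := is_const_of_deriv_eq_zero (fun x => (hderiv x).differentiableAt)
    (fun x => (hderiv x).deriv) 0 T
  simp only [windingIntegral, intervalIntegral.integral_same, neg_zero, Complex.exp_zero,
    one_mul] at hconst
  rw [hconst, ← mul_assoc, ← Complex.exp_add]
  simp [windingIntegral]

lemma exists_windingIntegral_eq_int_mul (hγ : ContDiff ℝ 1 γ) {T : ℝ} (hT : γ T = γ 0)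
    (hz : ∀ x, γ x ≠ z) : ∃ n : ℤ, windingIntegral γ T z = n * (2 * π * I) := by
  rw [← Complex.exp_eq_one_iff]
  refine mul_right_cancel₀ (sub_ne_zero.2 (hz 0)) ?_
  rw [exp_windingIntegral_mul hγ hz, hT, one_mul]

lemma windingIntegral_eq_of_preconnectedSpace {P : Type*} [TopologicalSpace P] [PreconnectedSpace P]
    {γ : P → ℝ → ℂ} {z : P → ℂ} {T : ℝ} (hγ : ∀ p, Differentiable ℝ (γ p))
    (hγc : Continuous fun q : P × ℝ => γ q.1 q.2)
    (hγ' : Continuous fun q : P × ℝ => deriv (γ q.1) q.2) (hz : Continuous z)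
    (hT : ∀ p, γ p T = γ p 0) (hne : ∀ p x, γ p x ≠ z p) (p q : P) :
    windingIntegral (γ p) T (z p) = windingIntegral (γ q) T (z q) := by
  have hC1 : ∀ p, ContDiff ℝ 1 (γ p) := fun p =>
    contDiff_one_iff_deriv.2 ⟨hγ p, hγ'.comp (by fun_prop : Continuous fun x : ℝ => (p, x))⟩
  choose n hn using fun p => exists_windingIntegral_eq_int_mul (hC1 p) (hT p) (hne p)
  have hcont : Continuous fun p => windingIntegral (γ p) T (z p) :=
    intervalIntegral.continuous_parametric_intervalIntegral_of_continuous'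
      (hγ'.div (by fun_prop) fun q => sub_ne_zero.2 (hne q.1 q.2)) 0 T
  have hn_cont : Continuous n := by
    rw [Int.isClosedEmbedding_coe_real.isInducing.continuous_iff]
    refine (Complex.continuous_re.comp (hcont.div_const (2 * π * I))).congr fun p => ?_
    rw [Function.comp_apply, hn p, mul_div_cancel_right₀ _ two_pi_I_ne_zero, intCast_re,
      Function.comp_apply]
  rw [hn p, hn q, PreconnectedSpace.constant inferInstance hn_cont (x := p) (y := q)]

lemma exists_mem_Ioo_eq_zero_of_deriv_pos {φ : ℝ → ℝ} {a b : ℝ} (hab : a < b)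
    (hφ : ContinuousOn φ (Icc a b)) (ha : φ a = 0) (hb : φ b = 0) (ha' : 0 < deriv φ a)
    (hb' : 0 < deriv φ b) : ∃ x ∈ Ioo a b, φ x = 0 := by
  obtain ⟨c, ⟨hac, hcb⟩, hc⟩ : ∃ c ∈ Ioo a b, 0 < φ c := by
    obtain ⟨c, hsign, hc⟩ := (((eventually_nhdsWithin_sign_eq_of_deriv_pos ha' ha).filter_mono
      nhdsWithin_le_nhds).and (Ioo_mem_nhdsGT hab)).exists
    rw [sign_pos (sub_pos.2 hc.1), sign_eq_one_iff] at hsign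
    exact ⟨c, hc, hsign⟩
  obtain ⟨d, ⟨hcd, hdb⟩, hd⟩ : ∃ d ∈ Ioo c b, φ d < 0 := by
    obtain ⟨d, hsign, hd⟩ := (((eventually_nhdsWithin_sign_eq_of_deriv_pos hb' hb).filter_mono
      nhdsWithin_le_nhds).and (Ioo_mem_nhdsLT hcb)).exists
    rw [sign_neg (sub_neg.2 hd.2), sign_eq_neg_one_iff] at hsign
    exact ⟨d, hd, hsign⟩
  obtain ⟨x, hx, hφx⟩ := intermediate_value_Ioo' hcd.le
    (hφ.mono (Icc_subset_Icc hac.le hdb.le)) ⟨hd, hc⟩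
  exact ⟨x, ⟨hac.trans hx.1, hx.2.trans hdb⟩, hφx⟩

/-- The point at signed position `ε` on the normal line of the plane curve `γ` at `θ`, measured in
units of the speed `‖deriv γ θ‖` and positive on the left of `γ`. -/
noncomputable def normalPoint (γ : ℝ → ℂ) (θ ε : ℝ) : ℂ :=
  γ θ + ε * (I * deriv γ θ)

/-- The open normal segments of half-width `ε₀` (in units of the speed) of the plane curve `γ` meet
it only at their midpoints. -/
def HasNormalCollar (γ : ℝ → ℂ) (ε₀ : ℝ) : Prop :=
  ∀ θ φ ε : ℝ, |ε| < ε₀ → γ φ = normalPoint γ θ ε → ε = 0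

lemma HasNormalCollar.ne {ε₀ ε : ℝ} (hγ : HasNormalCollar γ ε₀) (hε : |ε| < ε₀) (hε0 : ε ≠ 0)
    (θ φ : ℝ) : γ φ ≠ normalPoint γ θ ε :=
  fun h => hε0 (hγ θ φ ε hε h)

lemma exists_eq_normalPoint_of_opposite {θ x r ε : ℝ} (hr : 0 < r) (hε : 0 ≤ ε)
    (hopp : γ x - normalPoint γ θ ε = -(r * (γ x - normalPoint γ θ (-ε)))) :
    ∃ δ : ℝ, |δ| ≤ ε ∧ γ x = normalPoint γ θ δ := by
  refine ⟨ε * ((1 - r) / (1 + r)), ?_, ?_⟩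
  · rw [abs_mul, abs_of_nonneg hε]
    refine mul_le_of_le_one_right hε (abs_le.2 ⟨?_, ?_⟩)
    · rw [le_div_iff₀ (by positivity)]; linarith
    · rw [div_le_one (by positivity)]; linarith
  · have : (1 + r : ℂ) ≠ 0 := by exact_mod_cast (by positivity : (1 + r) ≠ 0)
    simp only [normalPoint] at hopp ⊢
    push_cast at hopp ⊢
    field_simp
    linear_combination hopp

lemma deriv_div_sub_normalPoint_im {θ : ℝ} (hγ : deriv γ θ ≠ 0) (ε : ℝ) :
    (deriv γ θ / (γ θ - normalPoint γ θ ε)).im = 1 / ε := by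
  have hquot : deriv γ θ / (γ θ - normalPoint γ θ ε) = (1 / ε : ℝ) * I := by
    rw [normalPoint, sub_add_cancel_left, ← mul_assoc, ← neg_mul, div_mul_cancel_right₀ hγ]
    simp [mul_comm, inv_neg]
  rw [hquot, im_ofReal_mul, I_im, mul_one]

/-- Let `z₊` and `z₋` be the two points. The argument of `(γ x - z₊) / (γ x - z₋)` increases at
both ends of `[0, T]`. If it had no total variation, it would return to its initial value in
between, which puts `γ x` on the segment from `z₋` to `z₊`. -/
lemma windingIntegral_normalPoint_ne (hγ : ContDiff ℝ 1 γ) {T : ℝ} (hT : 0 < T)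
    (hper : Function.Periodic γ T) (hγ0 : deriv γ 0 ≠ 0) (hsimple : ∀ x ∈ Ioo 0 T, γ x ≠ γ 0)
    {ε₀ ε : ℝ} (hcollar : HasNormalCollar γ ε₀) (hε : ε ∈ Ioo 0 ε₀) :
    windingIntegral γ T (normalPoint γ 0 ε) ≠ windingIntegral γ T (normalPoint γ 0 (-ε)) := by
  intro heq
  have habs : |ε| < ε₀ := (abs_of_pos hε.1).trans_lt hε.2
  have hplus := hcollar.ne habs hε.1.ne' 0
  have hminus := hcollar.ne (by rwa [abs_neg]) (neg_ne_zero.2 hε.1.ne') 0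
  set L : ℝ → ℂ := fun x =>
    windingIntegral γ x (normalPoint γ 0 ε) - windingIntegral γ x (normalPoint γ 0 (-ε))
  have hL : ∀ x, HasDerivAt (fun x => (L x).im) (deriv γ x / (γ x - normalPoint γ 0 ε) -
      deriv γ x / (γ x - normalPoint γ 0 (-ε))).im x := fun x =>
    imCLM.hasFDerivAt.comp_hasDerivAt x
      ((hasDerivAt_windingIntegral hγ hplus x).sub (hasDerivAt_windingIntegral hγ hminus x))
  have hL0 : 0 < deriv (fun x => (L x).im) 0 := by
    rw [(hL 0).deriv, sub_im, deriv_div_sub_normalPoint_im hγ0, deriv_div_sub_normalPoint_im hγ0]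
    have := one_div_pos.2 hε.1
    rw [one_div_neg_eq_neg_one_div]
    linarith
  have hLT : deriv (fun x => (L x).im) T = deriv (fun x => (L x).im) 0 := by
    rw [(hL T).deriv, (hL 0).deriv, hper.eq, (periodic_deriv hper).eq]
  obtain ⟨x, hx, hLx⟩ := exists_mem_Ioo_eq_zero_of_deriv_pos hT
    (fun x _ => (hL x).continuousAt.continuousWithinAt) (by simp [L, windingIntegral])
    (by simp [L, heq]) hL0 (hLT ▸ hL0)
  have hexp : cexp (L x) = (Real.exp (L x).re : ℝ) := by
    rw [Complex.ofReal_exp]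
    exact congrArg cexp (Complex.ext rfl hLx)
  have hopp : γ x - normalPoint γ 0 ε =
      -((Real.exp (L x).re : ℝ) * (γ x - normalPoint γ 0 (-ε))) := by
    rw [← hexp, ← exp_windingIntegral_mul hγ hplus x, ← exp_windingIntegral_mul hγ hminus x,
      ← mul_assoc, ← Complex.exp_add, sub_add_cancel]
    simp only [normalPoint]
    push_cast
    ring
  obtain ⟨δ, hδ, hγx⟩ := exists_eq_normalPoint_of_opposite (Real.exp_pos (L x).re) hε.1.le hopp
  refine hsimple x hx (hγx.trans ?_)
  rw [hcollar 0 x δ (hδ.trans_lt hε.2) hγx, normalPoint, ofReal_zero, zero_mul, add_zero]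

end WindingIntegral

section EmbeddedLoops

lemma exists_pos_le_of_periodic {Y : Type*} [TopologicalSpace Y] {T : ℝ} (hT : 0 < T) {K : Set Y}
    (hK : IsCompact K) {F : ℝ × Y → ℝ} (hF : ContinuousOn F (univ ×ˢ K))
    (hper : ∀ y ∈ K, Function.Periodic (fun θ => F (θ, y)) T)
    (hpos : ∀ θ, ∀ y ∈ K, 0 < F (θ, y)) : ∃ m > 0, ∀ θ, ∀ y ∈ K, m ≤ F (θ, y) := by
  obtain ⟨m, hm, hle⟩ := ((isCompact_Icc (a := 0) (b := T)).prod hK).exists_forall_le'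
    (hF.mono (prod_mono_left (subset_univ _))) (fun p hp => hpos p.1 p.2 hp.2)
  refine ⟨m, hm, fun θ y hy => ?_⟩
  obtain ⟨θ', hθ', hFθ⟩ := (hper y hy).exists_mem_Ico₀ hT θ
  exact hFθ ▸ hle (θ', y) ⟨Ico_subset_Icc_self hθ', hy⟩

lemma exists_eq_add_int_mul_of_periodic {α : Type*} {γ : ℝ → α} {T : ℝ} (hT : 0 < T)
    (hper : Function.Periodic γ T) (hinj : InjOn γ (Ico 0 T)) {θ φ : ℝ} (h : γ θ = γ φ) :
    ∃ n : ℤ, φ = θ + n * T := by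
  obtain ⟨m, hm, -⟩ := existsUnique_add_zsmul_mem_Ico hT θ 0
  obtain ⟨n, hn, -⟩ := existsUnique_add_zsmul_mem_Ico hT φ 0
  rw [zero_add] at hm hn
  have heq := hinj hm hn (by rw [hper.zsmul m θ, hper.zsmul n φ, h])
  refine ⟨m - n, ?_⟩
  simp only [zsmul_eq_mul] at heq
  push_cast
  linarith

variable {E : Type*} [NormedAddCommGroup E] [NormedSpace ℝ E]

/-- A `C¹` family `θ ↦ h (θ, t)` of closed curves of period `T` which are simple and immersed for
`t ∈ [a, b]`. -/
structure IsEmbeddedLoopFamily (h : ℝ × ℝ → E) (T a b : ℝ) : Prop where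
  period_pos : 0 < T
  contDiff : ContDiff ℝ 1 h
  periodic : ∀ t, Function.Periodic (fun θ => h (θ, t)) T
  injOn : ∀ t ∈ Icc a b, InjOn (fun θ => h (θ, t)) (Ico 0 T)
  angularDeriv_ne_zero : ∀ θ, ∀ t ∈ Icc a b, angularDeriv h (θ, t) ≠ 0

/-- The slope of the chord of `θ ↦ h (θ, t)` from `θ` to `θ + x`, as a function of `(θ, t, x)`; as
an average of derivatives it extends continuously to `x = 0`. -/
noncomputable def chordSlope (h : ℝ × ℝ → E) (q : ℝ × ℝ × ℝ) : E :=
  ∫ s in (0 : ℝ)..1, angularDeriv h (q.1 + s * q.2.2, q.2.1)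

lemma continuous_chordSlope {h : ℝ × ℝ → E} (hh : ContDiff ℝ 1 h) : Continuous (chordSlope h) :=
  intervalIntegral.continuous_parametric_intervalIntegral_of_continuous'
    (f := fun (q : ℝ × ℝ × ℝ) s => angularDeriv h (q.1 + s * q.2.2, q.2.1))
    ((continuous_angularDeriv hh).comp (by fun_prop)) 0 1

lemma periodic_chordSlope {h : ℝ × ℝ → E} {T t : ℝ}
    (hper : Function.Periodic (fun θ => h (θ, t)) T) (x : ℝ) :
    Function.Periodic (fun θ => chordSlope h (θ, t, x)) T := fun θ => by
  simp only [chordSlope, add_right_comm θ T]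
  exact intervalIntegral.integral_congr fun s _ => periodic_deriv hper (θ + s * x)

lemma smul_chordSlope [CompleteSpace E] {h : ℝ × ℝ → E} (hh : ContDiff ℝ 1 h) (θ t x : ℝ) :
    x • chordSlope h (θ, t, x) = h (θ + x, t) - h (θ, t) := by
  have hcont : Continuous fun s : ℝ => angularDeriv h (θ + s • x, t) :=
    (continuous_angularDeriv hh).comp (by fun_prop)
  exact intervalIntegral.integral_unitInterval_deriv_eq_sub (f := fun y => h (y, t))
    (f' := fun y => angularDeriv h (y, t)) hcont.continuousOn
    fun s _ => hasDerivAt_angularDeriv (hh.differentiable one_ne_zero) (θ + s • x) t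

lemma chordSlope_zero [CompleteSpace E] (h : ℝ × ℝ → E) (θ t : ℝ) :
    chordSlope h (θ, t, 0) = angularDeriv h (θ, t) := by
  simp [chordSlope]

namespace IsEmbeddedLoopFamily

variable [CompleteSpace E] {h : ℝ × ℝ → E} {T a b : ℝ}

lemma chordSlope_ne_zero (hh : IsEmbeddedLoopFamily h T a b) (θ : ℝ) {t x : ℝ}
    (ht : t ∈ Icc a b) (hx : x ∈ Icc (-(T / 2)) (T / 2)) : chordSlope h (θ, t, x) ≠ 0 := by
  rcases eq_or_ne x 0 with rfl | hx0
  · rw [chordSlope_zero]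
    exact hh.angularDeriv_ne_zero θ t ht
  intro hslope
  have hchord := smul_chordSlope hh.contDiff θ t x
  rw [hslope, smul_zero, eq_comm, sub_eq_zero] at hchord
  obtain ⟨n, hn⟩ := exists_eq_add_int_mul_of_periodic hh.period_pos (hh.periodic t)
    (hh.injOn t ht) hchord.symm
  have hxn : x = n * T := add_left_cancel hn
  have hT := hh.period_pos
  have hlt : (n : ℝ) < 1 := by nlinarith [hx.2]
  have hgt : (-1 : ℝ) < n := by nlinarith [hx.1]
  have hn0 : n = 0 := by
    have : n < 1 := by exact_mod_cast hlt
    have : -1 < n := by exact_mod_cast hgt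
    omega
  exact hx0 (by rw [hxn, hn0, Int.cast_zero, zero_mul])

lemma exists_pos_mul_abs_le_norm_sub (hh : IsEmbeddedLoopFamily h T a b) :
    ∃ c > 0, ∀ θ, ∀ t ∈ Icc a b, ∀ x ∈ Icc (-(T / 2)) (T / 2),
      c * |x| ≤ ‖h (θ + x, t) - h (θ, t)‖ := by
  obtain ⟨c, hc, hle⟩ := exists_pos_le_of_periodic hh.period_pos
    ((isCompact_Icc (a := a) (b := b)).prod (isCompact_Icc (a := -(T / 2)) (b := T / 2)))
    (F := fun q => ‖chordSlope h q‖) (continuous_chordSlope hh.contDiff).norm.continuousOn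
    (fun y _ => (periodic_chordSlope (hh.periodic y.1) y.2).comp norm)
    (fun θ y hy => norm_pos_iff.2 (hh.chordSlope_ne_zero θ hy.1 hy.2))
  refine ⟨c, hc, fun θ t ht x hx => ?_⟩
  rw [← smul_chordSlope hh.contDiff, norm_smul, Real.norm_eq_abs, mul_comm]
  exact mul_le_mul_of_nonneg_left (hle θ (t, x) ⟨ht, hx⟩) (abs_nonneg x)

lemma exists_pos_le_norm_add_abs_re {h : ℝ × ℝ → ℂ} (hh : IsEmbeddedLoopFamily h T a b) :
    ∃ m > 0, ∀ θ, ∀ t ∈ Icc a b, ∀ x ∈ Icc (-(T / 2)) (T / 2),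
      m ≤ ‖x * (chordSlope h (θ, t, x) / angularDeriv h (θ, t))‖ +
        |(chordSlope h (θ, t, x) / angularDeriv h (θ, t)).re| := by
  set w : ℝ × ℝ × ℝ → ℂ := fun p => chordSlope h p / angularDeriv h (p.1, p.2.1)
  have hw : ContinuousOn w (univ ×ˢ Icc a b ×ˢ Icc (-(T / 2)) (T / 2)) :=
    (continuous_chordSlope hh.contDiff).continuousOn.div
      ((continuous_angularDeriv hh.contDiff).comp (by fun_prop)).continuousOn
      fun p hp => hh.angularDeriv_ne_zero p.1 p.2.1 hp.2.1
  have hw_per : ∀ t x, Function.Periodic (fun θ => w (θ, t, x)) T := fun t x =>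
    (periodic_chordSlope (hh.periodic t) x).div (periodic_deriv (hh.periodic t))
  have hpos : ∀ θ, ∀ y ∈ Icc a b ×ˢ Icc (-(T / 2)) (T / 2),
      0 < ‖y.2 * w (θ, y)‖ + |(w (θ, y)).re| := by
    rintro θ ⟨t, x⟩ ⟨ht, hx⟩
    have hθ := hh.angularDeriv_ne_zero θ t ht
    rcases eq_or_ne x 0 with rfl | hx0
    · simp [w, chordSlope_zero, div_self hθ]
    · have hwx : w (θ, t, x) ≠ 0 := div_ne_zero (hh.chordSlope_ne_zero θ ht hx) hθ
      exact add_pos_of_pos_of_nonneg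
        (norm_pos_iff.2 (mul_ne_zero (ofReal_ne_zero.2 hx0) hwx)) (abs_nonneg _)
  obtain ⟨m, hm, hle⟩ := exists_pos_le_of_periodic hh.period_pos (isCompact_Icc.prod isCompact_Icc)
    (F := fun p => ‖p.2.2 * w p‖ + |(w p).re|) (by fun_prop)
    (fun y _ => (hw_per y.1 y.2).comp fun v => ‖y.2 * v‖ + |v.re|) hpos
  exact ⟨m, hm, fun θ t ht x hx => hle θ (t, x) ⟨ht, hx⟩⟩

/-- A short chord has slope close to the derivative, hence is not normal to the curve; the other
chords have length bounded below. -/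
lemma exists_hasNormalCollar {h : ℝ × ℝ → ℂ} (hh : IsEmbeddedLoopFamily h T a b) :
    ∃ ε₀ > 0, ∀ t ∈ Icc a b, HasNormalCollar (fun θ => h (θ, t)) ε₀ := by
  obtain ⟨ε₀, hε₀, hle⟩ := hh.exists_pos_le_norm_add_abs_re
  refine ⟨ε₀, hε₀, fun t ht θ φ ε hε (hφ : h (φ, t) = _) => by_contra fun hε0 => ?_⟩
  obtain ⟨ψ, hψ, hφψ⟩ := (hh.periodic t).exists_mem_Ico hh.period_pos φ (θ - T / 2)
  set w := chordSlope h (θ, t, ψ - θ) / angularDeriv h (θ, t)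
  have hchord : (ψ - θ : ℝ) * w = ε * I := by
    have hslope := smul_chordSlope hh.contDiff θ t (ψ - θ)
    rw [add_sub_cancel, ← hφψ, hφ, normalPoint, add_sub_cancel_left, real_smul] at hslope
    rw [← mul_div_assoc, hslope, ← mul_assoc]
    exact mul_div_cancel_right₀ _ (hh.angularDeriv_ne_zero θ t ht)
  have hψθ : ψ - θ ≠ 0 := fun h0 => hε0 (by simpa [h0, eq_comm] using hchord)
  have hre : (ψ - θ) * w.re = 0 := by
    rw [← re_ofReal_mul, hchord, re_ofReal_mul, I_re, mul_zero]
  have hbound := hle θ t ht (ψ - θ) (by constructor <;> linarith [hψ.1, hψ.2])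
  rw [hchord, (mul_eq_zero.1 hre).resolve_left hψθ, abs_zero, add_zero, norm_mul, norm_I, mul_one,
    norm_real, Real.norm_eq_abs] at hbound
  exact hε.not_ge hbound

end IsEmbeddedLoopFamily

end EmbeddedLoops

section NearestPoints

open scoped Topology

lemma exists_isMinOn_deriv_pos {X : Type*} [TopologicalSpace X] {K : Set X} (hK : IsCompact K)
    (hne : K.Nonempty) {F : ℝ → X → ℝ} (hF : Continuous fun p : ℝ × X => F p.1 p.2)
    (hF' : ∀ t x, DifferentiableAt ℝ (fun s => F s x) t) {a b : ℝ} (hab : a ≤ b)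
    (hlt : sInf (F a '' K) < sInf (F b '' K)) :
    ∃ t ∈ Ico a b, ∃ x ∈ K, IsMinOn (F t) K x ∧ 0 < deriv (fun s => F s x) t := by
  by_contra! hle
  have hbdd : ∀ t, BddBelow (F t '' K) := fun t =>
    (hK.image (hF.comp (by fun_prop : Continuous fun x => (t, x)))).bddBelow
  refine hlt.not_ge (image_le_of_liminf_slope_right_le_deriv_boundary
    (B := fun _ => sInf (F a '' K)) (B' := 0) (hK.continuous_sInf hF).continuousOn le_rfl
    continuousOn_const
    (fun x _ => hasDerivWithinAt_const ..) (fun t ht r hr => ?_) (right_mem_Icc.2 hab))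
  obtain ⟨x, hx, hmin⟩ := hK.exists_isMinOn hne
    (hF.comp (by fun_prop : Continuous fun x => (t, x))).continuousOn
  have hslope : ∀ᶠ s in 𝓝[>] t, slope (fun s => F s x) t s < r :=
    ((hasDerivWithinAt_iff_tendsto_slope' self_notMem_Ioi).1
      (hF' t x).hasDerivAt.hasDerivWithinAt).eventually_lt_const ((hle t ht x hx hmin).trans_lt hr)
  refine (hslope.and self_mem_nhdsWithin).frequently.mono fun s ⟨hs, hts⟩ => lt_of_le_of_lt ?_ hs
  have hmin_eq : sInf (F t '' K) = F t x :=
    IsLeast.csInf_eq ⟨mem_image_of_mem _ hx, forall_mem_image.2 fun y hy => hmin hy⟩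
  rw [slope_def_field, slope_def_field, hmin_eq]
  have := csInf_le (hbdd s) (mem_image_of_mem _ hx)
  have : 0 < s - t := sub_pos.2 hts
  gcongr

variable {γ : ℝ → ℂ} {θ : ℝ}

lemma norm_sub_normalPoint (γ : ℝ → ℂ) (θ ε : ℝ) :
    ‖γ θ - normalPoint γ θ ε‖ = |ε| * ‖deriv γ θ‖ := by
  simp [normalPoint]

lemma inner_sub_normalPoint (hγ : deriv γ θ ≠ 0) (ε : ℝ) (v : ℂ) :
    inner ℝ (γ θ - normalPoint γ θ ε) v = -(ε * (v / deriv γ θ).im) * ‖deriv γ θ‖ ^ 2 := by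
  obtain ⟨w, rfl⟩ : ∃ w, v = w * deriv γ θ := ⟨v / deriv γ θ, (div_mul_cancel₀ v hγ).symm⟩
  rw [mul_div_cancel_right₀ _ hγ, normalPoint, sub_add_cancel_left, Complex.inner,
    ← normSq_eq_norm_sq, normSq_apply]
  simp only [mul_re, mul_im, conj_re, conj_im, neg_re, neg_im, ofReal_re, ofReal_im, I_re, I_im]
  ring

lemma exists_eq_normalPoint_of_forall_norm_sub_le {z : ℂ} (hγ : deriv γ θ ≠ 0)
    (hmin : ∀ φ, ‖γ θ - z‖ ≤ ‖γ φ - z‖) : ∃ ε : ℝ, z = normalPoint γ θ ε := by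
  have horth : 2 * inner ℝ (γ θ - z) (deriv γ θ) = 0 :=
    IsLocalMin.hasDerivAt_eq_zero (f := fun φ => ‖γ φ - z‖ ^ 2)
      (Filter.Eventually.of_forall fun φ => pow_le_pow_left₀ (norm_nonneg _) (hmin φ) 2)
      ((differentiableAt_of_deriv_ne_zero hγ).hasDerivAt.sub_const z).norm_sq
  obtain ⟨w, hw⟩ : ∃ w, γ θ - z = w * deriv γ θ :=
    ⟨(γ θ - z) / deriv γ θ, (div_mul_cancel₀ _ hγ).symm⟩
  have hre : w.re = 0 := by
    have hinner : inner ℝ (w * deriv γ θ) (deriv γ θ) = w.re * normSq (deriv γ θ) := by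
      simp only [Complex.inner, mul_re, mul_im, conj_re, conj_im, normSq_apply]
      ring
    simpa [hw, hinner, hγ] using horth
  refine ⟨-w.im, ?_⟩
  have hwI : w = w.im * I := by simpa [hre] using (re_add_im w).symm
  rw [normalPoint, ofReal_neg]
  linear_combination -hw - deriv γ θ * hwI

namespace IsEmbeddedLoopFamily

variable {T a b : ℝ}

section NormedSpace

variable {E : Type*} [NormedAddCommGroup E] [NormedSpace ℝ E] {h : ℝ × ℝ → E}

lemma mono (hh : IsEmbeddedLoopFamily h T a b) {c d : ℝ} (hcd : Icc c d ⊆ Icc a b) :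
    IsEmbeddedLoopFamily h T c d :=
  { hh with
    injOn := fun t ht => hh.injOn t (hcd ht)
    angularDeriv_ne_zero := fun θ t ht => hh.angularDeriv_ne_zero θ t (hcd ht) }

lemma timeReversal (hh : IsEmbeddedLoopFamily h T a b) :
    IsEmbeddedLoopFamily (fun p => h (p.1, -p.2)) T (-b) (-a) where
  period_pos := hh.period_pos
  contDiff := hh.contDiff.comp (by fun_prop)
  periodic t := hh.periodic (-t)
  injOn t ht := hh.injOn (-t) (neg_mem_Icc_iff.2 ht)
  angularDeriv_ne_zero θ t ht := hh.angularDeriv_ne_zero θ (-t) (neg_mem_Icc_iff.2 ht)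

lemma exists_pos_le_norm_angularDeriv (hh : IsEmbeddedLoopFamily h T a b) :
    ∃ m > 0, ∀ θ, ∀ t ∈ Icc a b, m ≤ ‖angularDeriv h (θ, t)‖ :=
  exists_pos_le_of_periodic hh.period_pos isCompact_Icc (F := fun p => ‖angularDeriv h p‖)
    (continuous_angularDeriv hh.contDiff).norm.continuousOn
    (fun t _ => (periodic_deriv (hh.periodic t)).comp norm)
    (fun θ t ht => norm_pos_iff.2 (hh.angularDeriv_ne_zero θ t ht))

end NormedSpace

lemma exists_nearest_inner_pos {E : Type*} [NormedAddCommGroup E] [InnerProductSpace ℝ E]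
    {h : ℝ × ℝ → E} {z : E} (hh : IsEmbeddedLoopFamily h T a b) (hab : a ≤ b)
    (ha : ∃ θ, h (θ, a) = z) (hb : ∀ θ, h (θ, b) ≠ z) :
    ∃ t ∈ Ico a b, ∃ θ, (∀ φ, ‖h (θ, t) - z‖ ≤ ‖h (φ, t) - z‖) ∧
      0 < inner ℝ (h (θ, t) - z) (timeDeriv h (θ, t)) := by
  have hdiff := hh.contDiff.differentiable one_ne_zero
  have hcont := hh.contDiff.continuous
  have hderiv : ∀ t θ, HasDerivAt (fun s => ‖h (θ, s) - z‖ ^ 2)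
      (2 * inner ℝ (h (θ, t) - z) (timeDeriv h (θ, t))) t := fun t θ =>
    ((hasDerivAt_timeDeriv hdiff θ t).sub_const z).norm_sq
  set K := Icc 0 T
  set F : ℝ → ℝ → ℝ := fun t θ => ‖h (θ, t) - z‖ ^ 2
  have hK : K.Nonempty := nonempty_Icc.2 hh.period_pos.le
  have hlt : sInf (F a '' K) < sInf (F b '' K) := by
    obtain ⟨θ, hθ⟩ := ha
    obtain ⟨θ', hθ', hhθ⟩ := (hh.periodic a).exists_mem_Ico₀ hh.period_pos θ
    obtain ⟨φ, -, hφ⟩ := isCompact_Icc.exists_sInf_image_eq hK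
      (by fun_prop : ContinuousOn (F b) K)
    have hFa : sInf (F a '' K) ≤ 0 := csInf_le ⟨0, by rintro _ ⟨θ, -, rfl⟩; positivity⟩
      ⟨θ', Ico_subset_Icc_self hθ', by simp [F, ← hhθ, hθ]⟩
    rw [hφ]
    exact hFa.trans_lt (pow_pos (norm_pos_iff.2 (sub_ne_zero.2 (hb φ))) 2)
  obtain ⟨t, ht, θ, -, hmin, hpos⟩ := exists_isMinOn_deriv_pos isCompact_Icc hK (F := F)
    (by fun_prop) (fun t θ => (hderiv t θ).differentiableAt) hab hlt
  refine ⟨t, ht, θ, fun φ => ?_, ?_⟩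
  · obtain ⟨φ', hφ', hhφ⟩ := (hh.periodic t).exists_mem_Ico₀ hh.period_pos φ
    rw [hhφ]
    exact (sq_le_sq₀ (norm_nonneg _) (norm_nonneg _)).1 (hmin (Ico_subset_Icc_self hφ'))
  · rw [(hderiv t θ).deriv] at hpos
    exact pos_of_mul_pos_right hpos zero_le_two

variable {h : ℝ × ℝ → ℂ} {z : ℂ}

lemma exists_crossing_normalPoint (hh : IsEmbeddedLoopFamily h T a b) (hab : a < b)
    (ha : ∃ θ, h (θ, a) = z) (hz : ∀ t ∈ Ioo a b, ∀ θ, h (θ, t) ≠ z) {ε₀ : ℝ} (hε₀ : 0 < ε₀) :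
    ∃ t ∈ Ioo a b, ∃ θ ε, |ε| < ε₀ ∧ z = normalPoint (fun x => h (x, t)) θ ε ∧
      ε * (timeDeriv h (θ, t) / angularDeriv h (θ, t)).im < 0 := by
  obtain ⟨m, hm, hle⟩ := hh.exists_pos_le_norm_angularDeriv
  obtain ⟨θ₀, hθ₀⟩ := ha
  obtain ⟨b', hab', hb'⟩ := exists_between hab
  have hclose : ∀ᶠ t in 𝓝[≥] a, ‖h (θ₀, t) - z‖ < ε₀ * m := by
    have hcont : Continuous fun t => ‖h (θ₀, t) - z‖ :=
      ((hh.contDiff.continuous.comp (by fun_prop)).sub continuous_const).norm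
    exact nhdsWithin_le_nhds (hcont.continuousAt.eventually_lt_const (by
      simpa [hθ₀] using mul_pos hε₀ hm))
  obtain ⟨d, ⟨had, hdb'⟩, hd⟩ := (mem_nhdsGE_iff_exists_mem_Ioc_Ico_subset hab').1 hclose
  have hdb : d < b := hdb'.trans_lt hb'
  obtain ⟨t, ht, θ, hmin, hpos⟩ := (hh.mono (Icc_subset_Icc_right hdb.le)).exists_nearest_inner_pos
    had.le ⟨θ₀, hθ₀⟩ (hz d ⟨had, hdb⟩)
  have hta : t ≠ a := by
    rintro rfl
    have hzero : h (θ, t) - z = 0 := norm_le_zero_iff.1 (by simpa [hθ₀] using hmin θ₀)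
    simp [hzero] at hpos
  have htab : t ∈ Ioo a b := ⟨ht.1.lt_of_ne' hta, ht.2.trans hdb⟩
  have hθ := hh.angularDeriv_ne_zero θ t (Ioo_subset_Icc_self htab)
  obtain ⟨ε, rfl⟩ := exists_eq_normalPoint_of_forall_norm_sub_le (γ := fun x => h (x, t)) hθ hmin
  refine ⟨t, htab, θ, ε, ?_, rfl, ?_⟩
  · have hnorm := (hmin θ₀).trans_lt (hd ht)
    rw [norm_sub_normalPoint (fun x => h (x, t))] at hnorm
    exact lt_of_mul_lt_mul_right ((mul_le_mul_of_nonneg_left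
      (hle θ t (Ioo_subset_Icc_self htab)) (abs_nonneg ε)).trans_lt hnorm) hm.le
  · rw [inner_sub_normalPoint (γ := fun x => h (x, t)) hθ] at hpos
    exact neg_pos.1 (pos_of_mul_pos_left hpos (by positivity))

end IsEmbeddedLoopFamily

end NearestPoints

section VisitTimes

lemma ordConnected_of_forall_exists_mem_Ioo {α : Type*} [LinearOrder α] [TopologicalSpace α]
    [OrderClosedTopology α] {s : Set α} (hs : IsCompact s)
    (hgap : ∀ a ∈ s, ∀ b ∈ s, a < b → ∃ t ∈ Ioo a b, t ∈ s) : s.OrdConnected := by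
  refine ⟨fun x hx y hy t ht => by_contra fun hts => ?_⟩
  obtain ⟨a, ⟨ha, hat⟩, ha_max⟩ := (hs.inter_right isClosed_Iic).exists_isGreatest ⟨x, hx, ht.1⟩
  obtain ⟨b, ⟨hb, htb⟩, hb_min⟩ := (hs.inter_right isClosed_Ici).exists_isLeast ⟨y, hy, ht.2⟩
  have hat' : a < t := lt_of_le_of_ne hat fun h => hts (h ▸ ha)
  have htb' : t < b := lt_of_le_of_ne htb fun h => hts (h ▸ hb)
  obtain ⟨r, ⟨har, hrb⟩, hr⟩ := hgap a ha b hb (hat'.trans htb')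
  rcases le_total r t with hrt | htr
  · exact har.not_ge (ha_max ⟨hr, hrt⟩)
  · exact hrb.not_ge (hb_min ⟨hr, htr⟩)

namespace IsEmbeddedLoopFamily

lemma isCompact_visitTimes {E : Type*} [NormedAddCommGroup E] [NormedSpace ℝ E] {h : ℝ × ℝ → E}
    {T a b : ℝ} (hh : IsEmbeddedLoopFamily h T a b) (z : E) :
    IsCompact {t | t ∈ Icc a b ∧ ∃ θ, h (θ, t) = z} := by
  have hcompact : IsCompact ((Icc 0 T ×ˢ Icc a b) ∩ h ⁻¹' {z}) :=
    (isCompact_Icc.prod isCompact_Icc).inter_right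
      (isClosed_singleton.preimage hh.contDiff.continuous)
  convert hcompact.image continuous_snd
  ext t
  constructor
  · rintro ⟨ht, θ, hθ⟩
    obtain ⟨θ', hθ', hhθ⟩ := (hh.periodic t).exists_mem_Ico₀ hh.period_pos θ
    exact ⟨(θ', t), ⟨⟨Ico_subset_Icc_self hθ', ht⟩, hhθ.symm.trans hθ⟩, rfl⟩
  · rintro ⟨⟨θ, t⟩, ⟨⟨-, ht⟩, hθ⟩, rfl⟩
    exact ⟨ht, θ, hθ⟩

variable {h : ℝ × ℝ → ℂ} {T a b : ℝ} {z : ℂ}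

lemma windingIntegral_eq_of_forall_ne (hh : IsEmbeddedLoopFamily h T a b) {S : Set ℝ}
    (hS : IsPreconnected S) (hz : ∀ t ∈ S, ∀ θ, h (θ, t) ≠ z) {t t' : ℝ} (ht : t ∈ S)
    (ht' : t' ∈ S) :
    windingIntegral (fun x => h (x, t)) T z = windingIntegral (fun x => h (x, t')) T z := by
  have : PreconnectedSpace S := isPreconnected_iff_preconnectedSpace.1 hS
  have hcont := hh.contDiff.continuous
  exact windingIntegral_eq_of_preconnectedSpace (γ := fun (t : S) x => h (x, t)) (z := fun _ => z)
    (fun t θ => (hasDerivAt_angularDeriv (hh.contDiff.differentiable one_ne_zero) θ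
      t).differentiableAt) (by fun_prop)
    ((continuous_angularDeriv hh.contDiff).comp
      (by fun_prop : Continuous fun q : S × ℝ => (q.2, (q.1 : ℝ))))
    continuous_const (fun t => (hh.periodic t).eq) (fun t θ => hz t t.2 θ) ⟨t, ht⟩ ⟨t', ht'⟩

lemma windingIntegral_normalPoint_eq (hh : IsEmbeddedLoopFamily h T a b) {ε₀ : ℝ}
    (hcollar : ∀ t ∈ Icc a b, HasNormalCollar (fun θ => h (θ, t)) ε₀) {S : Set ℝ}
    (hS : IsPreconnected S) (hSε₀ : ∀ ε ∈ S, |ε| < ε₀) (hS0 : ∀ ε ∈ S, ε ≠ 0)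
    {t t' ε ε' : ℝ} (ht : t ∈ Icc a b) (ht' : t' ∈ Icc a b) (hε : ε ∈ S) (hε' : ε' ∈ S)
    (θ θ' : ℝ) :
    windingIntegral (fun x => h (x, t)) T (normalPoint (fun x => h (x, t)) θ ε) =
      windingIntegral (fun x => h (x, t')) T (normalPoint (fun x => h (x, t')) θ' ε') := by
  have : PreconnectedSpace S := isPreconnected_iff_preconnectedSpace.1 hS
  have : PreconnectedSpace (Icc a b) := isPreconnected_iff_preconnectedSpace.1 isPreconnected_Icc
  have hcont := hh.contDiff.continuous
  have hcont' := continuous_angularDeriv hh.contDiff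
  exact windingIntegral_eq_of_preconnectedSpace (P := Icc a b × S × ℝ)
    (γ := fun p x => h (x, p.1)) (z := fun p => normalPoint (fun x => h (x, p.1)) p.2.2 p.2.1)
    (fun p θ => (hasDerivAt_angularDeriv (hh.contDiff.differentiable one_ne_zero) θ
      p.1).differentiableAt) (by fun_prop)
    (hcont'.comp (by fun_prop : Continuous fun q : (Icc a b × S × ℝ) × ℝ => (q.2, (q.1.1 : ℝ))))
    (by
      have : Continuous fun p : Icc a b × S × ℝ => angularDeriv h (p.2.2, p.1) := by fun_prop
      exact (by fun_prop : Continuous fun p : Icc a b × S × ℝ =>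
        h (p.2.2, p.1) + (p.2.1 : ℝ) * (I * angularDeriv h (p.2.2, p.1))))
    (fun p => (hh.periodic p.1).eq)
    (fun p θ => (hcollar p.1 p.1.2).ne (hSε₀ _ p.2.1.2) (hS0 _ p.2.1.2) p.2.2 θ)
    (⟨t, ht⟩, ⟨ε, hε⟩, θ) (⟨t', ht'⟩, ⟨ε', hε'⟩, θ')

lemma exists_crossing_normalPoint_reversed (hh : IsEmbeddedLoopFamily h T a b) (hab : a < b)
    (hb : ∃ θ, h (θ, b) = z) (hz : ∀ t ∈ Ioo a b, ∀ θ, h (θ, t) ≠ z) {ε₀ : ℝ} (hε₀ : 0 < ε₀) :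
    ∃ t ∈ Ioo a b, ∃ θ ε, |ε| < ε₀ ∧ z = normalPoint (fun x => h (x, t)) θ ε ∧
      0 < ε * (timeDeriv h (θ, t) / angularDeriv h (θ, t)).im := by
  obtain ⟨t, ht, θ, ε, hε, hzε, hneg⟩ := hh.timeReversal.exists_crossing_normalPoint
    (neg_lt_neg hab) (by simpa using hb) (fun t ht => hz (-t) (neg_mem_Ioo_iff.2 ht)) hε₀
  have htime : timeDeriv (fun p => h (p.1, -p.2)) (θ, t) = -timeDeriv h (θ, -t) :=
    deriv_comp_neg (fun s => h (θ, s)) t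
  rw [htime, neg_div, neg_im, mul_neg, neg_lt_zero] at hneg
  exact ⟨-t, neg_mem_Ioo_iff.2 ht, θ, ε, hε, hzε, hneg⟩

/-- A point missed by all loops strictly between two visits would leave the first loop on its left
side and reach the last one from its right side, although its winding number does not change. -/
lemma exists_mem_Ioo_visit (hh : IsEmbeddedLoopFamily h T a b)
    (hinward : ∀ θ, ∀ t ∈ Icc a b, (timeDeriv h (θ, t) / angularDeriv h (θ, t)).im ≤ 0)
    (hab : a < b) (ha : ∃ θ, h (θ, a) = z) (hb : ∃ θ, h (θ, b) = z) :
    ∃ t ∈ Ioo a b, ∃ θ, h (θ, t) = z := by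
  by_contra! hz
  obtain ⟨ε₀, hε₀, hcollar⟩ := hh.exists_hasNormalCollar
  obtain ⟨t, ht, θ, ε, hε, hzε, hneg⟩ := hh.exists_crossing_normalPoint hab ha hz hε₀
  obtain ⟨t', ht', θ', ε', hε', hzε', hpos⟩ :=
    hh.exists_crossing_normalPoint_reversed hab hb hz hε₀
  have htI := Ioo_subset_Icc_self ht
  have ht'I := Ioo_subset_Icc_self ht'
  have hε_pos : 0 < ε := by by_contra! hle; nlinarith [hinward θ t htI]
  have hε'_neg : ε' < 0 := by by_contra! hle; nlinarith [hinward θ' t' ht'I]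
  have hε_lt := (abs_lt.1 hε).2
  have hleft := hh.windingIntegral_normalPoint_eq hcollar isPreconnected_Ioo
    (S := Ioo 0 ε₀) (fun x hx => abs_lt.2 ⟨by linarith [hx.1], hx.2⟩) (fun x hx => hx.1.ne')
    htI htI ⟨hε_pos, hε_lt⟩ ⟨hε_pos, hε_lt⟩ θ 0
  have hright := hh.windingIntegral_normalPoint_eq hcollar isPreconnected_Ioo
    (S := Ioo (-ε₀) 0) (fun x hx => abs_lt.2 ⟨hx.1, by linarith [hx.2]⟩) (fun x hx => hx.2.ne)
    ht'I htI ⟨(abs_lt.1 hε').1, hε'_neg⟩ ⟨neg_lt_neg hε_lt, neg_neg_iff_pos.2 hε_pos⟩ θ' 0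
  have hconst := hh.windingIntegral_eq_of_forall_ne isPreconnected_Ioo hz ht ht'
  refine windingIntegral_normalPoint_ne (γ := fun x => h (x, t))
    (hh.contDiff.comp (by fun_prop)) hh.period_pos
    (hh.periodic t) (hh.angularDeriv_ne_zero 0 t htI) (fun x hx hx0 => hx.1.ne' ?_)
    (hcollar t htI) ⟨hε_pos, hε_lt⟩ ?_
  · exact hh.injOn t htI (Ioo_subset_Ico_self hx) (left_mem_Ico.2 hh.period_pos) hx0
  · rw [← hleft, ← hright, ← hzε, ← hzε', hconst]

lemma ordConnected_visitTimes (hh : IsEmbeddedLoopFamily h T a b)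
    (hinward : ∀ θ, ∀ t ∈ Icc a b, (timeDeriv h (θ, t) / angularDeriv h (θ, t)).im ≤ 0) (z : ℂ) :
    {t | t ∈ Icc a b ∧ ∃ θ, h (θ, t) = z}.OrdConnected :=
  ordConnected_of_forall_exists_mem_Ioo (hh.isCompact_visitTimes z)
    fun c ⟨hc, hcz⟩ d ⟨hd, hdz⟩ hcd => by
      have hsub := Icc_subset_Icc hc.1 hd.2
      obtain ⟨t, ht, htz⟩ := (hh.mono hsub).exists_mem_Ioo_visit
        (fun θ t ht => hinward θ t (hsub ht)) hcd hcz hdz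
      exact ⟨t, ht, hsub (Ioo_subset_Icc_self ht), htz⟩

end IsEmbeddedLoopFamily

end VisitTimes

section Factorization

open scoped Topology

lemma exists_continuousOn_image_of_fiberwise_eq {X Y Z : Type*} [TopologicalSpace X]
    [TopologicalSpace Y] [TopologicalSpace Z] [T2Space Y] [Nonempty Z] {K : Set X}
    (hK : IsCompact K) {h : X → Y} {f : X → Z} (hh : ContinuousOn h K) (hf : ContinuousOn f K)
    (hfib : ∀ x ∈ K, ∀ y ∈ K, h x = h y → f x = f y) :
    ∃ g : Y → Z, ContinuousOn g (h '' K) ∧ ∀ x ∈ K, f x = g (h x) := by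
  obtain ⟨g, hg⟩ : ∃ g : Y → Z, ∀ x ∈ K, f x = g (h x) := by
    have hfactor : (fun x : K => f x).FactorsThrough fun x : K => h x :=
      fun x y hxy => hfib x x.2 y y.2 hxy
    obtain ⟨g, hg⟩ := (Function.factorsThrough_iff _).1 hfactor
    exact ⟨g, fun x hx => congrFun hg ⟨x, hx⟩⟩
  refine ⟨g, continuousOn_iff_isClosed.2 fun C hC => ?_, hg⟩
  obtain ⟨u, hu, hfu⟩ := continuousOn_iff_isClosed.1 hf C hC
  refine ⟨h '' (K ∩ u), ((hK.inter_right hu).image_of_continuousOn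
    (hh.mono inter_subset_left)).isClosed, ?_⟩
  rw [inter_eq_left.2 (image_mono inter_subset_left), inter_comm K, ← hfu]
  ext y
  constructor
  · rintro ⟨hy, x, hx, rfl⟩
    exact ⟨x, ⟨by rwa [mem_preimage, hg x hx], hx⟩, rfl⟩
  · rintro ⟨x, ⟨hxC, hx⟩, rfl⟩
    exact ⟨by rwa [mem_preimage, ← hg x hx], x, hx, rfl⟩

lemma hasFDerivAt_zero_of_partial_eq_zero {E : Type*} [NormedAddCommGroup E] [NormedSpace ℝ E]
    {φ : ℝ × ℝ → E} (hφ : Differentiable ℝ φ) {p : ℝ × ℝ} (hθ : angularDeriv φ p = 0)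
    (ht : timeDeriv φ p = 0) : HasFDerivAt φ (0 : ℝ × ℝ →L[ℝ] E) p := by
  rw [angularDeriv_eq_fderiv hφ] at hθ
  rw [timeDeriv_eq_fderiv hφ] at ht
  have hzero : fderiv ℝ φ p = 0 := by ext <;> simpa
  exact hzero ▸ (hφ p).hasFDerivAt

lemma hasFDerivAt_sub_smul_zero {F : Type*} [NormedAddCommGroup F] [NormedSpace ℂ F]
    {h : ℝ × ℝ → ℂ} {f : ℝ × ℝ → F} (hh : Differentiable ℝ h) (hf : Differentiable ℝ f)
    {p : ℝ × ℝ} (hp : angularDeriv h p ≠ 0)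
    (hhol : timeDeriv f p = (timeDeriv h p / angularDeriv h p) • angularDeriv f p) :
    HasFDerivAt (fun q => f q - h q • (angularDeriv h p)⁻¹ • angularDeriv f p)
      (0 : ℝ × ℝ →L[ℝ] F) p := by
  set c : F := (angularDeriv h p)⁻¹ • angularDeriv f p
  refine hasFDerivAt_zero_of_partial_eq_zero (hf.sub (hh.smul_const c)) ?_ ?_
  · refine ((hasDerivAt_angularDeriv hf p.1 p.2).sub
      ((hasDerivAt_angularDeriv hh p.1 p.2).smul_const c)).deriv.trans ?_
    rw [smul_inv_smul₀ hp, sub_self]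
  · refine ((hasDerivAt_timeDeriv hf p.1 p.2).sub
      ((hasDerivAt_timeDeriv hh p.1 p.2).smul_const c)).deriv.trans ?_
    rw [hhol, smul_smul, div_eq_mul_inv, sub_self]

lemma hasDerivWithinAt_comp_zero_of_isBigO {E F : Type*} [NormedAddCommGroup E]
    [NormedSpace ℝ E] [NormedAddCommGroup F] [NormedSpace ℝ F] {φ : E → F} {c : ℝ → E} {p : E}
    {s : Set ℝ} {t : ℝ} (hφ : HasFDerivAt φ (0 : E →L[ℝ] F) p) (hcp : φ (c t) = φ p)
    (hc : (fun t' => c t' - p) =O[𝓝[s] t] fun t' => t' - t) :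
    HasDerivWithinAt (φ ∘ c) 0 s t := by
  have htendsto : Filter.Tendsto c (𝓝[s] t) (𝓝 p) := by
    refine tendsto_sub_nhds_zero_iff.1 (hc.trans_tendsto ?_)
    exact (tendsto_sub_nhds_zero_iff.2 Filter.tendsto_id).mono_left nhdsWithin_le_nhds
  rw [hasDerivWithinAt_iff_isLittleO]
  simpa [hcp, Function.comp_def] using
    ((hasFDerivAt_iff_isLittleO.1 hφ).comp_tendsto htendsto).trans_isBigO hc

namespace IsEmbeddedLoopFamily

variable {T a b : ℝ}

lemma isBigO_sub_of_constant {E : Type*} [NormedAddCommGroup E] [NormedSpace ℝ E]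
    [CompleteSpace E] {h : ℝ × ℝ → E} (hh : IsEmbeddedLoopFamily h T a b) {θ t : ℝ} {S : Set ℝ}
    (hS : S ⊆ Icc a b) {ψ : ℝ → ℝ} (hψ : ∀ s ∈ S, ψ s - θ ∈ Icc (-(T / 2)) (T / 2))
    (hconst : ∀ s ∈ S, h (ψ s, s) = h (θ, t)) :
    (fun s => (ψ s, s) - (θ, t)) =O[𝓝[S] t] fun s => s - t := by
  obtain ⟨c, hc, hle⟩ := hh.exists_pos_mul_abs_le_norm_sub
  refine Asymptotics.IsBigO.prod_left ?_ (Asymptotics.isBigO_refl _ _)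
  have hsep : (fun s => ψ s - θ) =O[𝓝[S] t] fun s => h (θ, s) - h (θ, t) := by
    refine Asymptotics.IsBigO.of_bound c⁻¹ (eventually_mem_nhdsWithin.mono fun s hs => ?_)
    have hchord := hle θ s (hS hs) (ψ s - θ) (hψ s hs)
    rw [add_sub_cancel, hconst s hs, norm_sub_rev] at hchord
    rwa [le_inv_mul_iff₀ hc]
  exact hsep.trans ((hasDerivAt_timeDeriv (hh.contDiff.differentiable one_ne_zero) θ
    t).isBigO_sub.mono nhdsWithin_le_nhds)

lemma apply_eq_of_apply_eq_of_mem_Icc {E α : Type*} [NormedAddCommGroup E] [NormedSpace ℝ E]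
    {h : ℝ × ℝ → E} {f : ℝ × ℝ → α} (hh : IsEmbeddedLoopFamily h T a b)
    (hfper : ∀ t, Function.Periodic (fun θ => f (θ, t)) T) {t θ φ : ℝ} (ht : t ∈ Icc a b)
    (heq : h (θ, t) = h (φ, t)) : f (θ, t) = f (φ, t) := by
  obtain ⟨n, rfl⟩ := exists_eq_add_int_mul_of_periodic hh.period_pos (hh.periodic t)
    (hh.injOn t ht) heq
  exact ((hfper t).int_mul n θ).symm

variable {F : Type*} [NormedAddCommGroup F] [NormedSpace ℂ F] {h : ℝ × ℝ → ℂ} {f : ℝ × ℝ → F}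

/-- To first order at each point of the path, `f` is an affine function of `h`, which is constant
along the path. -/
lemma hasDerivWithinAt_zero_of_constant (hh : IsEmbeddedLoopFamily h T a b)
    (hf : Differentiable ℝ f) (hfper : ∀ t, Function.Periodic (fun θ => f (θ, t)) T)
    (hhol : ∀ θ, ∀ t ∈ Icc a b, timeDeriv f (θ, t) =
      (timeDeriv h (θ, t) / angularDeriv h (θ, t)) • angularDeriv f (θ, t))
    {S : Set ℝ} (hS : S ⊆ Icc a b) {ψ : ℝ → ℝ} {z : ℂ} (hψ : ∀ s ∈ S, h (ψ s, s) = z) {t : ℝ}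
    (ht : t ∈ S) : HasDerivWithinAt (fun s => f (ψ s, s)) 0 S t := by
  have hhdiff := hh.contDiff.differentiable one_ne_zero
  set θ := ψ t
  have hlift : ∀ s, ∃ θ' ∈ Ico (θ - T / 2) (θ - T / 2 + T),
      (h (ψ s, s), f (ψ s, s)) = (h (θ', s), f (θ', s)) := fun s =>
    Function.Periodic.exists_mem_Ico (f := fun x => (h (x, s), f (x, s)))
      (fun x => Prod.ext (hh.periodic s x) (hfper s x)) hh.period_pos (ψ s) (θ - T / 2)
  choose Ψ hΨ hhf using hlift
  have hhΨ : ∀ s ∈ S, h (Ψ s, s) = z := fun s hs =>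
    (congrArg Prod.fst (hhf s)).symm.trans (hψ s hs)
  have hfΨ : ∀ s, f (ψ s, s) = f (Ψ s, s) := fun s => congrArg Prod.snd (hhf s)
  set c : F := (angularDeriv h (θ, t))⁻¹ • angularDeriv f (θ, t)
  set φ : ℝ × ℝ → F := fun p => f p - h p • c
  have hφ : HasFDerivAt φ (0 : ℝ × ℝ →L[ℝ] F) (θ, t) :=
    hasFDerivAt_sub_smul_zero hhdiff hf (hh.angularDeriv_ne_zero θ t (hS ht)) (hhol θ t (hS ht))
  have hbigO := hh.isBigO_sub_of_constant hS (θ := θ) (t := t) (ψ := Ψ)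
    (fun s _ => ⟨by linarith [(hΨ s).1], by linarith [(hΨ s).2]⟩)
    (fun s hs => (hhΨ s hs).trans (hψ t ht).symm)
  have hφΨ : φ (Ψ t, t) = φ (θ, t) := by
    simp only [φ, hhΨ t ht, ← hfΨ t, hψ t ht, θ]
  refine ((hasDerivWithinAt_comp_zero_of_isBigO (c := fun s => (Ψ s, s)) hφ hφΨ
    hbigO).add_const (z • c)).congr_of_mem (fun s hs => ?_) ht
  simp only [φ, Function.comp_apply, hhΨ s hs, ← hfΨ s, sub_add_cancel]

lemma apply_eq_of_apply_eq (hh : IsEmbeddedLoopFamily h T a b)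
    (hinward : ∀ θ, ∀ t ∈ Icc a b, (timeDeriv h (θ, t) / angularDeriv h (θ, t)).im ≤ 0)
    (hf : Differentiable ℝ f) (hfper : ∀ t, Function.Periodic (fun θ => f (θ, t)) T)
    (hhol : ∀ θ, ∀ t ∈ Icc a b, timeDeriv f (θ, t) =
      (timeDeriv h (θ, t) / angularDeriv h (θ, t)) • angularDeriv f (θ, t))
    {t t' θ θ' : ℝ} (ht : t ∈ Icc a b) (ht' : t' ∈ Icc a b) (heq : h (θ, t) = h (θ', t')) :
    f (θ, t) = f (θ', t') := by
  wlog htt' : t ≤ t' generalizing t t' θ θ'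
  · exact (this ht' ht heq.symm (le_of_not_ge htt')).symm
  have hvisit :=
    (hh.ordConnected_visitTimes hinward (h (θ, t))).out ⟨ht, θ, rfl⟩ ⟨ht', θ', heq.symm⟩
  have hψ : ∀ s, ∃ ψ, s ∈ Icc t t' → h (ψ, s) = h (θ, t) := fun s => by
    by_cases hs : s ∈ Icc t t'
    · exact (hvisit hs).2.imp fun ψ hψ _ => hψ
    · exact ⟨0, fun h => absurd h hs⟩
  choose ψ hψ using hψ
  have hderiv : ∀ s ∈ Icc t t', HasDerivWithinAt (fun s => f (ψ s, s)) 0 (Icc t t') s :=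
    fun s hs => hh.hasDerivWithinAt_zero_of_constant hf hfper hhol
      (fun s hs => (hvisit hs).1) hψ hs
  calc f (θ, t) = f (ψ t, t) :=
        hh.apply_eq_of_apply_eq_of_mem_Icc hfper ht (hψ t (left_mem_Icc.2 htt')).symm
    _ = f (ψ t', t') := by
        refine (constant_of_derivWithin_zero (fun s hs => (hderiv s hs).differentiableWithinAt)
          (fun s hs => ?_) t' (right_mem_Icc.2 htt')).symm
        exact (hderiv s (Ico_subset_Icc_self hs)).derivWithin
          (uniqueDiffOn_Icc (hs.1.trans_lt hs.2) s (Ico_subset_Icc_self hs))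
    _ = f (θ', t') := hh.apply_eq_of_apply_eq_of_mem_Icc hfper ht'
        ((hψ t' (right_mem_Icc.2 htt')).trans heq)

end IsEmbeddedLoopFamily

end Factorization

theorem XHolomorphic_functions_factor_through_framing_general {F : Type*} [NormedAddCommGroup F]
    [NormedSpace ℂ F] {h : ℝ × ℝ → ℂ} {f : ℝ × ℝ → F} {T a b : ℝ} {n : WithTop ℕ∞} (hn : n ≠ 0)
    (hh : IsEmbeddedLoopFamily h T a b)
    (hinward : ∀ θ, ∀ t ∈ Icc a b, (timeDeriv h (θ, t) / angularDeriv h (θ, t)).im ≤ 0)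
    (hf : ContDiff ℝ n f) (hfper : ∀ t, Function.Periodic (fun θ => f (θ, t)) T)
    (hhol : ∀ θ, ∀ t ∈ Icc a b, timeDeriv f (θ, t) =
      (timeDeriv h (θ, t) / angularDeriv h (θ, t)) • angularDeriv f (θ, t)) :
    ∃ g : ℂ → F, ContinuousOn g (h '' (univ ×ˢ Icc a b)) ∧
      (∀ θ, ∀ t ∈ Icc a b, f (θ, t) = g (h (θ, t))) ∧
      (∀ t ∈ Icc a b, ContDiff ℝ n fun θ => g (h (θ, t))) ∧
      ∀ g' : ℂ → F, (∀ θ, ∀ t ∈ Icc a b, f (θ, t) = g' (h (θ, t))) →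
        EqOn g' g (h '' (univ ×ˢ Icc a b)) := by
  have hfib : ∀ {θ t θ' t'}, t ∈ Icc a b → t' ∈ Icc a b → h (θ, t) = h (θ', t') →
      f (θ, t) = f (θ', t') :=
    hh.apply_eq_of_apply_eq hinward (hf.differentiable hn) hfper hhol
  obtain ⟨g, hg, hfg⟩ := exists_continuousOn_image_of_fiberwise_eq
    ((isCompact_Icc (a := 0) (b := T)).prod (isCompact_Icc (a := a) (b := b)))
    hh.contDiff.continuous.continuousOn hf.continuous.continuousOn
    fun p hp q hq => hfib hp.2 hq.2
  have hloop : ∀ θ t, ∃ θ' ∈ Icc 0 T, h (θ, t) = h (θ', t) := fun θ t =>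
    ((hh.periodic t).exists_mem_Ico₀ hh.period_pos θ).imp
      fun _ hθ' => ⟨Ico_subset_Icc_self hθ'.1, hθ'.2⟩
  have hgf : ∀ θ, ∀ t ∈ Icc a b, f (θ, t) = g (h (θ, t)) := fun θ t ht => by
    obtain ⟨θ', hθ', heq⟩ := hloop θ t
    rw [hfib ht ht heq, heq, hfg (θ', t) ⟨hθ', ht⟩]
  refine ⟨g, hg.mono ?_, hgf, fun t ht => ?_, fun g' hg'f => ?_⟩
  · rintro _ ⟨⟨θ, t⟩, ⟨-, ht⟩, rfl⟩
    obtain ⟨θ', hθ', heq⟩ := hloop θ t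
    exact ⟨(θ', t), ⟨hθ', ht⟩, heq.symm⟩
  · simp only [← hgf _ t ht]
    exact hf.comp (by fun_prop)
  · rintro _ ⟨⟨θ, t⟩, ⟨-, ht⟩, rfl⟩
    exact (hg'f θ t ht).symm.trans (hgf θ t ht)

theorem XHolomorphic_functions_factor_through_framing
    (h : ℝ × ℝ → ℂ)
    (hsm : ContDiff ℝ (⊤ : ℕ∞) h)
    (hper : ∀ θ t, h (θ + 2 * π, t) = h (θ, t))
    (hinj : ∀ t ∈ Icc (0:ℝ) 1, InjOn (fun θ => h (θ, t)) (Ico 0 (2 * π)))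
    (hderiv : ∀ θ : ℝ, ∀ t ∈ Icc (0:ℝ) 1, deriv (fun x => h (x, t)) θ ≠ 0)
    (hinward : ∀ θ : ℝ, ∀ t ∈ Icc (0:ℝ) 1,
      (deriv (fun s => h (θ, s)) t / deriv (fun x => h (x, t)) θ).im ≤ 0)
    (A : Set ℂ) (hA : A = h '' (univ ×ˢ Icc (0:ℝ) 1))
    (hfront : frontier A ⊆ (range fun θ => h (θ, 0)) ∪ (range fun θ => h (θ, 1)))
    (X : ℝ × ℝ → ℂ)
    (hX : ∀ θ t, X (θ, t) = -(deriv (fun s => h (θ, s)) t) / deriv (fun x => h (x, t)) θ)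
    (f : ℝ × ℝ → ℂ)
    (hf_per : ∀ θ t, f (θ + 2 * π, t) = f (θ, t))
    (hf_sm : ContDiff ℝ (⊤ : ℕ∞) f)
    (hf_holo : ∀ θ : ℝ, ∀ t ∈ Icc (0:ℝ) 1,
      deriv (fun s => f (θ, s)) t = -X (θ, t) * deriv (fun x => f (x, t)) θ) :
    ∃ g : ℂ → ℂ, ContinuousOn g A ∧
      (∀ θ : ℝ, ∀ t ∈ Icc (0:ℝ) 1, f (θ, t) = g (h (θ, t))) ∧
      ContDiff ℝ (⊤ : ℕ∞) (fun θ => g (h (θ, 0))) ∧ ContDiff ℝ (⊤ : ℕ∞) (fun θ => g (h (θ, 1))) ∧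
      ∀ g' : ℂ → ℂ, ContinuousOn g' A →
        (∀ θ : ℝ, ∀ t ∈ Icc (0:ℝ) 1, f (θ, t) = g' (h (θ, t))) →
        EqOn g' g A := by
  subst hA
  have hh : IsEmbeddedLoopFamily h (2 * π) 0 1 :=
    { period_pos := two_pi_pos
      contDiff := hsm.of_le (by exact_mod_cast le_top)
      periodic := fun t θ => hper θ t
      injOn := hinj
      angularDeriv_ne_zero := hderiv }
  have hhol : ∀ θ, ∀ t ∈ Icc (0 : ℝ) 1, timeDeriv f (θ, t) =
      (timeDeriv h (θ, t) / angularDeriv h (θ, t)) • angularDeriv f (θ, t) := fun θ t ht => by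
    rw [timeDeriv, hf_holo θ t ht, hX, neg_div, neg_neg, smul_eq_mul]
    rfl
  obtain ⟨g, hg, hgf, hgs, huniq⟩ := XHolomorphic_functions_factor_through_framing_general
    (by simp) hh hinward hf_sm (fun t θ => hf_per θ t) hhol
  exact ⟨g, hg, hgf, hgs 0 (by simp), hgs 1 (by simp), fun g' _ => huniq g'⟩
end

section
/- Let h and h̃ be framing data with images A = h(ℝ × [0,1]) and Ã = h̃(ℝ × [0,1]) and associated paths X and X̃ respectively, and assume the topological frontier of A is contained in h(ℝ × {0}) ∪ h(ℝ × {1}) and the topological frontier of Ã is contained in h̃(ℝ × {0}) ∪ h̃(ℝ × {1}). Then the following are equivalent: (1) there exists a homeomorphism ψ : A → Ã which is complex-differentiable at every point of the interior of A, whose inverse is complex-differentiable at every point of the interior of Ã, and which satisfies ψ(h(θ,t)) = h̃(θ,t) for all θ ∈ ℝ and t ∈ [0,1]; (2) X(θ,t) = X̃(θ,t) for all θ ∈ ℝ and t ∈ [0,1]. Moreover, the map ψ in (1) is unique if it exists. -/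
open Set Complex Real

/-- An isomorphism of framed annuli: `ψ : A → Ã` is a homeomorphism (with inverse `χ`),
holomorphic on the interior, with holomorphic inverse, intertwining the framings. -/
def IsFramedIso (h ht : ℝ × ℝ → ℂ) (A At : Set ℂ) (ψ χ : ℂ → ℂ) : Prop :=
  ContinuousOn ψ A ∧ ContinuousOn χ At ∧ Set.MapsTo ψ A At ∧ Set.MapsTo χ At A ∧
  (∀ z ∈ A, χ (ψ z) = z) ∧ (∀ z ∈ At, ψ (χ z) = z) ∧
  DifferentiableOn ℂ ψ (interior A) ∧ DifferentiableOn ℂ χ (interior At) ∧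
  ∀ θ : ℝ, ∀ t ∈ Set.Icc (0:ℝ) 1, ψ (h (θ, t)) = ht (θ, t)

/-! If `ψ ∘ h = ht` with `ψ` holomorphic, the chain rule makes `ht` solve the transport equation
`∂g/∂t + X ∂g/∂θ = 0` of `h`; on open sets where `X` is real, where `h` is not a local
diffeomorphism, both `h` and `ht` are constant along the characteristics `φ' = Re X` instead.
Conversely, suppose `g` solves that equation. Then the Cauchy integral of `g` along `h (·, t)`
around `p` does not depend on `t` as long as the curve misses `p`. Since `Im X ≥ 0`, a point hit at
time `a` lies on one side of the curve before and on the other side after, so that the winding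
number around it can only ever increase. Hence the times at which `p` is hit form an interval, along
which `g` is constant, and `g` descends to a continuous function `ψ` on the annulus. At a regular
value `p` the Cauchy integrals over the two boundary curves differ by `2πi ψ(p)`; regular values are
dense by Sard, so `ψ` agrees with this holomorphic function throughout the interior. -/

namespace FramedAnnulus

open Filter Topology

noncomputable section

section PartialDerivatives

variable {h : ℝ × ℝ → ℂ}

/-- The partial derivative `∂h/∂θ`, defined through `deriv` so that it agrees definitionally with
the derivatives in the statement of the theorem. -/
def dθ (h : ℝ × ℝ → ℂ) (z : ℝ × ℝ) : ℂ := deriv (fun x => h (x, z.2)) z.1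

/-- The partial derivative `∂h/∂t`; see `dθ`. -/
def dt (h : ℝ × ℝ → ℂ) (z : ℝ × ℝ) : ℂ := deriv (fun s => h (z.1, s)) z.2

theorem dθ_eq_fderiv {z : ℝ × ℝ} (hh : DifferentiableAt ℝ h z) : dθ h z = fderiv ℝ h z (1, 0) :=
  (hh.hasFDerivAt.comp_hasDerivAt z.1
    ((hasDerivAt_id z.1).prodMk (hasDerivAt_const z.1 z.2))).deriv

theorem dt_eq_fderiv {z : ℝ × ℝ} (hh : DifferentiableAt ℝ h z) : dt h z = fderiv ℝ h z (0, 1) :=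
  (hh.hasFDerivAt.comp_hasDerivAt z.2
    ((hasDerivAt_const z.2 z.1).prodMk (hasDerivAt_id z.2))).deriv

theorem fderiv_apply_eq {z : ℝ × ℝ} (hh : DifferentiableAt ℝ h z) (v : ℝ × ℝ) :
    fderiv ℝ h z v = v.1 * dθ h z + v.2 * dt h z := by
  have hv : v = v.1 • ((1 : ℝ), (0 : ℝ)) + v.2 • ((0 : ℝ), (1 : ℝ)) := by ext <;> simp
  conv_lhs => rw [hv]
  simp only [map_add, map_smul, dθ_eq_fderiv hh, dt_eq_fderiv hh, real_smul]

theorem hasDerivAt_comp_prodMk {f g : ℝ → ℝ} {f' g' s : ℝ} (hh : DifferentiableAt ℝ h (f s, g s))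
    (hf : HasDerivAt f f' s) (hg : HasDerivAt g g' s) :
    HasDerivAt (fun r => h (f r, g r)) (f' * dθ h (f s, g s) + g' * dt h (f s, g s)) s := by
  have hcomp := hh.hasFDerivAt.comp_hasDerivAt s (hf.prodMk hg)
  rwa [fderiv_apply_eq hh] at hcomp

theorem hasDerivAt_angle (hh : Differentiable ℝ h) (x t : ℝ) :
    HasDerivAt (fun r => h (r, t)) (dθ h (x, t)) x := by
  simpa using hasDerivAt_comp_prodMk (hh _) (hasDerivAt_id x) (hasDerivAt_const x t)

theorem hasDerivAt_time (hh : Differentiable ℝ h) (x t : ℝ) :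
    HasDerivAt (fun r => h (x, r)) (dt h (x, t)) t := by
  simpa using hasDerivAt_comp_prodMk (hh _) (hasDerivAt_const t x) (hasDerivAt_id t)

theorem contDiff_dθ {m n : WithTop ℕ∞} (hh : ContDiff ℝ n h) (hmn : m + 1 ≤ n) :
    ContDiff ℝ m (dθ h) := by
  have hd : Differentiable ℝ h := hh.differentiable (by rintro rfl; simp at hmn)
  rw [show dθ h = fun z => fderiv ℝ h z (1, 0) from funext fun z => dθ_eq_fderiv (hd z)]
  exact (hh.fderiv_right hmn).clm_apply contDiff_const

theorem contDiff_dt {m n : WithTop ℕ∞} (hh : ContDiff ℝ n h) (hmn : m + 1 ≤ n) :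
    ContDiff ℝ m (dt h) := by
  have hd : Differentiable ℝ h := hh.differentiable (by rintro rfl; simp at hmn)
  rw [show dt h = fun z => fderiv ℝ h z (0, 1) from funext fun z => dt_eq_fderiv (hd z)]
  exact (hh.fderiv_right hmn).clm_apply contDiff_const

theorem continuous_dθ (hh : ContDiff ℝ 1 h) : Continuous (dθ h) :=
  (contDiff_dθ (m := 0) hh (by simp)).continuous

theorem continuous_dt (hh : ContDiff ℝ 1 h) : Continuous (dt h) :=
  (contDiff_dt (m := 0) hh (by simp)).continuous

theorem dt_dθ_comm (hh : ContDiff ℝ 2 h) (z : ℝ × ℝ) : dt (dθ h) z = dθ (dt h) z := by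
  have hd : Differentiable ℝ h := hh.differentiable two_ne_zero
  have hθ : dθ h = fun z => fderiv ℝ h z (1, 0) := funext fun z => dθ_eq_fderiv (hd z)
  have ht : dt h = fun z => fderiv ℝ h z (0, 1) := funext fun z => dt_eq_fderiv (hd z)
  have hd' : Differentiable ℝ (fderiv ℝ h) :=
    (hh.fderiv_right (m := 1) one_add_one_eq_two.le).differentiable one_ne_zero
  have second (v w : ℝ × ℝ) : fderiv ℝ (fun y => fderiv ℝ h y v) z w
      = fderiv ℝ (fderiv ℝ h) z w v := by
    rw [fderiv_clm_apply (hd' z) (differentiableAt_const v)]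
    simp
  have hdθ := (contDiff_dθ hh one_add_one_eq_two.le).differentiable one_ne_zero z
  have hdt := (contDiff_dt hh one_add_one_eq_two.le).differentiable one_ne_zero z
  rw [dt_eq_fderiv hdθ, dθ_eq_fderiv hdt, hθ, ht, second, second]
  exact hh.contDiffAt.isSymmSndFDerivAt (by simp) _ _

end PartialDerivatives

section AngularlyPeriodic

variable {g h : ℝ × ℝ → ℂ}

/-- `h` is `2π`-periodic in its first variable. -/
def AngularlyPeriodic (h : ℝ × ℝ → ℂ) : Prop := ∀ θ t, h (θ + 2 * π, t) = h (θ, t)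

theorem AngularlyPeriodic.add_int_mul (hh : AngularlyPeriodic h) (x t : ℝ) (k : ℤ) :
    h (x + k * (2 * π), t) = h (x, t) :=
  Function.Periodic.int_mul (f := fun x => h (x, t)) (fun x => hh x t) k x

theorem AngularlyPeriodic.dθ (hh : AngularlyPeriodic h) : AngularlyPeriodic (dθ h) := fun x t => by
  unfold FramedAnnulus.dθ
  rw [← deriv_comp_add_const (f := fun x => h (x, t))]
  simp only [hh _ t]

theorem AngularlyPeriodic.dt (hh : AngularlyPeriodic h) : AngularlyPeriodic (dt h) := fun x t => by
  simp only [FramedAnnulus.dt, hh x]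

theorem exists_add_int_mul_two_pi_mem_Ico (x a : ℝ) :
    ∃ k : ℤ, x + k * (2 * π) ∈ Ico a (a + 2 * π) := by
  obtain ⟨k, hk, -⟩ := existsUnique_add_zsmul_mem_Ico two_pi_pos x a
  exact ⟨k, by simpa using hk⟩

theorem AngularlyPeriodic.exists_mem_Ico (hh : AngularlyPeriodic h) (a x t : ℝ) :
    ∃ y ∈ Ico a (a + 2 * π), h (y, t) = h (x, t) := by
  obtain ⟨k, hk⟩ := exists_add_int_mul_two_pi_mem_Ico x a
  exact ⟨_, hk, hh.add_int_mul x t k⟩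

end AngularlyPeriodic

section Framing

variable {g h ht : ℝ × ℝ → ℂ} {X : ℝ × ℝ → ℂ}

/-- The path associated with `h`, a time-dependent complex vector field in the angular variable. -/
def path (h : ℝ × ℝ → ℂ) (z : ℝ × ℝ) : ℂ := -(dt h z) / dθ h z

/-- `g` is transported by `X`: it solves `∂g/∂t + X ∂g/∂θ = 0` on the closed strip. -/
def Transported (X g : ℝ × ℝ → ℂ) : Prop :=
  ∀ θ, ∀ t ∈ Icc (0 : ℝ) 1, dt g (θ, t) = -(X (θ, t) * dθ g (θ, t))

/-- The annulus swept out by `h`, that is, the image `A` of the closed strip. -/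
def annulus (h : ℝ × ℝ → ℂ) : Set ℂ := h '' (univ ×ˢ Icc (0 : ℝ) 1)

/-- Framing data, of class `C²` rather than smooth. -/
structure IsFraming (h : ℝ × ℝ → ℂ) : Prop where
  contDiff : ContDiff ℝ 2 h
  periodic : AngularlyPeriodic h
  injOn : ∀ t ∈ Icc (0 : ℝ) 1, InjOn (fun θ => h (θ, t)) (Ico 0 (2 * π))
  dθ_ne_zero : ∀ θ, ∀ t ∈ Icc (0 : ℝ) 1, dθ h (θ, t) ≠ 0
  inward : ∀ θ, ∀ t ∈ Icc (0 : ℝ) 1, (dt h (θ, t) / dθ h (θ, t)).im ≤ 0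

theorem mem_annulus {p : ℂ} : p ∈ annulus h ↔ ∃ θ, ∃ t ∈ Icc (0 : ℝ) 1, h (θ, t) = p := by
  simp [annulus, and_assoc]

theorem apply_mem_annulus (h : ℝ × ℝ → ℂ) {z : ℝ × ℝ} (hz : z.2 ∈ Icc (0 : ℝ) 1) :
    h z ∈ annulus h :=
  mem_image_of_mem h ⟨mem_univ _, hz⟩

theorem AngularlyPeriodic.annulus_eq (hh : AngularlyPeriodic h) :
    annulus h = h '' (Icc 0 (2 * π) ×ˢ Icc 0 1) := by
  refine (image_subset_iff.2 fun z hz => ?_).antisymm (image_mono (prod_mono_left (subset_univ _)))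
  obtain ⟨y, hy, hyz⟩ := hh.exists_mem_Ico 0 z.1 z.2
  rw [zero_add] at hy
  exact ⟨(y, z.2), ⟨Ico_subset_Icc_self hy, hz.2⟩, hyz⟩

theorem transported_const (X : ℝ × ℝ → ℂ) (c : ℂ) : Transported X fun _ => c := fun θ t _ => by
  simp [dt, dθ]

theorem dθ_sub_const (g : ℝ × ℝ → ℂ) (c : ℂ) : dθ (fun z => g z - c) = dθ g :=
  funext fun _ => deriv_sub_const _

theorem Transported.sub_const (hg : Transported X g) (c : ℂ) :
    Transported X fun z => g z - c := fun θ t ht => by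
  rw [dθ_sub_const, ← hg θ t ht]
  exact deriv_sub_const _

namespace IsFraming

theorem differentiable (H : IsFraming h) : Differentiable ℝ h :=
  H.contDiff.differentiable two_ne_zero

theorem contDiff_one (H : IsFraming h) : ContDiff ℝ 1 h :=
  H.contDiff.of_le one_le_two

theorem continuous (H : IsFraming h) : Continuous h :=
  H.contDiff.continuous

theorem continuous_dθ (H : IsFraming h) : Continuous (dθ h) :=
  FramedAnnulus.continuous_dθ H.contDiff_one

theorem dt_eq (H : IsFraming h) (θ : ℝ) {t : ℝ} (ht : t ∈ Icc (0 : ℝ) 1) :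
    dt h (θ, t) = -(path h (θ, t) * dθ h (θ, t)) := by
  rw [path, div_mul_cancel₀ _ (H.dθ_ne_zero θ t ht), neg_neg]

theorem transported (H : IsFraming h) : Transported (path h) h := fun θ _ ht => H.dt_eq θ ht

theorem transported_iff (H : IsFraming h) :
    Transported X h ↔ ∀ θ, ∀ t ∈ Icc (0 : ℝ) 1, X (θ, t) = path h (θ, t) := by
  refine forall_congr' fun θ => forall₂_congr fun t ht => ?_
  rw [H.dt_eq θ ht, neg_inj, mul_left_inj' (H.dθ_ne_zero θ t ht), eq_comm]

theorem path_im_nonneg (H : IsFraming h) (θ : ℝ) {t : ℝ} (ht : t ∈ Icc (0 : ℝ) 1) :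
    0 ≤ (path h (θ, t)).im := by
  rw [path, neg_div, neg_im]
  exact neg_nonneg.2 (H.inward θ t ht)

theorem contDiffAt_path (H : IsFraming h) {z : ℝ × ℝ} (hz : z.2 ∈ Icc (0 : ℝ) 1) :
    ContDiffAt ℝ 1 (path h) z := by
  have hdt : ContDiff ℝ 1 (dt h) := contDiff_dt H.contDiff one_add_one_eq_two.le
  have hdθ : ContDiff ℝ 1 (dθ h) := contDiff_dθ H.contDiff one_add_one_eq_two.le
  exact hdt.neg.contDiffAt.mul (hdθ.contDiffAt.inv (H.dθ_ne_zero z.1 z.2 hz))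

theorem continuousAt_path (H : IsFraming h) {z : ℝ × ℝ} (hz : z.2 ∈ Icc (0 : ℝ) 1) :
    ContinuousAt (path h) z :=
  (H.contDiffAt_path hz).continuousAt

theorem exists_eq_add_int_mul (H : IsFraming h) {x y t : ℝ} (ht : t ∈ Icc (0 : ℝ) 1)
    (hxy : h (x, t) = h (y, t)) : ∃ k : ℤ, y = x + k * (2 * π) := by
  obtain ⟨k, hk⟩ := exists_add_int_mul_two_pi_mem_Ico x 0
  obtain ⟨l, hl⟩ := exists_add_int_mul_two_pi_mem_Ico y 0
  rw [zero_add] at hk hl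
  have hkl : x + k * (2 * π) = y + l * (2 * π) :=
    H.injOn t ht hk hl (by simp only [H.periodic.add_int_mul, hxy])
  exact ⟨k - l, by push_cast; linarith⟩

theorem eq_of_apply_eq_of_abs_sub_lt (H : IsFraming h) {x y t : ℝ} (ht : t ∈ Icc (0 : ℝ) 1)
    (hxy : h (x, t) = h (y, t)) (hlt : |x - y| < 2 * π) : x = y := by
  obtain ⟨k, hk⟩ := H.exists_eq_add_int_mul ht hxy
  have hk1 : |(k : ℝ)| < 1 := by
    rwa [hk, sub_add_cancel_left, abs_neg, abs_mul, abs_of_pos two_pi_pos,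
      mul_lt_iff_lt_one_left two_pi_pos] at hlt
  have hk0 : k = 0 := Int.abs_lt_one_iff.1 (by exact_mod_cast hk1)
  simpa [hk0] using hk.symm

end IsFraming

end Framing

section CauchyIntegral

variable {g h : ℝ × ℝ → ℂ} {p : ℂ} {s : ℝ}

/-- The integral `∮ g dh / (h - p)` along the curve `h (·, s)`. -/
def cauchyIntegral (g h : ℝ × ℝ → ℂ) (p : ℂ) (s : ℝ) : ℂ :=
  ∫ x in (0 : ℝ)..2 * π, g (x, s) * dθ h (x, s) / (h (x, s) - p)

/-- The integral `∮ dh / (h - p)` along the curve `h (·, s)`: it is `2πi` times the winding number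
of the curve around `p`. -/
def windingIntegral (h : ℝ × ℝ → ℂ) (p : ℂ) (s : ℝ) : ℂ :=
  cauchyIntegral (fun _ => 1) h p s

theorem windingIntegral_eq (h : ℝ × ℝ → ℂ) (p : ℂ) (s : ℝ) :
    windingIntegral h p s = ∫ x in (0 : ℝ)..2 * π, dθ h (x, s) / (h (x, s) - p) := by
  simp only [windingIntegral, cauchyIntegral, one_mul]

theorem cauchyIntegral_sub_const (hg : Continuous g) (hh : ContDiff ℝ 1 h)
    (hp : ∀ x, h (x, s) ≠ p) (c : ℂ) :
    cauchyIntegral (fun z => g z - c) h p s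
      = cauchyIntegral g h p s - c * windingIntegral h p s := by
  have hdθ := continuous_dθ hh
  have hcont := hh.continuous
  have hne (x : ℝ) : h (x, s) - p ≠ 0 := sub_ne_zero.2 (hp x)
  rw [windingIntegral_eq]
  unfold cauchyIntegral
  rw [← intervalIntegral.integral_const_mul, ← intervalIntegral.integral_sub]
  · exact intervalIntegral.integral_congr fun x _ => by ring
  · exact Continuous.intervalIntegrable (.div (by fun_prop) (by fun_prop) hne) _ _
  · exact Continuous.intervalIntegrable
      (continuous_const.mul (.div (by fun_prop) (by fun_prop) hne)) _ _

theorem differentiableOn_integral_div_sub {u v : ℝ → ℂ} (hu : Continuous u) (hv : Continuous v)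
    {U : Set ℂ} (hU : IsOpen U) (hne : ∀ q ∈ U, ∀ x, v x ≠ q) (a b : ℝ) :
    DifferentiableOn ℂ (fun q => ∫ x in a..b, u x / (v x - q)) U := by
  intro p hp
  let D (q : ℂ) : ℂ := ∫ x in a..b, u x / ((v x - q) * (v x - p))
  have hsub (q : ℂ) (hq : q ∈ U) (x : ℝ) : v x - q ≠ 0 := sub_ne_zero.2 (hne q hq x)
  have hD : ContinuousAt D p := by
    refine ContinuousOn.continuousAt ?_ (hU.mem_nhds hp)
    rw [continuousOn_iff_continuous_domRestrict]
    refine intervalIntegral.continuous_parametric_intervalIntegral_of_continuous' ?_ a b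
    exact .div (by fun_prop) (by fun_prop)
      fun q => mul_ne_zero (hsub q.1 q.1.2 q.2) (hsub p hp q.2)
  have hint (q : ℂ) (hq : q ∈ U) : IntervalIntegrable (fun x => u x / (v x - q))
      MeasureTheory.volume a b :=
    Continuous.intervalIntegrable (.div (by fun_prop) (by fun_prop) (hsub q hq)) _ _
  refine (hasDerivAt_iff_tendsto_slope.2 ((hD.tendsto.mono_left nhdsWithin_le_nhds).congr'
    ?_)).differentiableAt.differentiableWithinAt
  filter_upwards [nhdsWithin_le_nhds (hU.mem_nhds hp), self_mem_nhdsWithin] with q hq hqp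
  rw [slope_def_field, ← intervalIntegral.integral_sub (hint q hq) (hint p hp),
    ← intervalIntegral.integral_div]
  refine intervalIntegral.integral_congr fun x _ => ?_
  have hqp' : q - p ≠ 0 := sub_ne_zero.2 hqp
  have hvq := hsub q hq x
  have hvp := hsub p hp x
  field_simp
  ring

theorem differentiableOn_cauchyIntegral (hg : Continuous g) (hh : ContDiff ℝ 1 h) {U : Set ℂ}
    (hU : IsOpen U) (hne : ∀ q ∈ U, ∀ x, h (x, s) ≠ q) :
    DifferentiableOn ℂ (fun q => cauchyIntegral g h q s) U := by
  have hdθ := continuous_dθ hh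
  have hcont := hh.continuous
  exact differentiableOn_integral_div_sub (by fun_prop) (by fun_prop) hU hne 0 (2 * π)

theorem exp_integral_logDeriv {f f' : ℝ → ℂ} (hf : ∀ x, HasDerivAt f (f' x) x)
    (hf' : Continuous f') (hne : ∀ x, f x ≠ 0) (a b : ℝ) :
    cexp (∫ x in a..b, f' x / f x) = f b / f a := by
  have hcont : Continuous f := continuous_iff_continuousAt.2 fun x => (hf x).continuousAt
  have hquot : Continuous fun x => f' x / f x := hf'.div hcont hne
  let F (y : ℝ) : ℂ := ∫ x in a..y, f' x / f x
  have hconst (y : ℝ) : HasDerivAt (fun y => cexp (-F y) * f y) 0 y := by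
    have hF : HasDerivAt F (f' y / f y) y := intervalIntegral.integral_hasDerivAt_right
      (hquot.intervalIntegrable _ _) hquot.stronglyMeasurable.stronglyMeasurableAtFilter
      hquot.continuousAt
    have hzero : cexp (-F y) * -(f' y / f y) * f y + cexp (-F y) * f' y = 0 := by
      rw [mul_neg, neg_mul, mul_assoc, div_mul_cancel₀ _ (hne y), neg_add_cancel]
    exact hzero ▸ hF.neg.cexp.mul (hf y)
  have hab : cexp (-F b) * f b = cexp (-F a) * f a :=
    is_const_of_deriv_eq_zero (fun y => (hconst y).differentiableAt) (fun y => (hconst y).deriv) b a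
  have hFa : F a = 0 := intervalIntegral.integral_same
  rw [hFa, neg_zero, Complex.exp_zero, one_mul, Complex.exp_neg] at hab
  rw [eq_div_iff (hne a), ← hab]
  exact mul_inv_cancel_left₀ (Complex.exp_ne_zero _) _

theorem exists_int_windingIntegral_eq (hh : ContDiff ℝ 1 h) (hper : AngularlyPeriodic h)
    (hp : ∀ x, h (x, s) ≠ p) : ∃ n : ℤ, windingIntegral h p s = n * (2 * π * I) := by
  have hdθ := continuous_dθ hh
  have hperiod : h (2 * π, s) = h (0, s) := by simpa using hper 0 s
  rw [← Complex.exp_eq_one_iff, windingIntegral_eq, exp_integral_logDeriv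
    (fun x => (hasDerivAt_angle (hh.differentiable one_ne_zero) x s).sub_const p)
    (by fun_prop) (fun x => sub_ne_zero.2 (hp x)), hperiod]
  exact div_self (sub_ne_zero.2 (hp 0))

theorem windingIntegral_eq_of_isPreconnected {Y : Type*} [TopologicalSpace Y] {S : Set Y}
    (hS : IsPreconnected S) (hh : ContDiff ℝ 1 h) (hper : AngularlyPeriodic h) {p : Y → ℂ}
    {s : Y → ℝ} (hp : ContinuousOn p S) (hs : ContinuousOn s S)
    (hne : ∀ y ∈ S, ∀ x, h (x, s y) ≠ p y) {y y' : Y} (hy : y ∈ S) (hy' : y' ∈ S) :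
    windingIntegral h (p y) (s y) = windingIntegral h (p y') (s y') := by
  have hdθ := continuous_dθ hh
  have hcont := hh.continuous
  have hW : ContinuousOn (fun y => windingIntegral h (p y) (s y) / (2 * π * I)) S := by
    simp only [windingIntegral_eq]
    rw [continuousOn_iff_continuous_domRestrict] at hp hs ⊢
    refine Continuous.div_const
      (intervalIntegral.continuous_parametric_intervalIntegral_of_continuous' ?_ _ _) _
    have hs' : Continuous fun q : S × ℝ => (q.2, s q.1) :=
      continuous_snd.prodMk (hs.comp continuous_fst)
    exact (hdθ.comp hs').div ((hcont.comp hs').sub (hp.comp continuous_fst))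
      fun q => sub_ne_zero.2 (hne q.1 q.1.2 q.2)
  have hint : MapsTo (fun y => windingIntegral h (p y) (s y) / (2 * π * I)) S
      (range ((↑) : ℤ → ℂ)) := fun y hy => by
    obtain ⟨n, hn⟩ := exists_int_windingIntegral_eq hh hper (hne y hy)
    exact ⟨n, by simp only [hn, mul_div_cancel_right₀ _ two_pi_I_ne_zero]⟩
  exact (div_left_inj' two_pi_I_ne_zero).1 <| hS.constant_of_mapsTo
    Complex.isClosedEmbedding_intCast.isEmbedding.isDiscrete_range hW hint hy hy'

end CauchyIntegral

section TimeInvariance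

variable {g h F G X : ℝ × ℝ → ℂ} {p : ℂ} {s₁ s₂ : ℝ}

theorem integral_eq_of_dθ_eq_dt (hF : ∀ x, ∀ s ∈ uIcc s₁ s₂, DifferentiableAt ℝ F (x, s))
    (hG : ∀ x, ∀ s ∈ uIcc s₁ s₂, DifferentiableAt ℝ G (x, s)) (hper : AngularlyPeriodic F)
    (heq : ∀ x, ∀ s ∈ uIcc s₁ s₂, dθ F (x, s) = dt G (x, s)) :
    ∫ x in (0 : ℝ)..2 * π, G (x, s₁) = ∫ x in (0 : ℝ)..2 * π, G (x, s₂) := by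
  let R : Set (ℝ × ℝ) := uIcc 0 (2 * π) ×ˢ uIcc s₁ s₂
  have interior_subset : Ioo (min 0 (2 * π)) (max 0 (2 * π)) ×ˢ Ioo (min s₁ s₂) (max s₁ s₂) ⊆ R :=
    prod_mono Ioo_subset_Icc_self Ioo_subset_Icc_self
  have hdiv : ∀ x, ∀ s ∈ uIcc s₁ s₂, fderiv ℝ (-F) (x, s) (1, 0) + fderiv ℝ G (x, s) (0, 1) = 0 :=
    fun x s hs => by
      rw [fderiv_neg, neg_apply, ← dθ_eq_fderiv (hF x s hs),
        ← dt_eq_fderiv (hG x s hs), heq x s hs, neg_add_cancel]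
  have green := MeasureTheory.integral2_divergence_prod_of_hasFDerivAt (-F) G (fderiv ℝ (-F))
    (fderiv ℝ G) 0 s₁ (2 * π) s₂
    (fun z hz => (hF z.1 z.2 hz.2).neg.continuousAt.continuousWithinAt)
    (fun z hz => (hG z.1 z.2 hz.2).continuousAt.continuousWithinAt)
    (fun z hz => (hF z.1 z.2 (interior_subset hz).2).neg.hasFDerivAt)
    (fun z hz => (hG z.1 z.2 (interior_subset hz).2).hasFDerivAt)
    ((MeasureTheory.integrableOn_congr_fun (fun z hz => hdiv z.1 z.2 hz.2)
      (measurableSet_uIcc.prod measurableSet_uIcc)).2 MeasureTheory.integrableOn_zero)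
  have hzero (x : ℝ) :
      ∫ s in s₁..s₂, fderiv ℝ (-F) (x, s) (1, 0) + fderiv ℝ G (x, s) (0, 1) = 0 := by
    rw [intervalIntegral.integral_congr (hdiv x), intervalIntegral.integral_zero]
  have hsides (s : ℝ) : F (2 * π, s) = F (0, s) := by simpa using hper 0 s
  simp only [hzero, intervalIntegral.integral_zero, Pi.neg_apply, hsides] at green
  linear_combination green

/-- The form `g dh / (h - p)` is closed when `g` and `h` are transported by the same `X`. -/
theorem cauchyIntegral_eq_of_forall_ne (hg : ContDiff ℝ 1 g) (hh : ContDiff ℝ 2 h)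
    (gper : AngularlyPeriodic g) (hper : AngularlyPeriodic h) (gtr : Transported X g)
    (htr : Transported X h) (hs₁ : s₁ ∈ Icc (0 : ℝ) 1) (hs₂ : s₂ ∈ Icc (0 : ℝ) 1)
    (hne : ∀ s ∈ uIcc s₁ s₂, ∀ x, h (x, s) ≠ p) :
    cauchyIntegral g h p s₁ = cauchyIntegral g h p s₂ := by
  have gd : Differentiable ℝ g := hg.differentiable one_ne_zero
  have hd : Differentiable ℝ h := hh.differentiable two_ne_zero
  have hdθ : Differentiable ℝ (dθ h) :=
    (contDiff_dθ hh one_add_one_eq_two.le).differentiable one_ne_zero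
  have hdt : Differentiable ℝ (dt h) :=
    (contDiff_dt hh one_add_one_eq_two.le).differentiable one_ne_zero
  have hsub (x s : ℝ) (hs : s ∈ uIcc s₁ s₂) : h (x, s) - p ≠ 0 := sub_ne_zero.2 (hne s hs x)
  refine integral_eq_of_dθ_eq_dt (F := fun z => g z * dt h z / (h z - p))
    (G := fun z => g z * dθ h z / (h z - p))
    (fun x s hs => ((gd _).mul (hdt _)).mul (((hd _).sub_const p).inv (hsub x s hs)))
    (fun x s hs => ((gd _).mul (hdθ _)).mul (((hd _).sub_const p).inv (hsub x s hs)))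
    (fun x s => by simp only [gper x s, hper x s, hper.dt x s]) fun x s hs => ?_
  have hF : dθ (fun z => g z * dt h z / (h z - p)) (x, s) = _ :=
    (((hasDerivAt_angle gd x s).mul (hasDerivAt_angle hdt x s)).div
      ((hasDerivAt_angle hd x s).sub_const p) (hsub x s hs)).deriv
  have hG : dt (fun z => g z * dθ h z / (h z - p)) (x, s) = _ :=
    (((hasDerivAt_time gd x s).mul (hasDerivAt_time hdθ x s)).div
      ((hasDerivAt_time hd x s).sub_const p) (hsub x s hs)).deriv
  have hs' : s ∈ Icc (0 : ℝ) 1 := uIcc_subset_Icc hs₁ hs₂ hs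
  have hne' := hsub x s hs
  rw [hF, hG, dt_dθ_comm hh, gtr x s hs', htr x s hs']
  simp only [Pi.mul_apply, htr x s hs']
  field_simp

end TimeInvariance

section Jump

theorem tendsto_log_comp_nhdsLT {f : ℝ → ℂ} {c : ℝ} {f' : ℂ} (hf : HasDerivAt f f' c)
    (hre : (f c).re < 0) (him : (f c).im = 0) (hf' : f'.im < 0) :
    Tendsto (fun x => Complex.log (f x)) (𝓝[<] c) (𝓝 (Real.log ‖f c‖ + π * I)) := by
  have hder : HasDerivAt (fun x => (f x).im) f'.im c :=
    imCLM.hasFDerivAt.comp_hasDerivAt c hf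
  refine (tendsto_log_nhdsWithin_im_nonneg_of_re_neg_of_im_zero hre him).comp
    (tendsto_nhdsWithin_iff.2 ⟨hf.continuousAt.mono_left nhdsWithin_le_nhds, ?_⟩)
  filter_upwards [nhdsWithin_le_nhds (eventually_nhdsWithin_sign_eq_of_deriv_neg
    (hder.deriv.trans_lt hf') him), self_mem_nhdsWithin] with x hx hxc
  rw [sign_pos (sub_pos.2 hxc)] at hx
  exact (sign_eq_one_iff.1 hx).le

theorem tendsto_log_comp_nhdsGT {f : ℝ → ℂ} {c : ℝ} {f' : ℂ} (hf : HasDerivAt f f' c)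
    (hre : (f c).re < 0) (him : (f c).im = 0) (hf' : f'.im < 0) :
    Tendsto (fun x => Complex.log (f x)) (𝓝[>] c) (𝓝 (Real.log ‖f c‖ - π * I)) := by
  have hder : HasDerivAt (fun x => (f x).im) f'.im c :=
    imCLM.hasFDerivAt.comp_hasDerivAt c hf
  refine (tendsto_log_nhdsWithin_im_neg_of_re_neg_of_im_zero hre him).comp
    (tendsto_nhdsWithin_iff.2 ⟨hf.continuousAt.mono_left nhdsWithin_le_nhds, ?_⟩)
  filter_upwards [nhdsWithin_le_nhds (eventually_nhdsWithin_sign_eq_of_deriv_neg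
    (hder.deriv.trans_lt hf') him), self_mem_nhdsWithin] with x hx hxc
  rw [sign_neg (sub_neg.2 hxc)] at hx
  exact sign_eq_neg_one_iff.1 hx

/-- The principal logarithm is a primitive on either side of `c`, and its two limits at `c` differ
by the jump of the logarithm across the negative axis. -/
theorem integral_logDeriv_eq_two_pi_I {f f' : ℝ → ℂ} {a b c : ℝ} (hc : c ∈ Ioo a b)
    (hf : ∀ x, HasDerivAt f (f' x) x) (hf' : Continuous f')
    (hslit : ∀ x ∈ Icc a b, x ≠ c → f x ∈ slitPlane) (hre : (f c).re < 0) (him : (f c).im = 0)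
    (hcross : (f' c).im < 0) (hclosed : f a = f b) :
    ∫ x in a..b, f' x / f x = 2 * π * I := by
  have hcont : Continuous f := continuous_iff_continuousAt.2 fun x => (hf x).continuousAt
  have hne : ∀ x ∈ Icc a b, f x ≠ 0 := fun x hx => by
    rcases eq_or_ne x c with rfl | hxc
    · exact fun h => hre.ne (by rw [h, zero_re])
    · exact slitPlane_ne_zero (hslit x hx hxc)
  have hint (u v : ℝ) (hu : u ∈ Icc a b) (hv : v ∈ Icc a b) :
      IntervalIntegrable (fun x => f' x / f x) MeasureTheory.volume u v :=
    (hf'.continuousOn.div hcont.continuousOn fun x hx =>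
      hne x (uIcc_subset_Icc hu hv hx)).intervalIntegrable
  have hlog (x : ℝ) (hx : f x ∈ slitPlane) :
      HasDerivAt (fun x => Complex.log (f x)) (f' x / f x) x :=
    (hf x).clog_real hx
  have ha : a ∈ Icc a b := left_mem_Icc.2 (hc.1.trans hc.2).le
  have hb : b ∈ Icc a b := right_mem_Icc.2 (hc.1.trans hc.2).le
  have left : ∫ x in a..c, f' x / f x = Real.log ‖f c‖ + π * I - Complex.log (f a) :=
    intervalIntegral.integral_eq_sub_of_hasDerivAt_of_tendsto hc.1
      (fun x hx => hlog x (hslit x ⟨hx.1.le, (hx.2.trans hc.2).le⟩ hx.2.ne))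
      (hint a c ha (Ioo_subset_Icc_self hc))
      ((hlog a (hslit a ha hc.1.ne)).continuousAt.mono_left nhdsWithin_le_nhds)
      (tendsto_log_comp_nhdsLT (hf c) hre him hcross)
  have right : ∫ x in c..b, f' x / f x = Complex.log (f b) - (Real.log ‖f c‖ - π * I) :=
    intervalIntegral.integral_eq_sub_of_hasDerivAt_of_tendsto hc.2
      (fun x hx => hlog x (hslit x ⟨(hc.1.trans hx.1).le, hx.2.le⟩ hx.1.ne'))
      (hint c b (Ioo_subset_Icc_self hc) hb)
      (tendsto_log_comp_nhdsGT (hf c) hre him hcross)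
      ((hlog b (hslit b hb hc.2.ne')).continuousAt.mono_left nhdsWithin_le_nhds)
  rw [← intervalIntegral.integral_add_adjacent_intervals (hint a c ha (Ioo_subset_Icc_self hc))
    (hint c b (Ioo_subset_Icc_self hc) hb), left, right, hclosed]
  ring

end Jump

section Collar

variable {h : ℝ × ℝ → ℂ}

/-- The point near `h z` with coordinate `w` in the moving frame of the curve: the direction of `w`
is measured from the left normal `i ∂h/∂θ`. -/
def offset (h : ℝ × ℝ → ℂ) (z : ℝ × ℝ) (w : ℂ) : ℂ := h z + I * w * dθ h z

theorem eventually_norm_sub_sub_le (hh : ContDiff ℝ 1 h) {θ₀ s₀ : ℝ} (hne : dθ h (θ₀, s₀) ≠ 0) :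
    ∀ᶠ q : ℝ × ℝ × ℝ in 𝓝 (θ₀, θ₀, s₀),
      ‖h (q.2.1, q.2.2) - h (q.1, q.2.2) - (q.2.1 - q.1 : ℝ) * dθ h (q.1, q.2.2)‖
        ≤ |q.2.1 - q.1| / 2 * ‖dθ h (q.1, q.2.2)‖ := by
  set D := dθ h (θ₀, s₀) with hD
  have hD8 : 0 < ‖D‖ / 8 := by positivity
  have hdθ : ∀ᶠ q : ℝ × ℝ × ℝ in 𝓝 (θ₀, θ₀, s₀), ‖dθ h (q.1, q.2.2) - D‖ < ‖D‖ / 8 := by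
    have hcont : Continuous fun q : ℝ × ℝ × ℝ => ‖dθ h (q.1, q.2.2) - D‖ :=
      (((continuous_dθ hh).comp (by fun_prop)).sub continuous_const).norm
    refine hcont.continuousAt.eventually_lt_const ?_
    simpa [hD] using hD8
  have hpair : Tendsto (fun q : ℝ × ℝ × ℝ => ((q.2.1, q.2.2), (q.1, q.2.2))) (𝓝 (θ₀, θ₀, s₀))
      (𝓝 ((θ₀, s₀), (θ₀, s₀))) := by
    exact Continuous.tendsto (by fun_prop) (θ₀, θ₀, s₀)
  filter_upwards [hdθ, hpair.eventually ((hh.contDiffAt.hasStrictFDerivAt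
    one_ne_zero).isLittleO.def hD8)] with ⟨θ, x, s⟩ hclose hstrict
  simp only [Prod.mk_sub_mk, sub_self, fderiv_apply_eq (hh.differentiable one_ne_zero _),
    ofReal_zero, zero_mul, add_zero, Prod.norm_mk, norm_zero, Real.norm_eq_abs] at hstrict hclose ⊢
  rw [max_eq_left (abs_nonneg (x - θ)), ← hD] at hstrict
  have htri : ‖h (x, s) - h (θ, s) - (x - θ : ℝ) * dθ h (θ, s)‖
      ≤ ‖h (x, s) - h (θ, s) - (x - θ : ℝ) * D‖ + |x - θ| * ‖dθ h (θ, s) - D‖ := by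
    rw [← Real.norm_eq_abs, ← norm_real (x - θ), ← norm_mul]
    refine (congrArg norm ?_).trans_le (norm_sub_le _ _)
    ring
  have hD' : ‖D‖ ≤ ‖dθ h (θ, s)‖ + ‖dθ h (θ, s) - D‖ := norm_le_norm_add_norm_sub _ _
  nlinarith [abs_nonneg (x - θ)]

theorem eventually_apply_ne_offset (H : IsFraming h) (θ₀ x₀ : ℝ) {s₀ : ℝ}
    (hs₀ : s₀ ∈ Icc (0 : ℝ) 1) :
    ∀ᶠ q : ℂ × ℝ × ℝ × ℝ in 𝓝 (0, θ₀, x₀, s₀),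
      |q.1.im| < |q.1.re| → h (q.2.2.1, q.2.2.2) ≠ offset h (q.2.1, q.2.2.2) q.1 := by
  have hcont := H.continuous
  by_cases heq : h (x₀, s₀) = h (θ₀, s₀)
  · obtain ⟨k, hk⟩ := H.exists_eq_add_int_mul hs₀ heq
    have hshift : Tendsto (fun q : ℂ × ℝ × ℝ × ℝ => (q.2.1, q.2.2.1 + k * (2 * π), q.2.2.2))
        (𝓝 (0, θ₀, x₀, s₀)) (𝓝 (θ₀, θ₀, s₀)) := by
      nth_rw 3 [hk]
      exact Continuous.tendsto (by fun_prop) (0, θ₀, x₀, s₀)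
    filter_upwards [hshift.eventually (eventually_norm_sub_sub_le H.contDiff_one
      (H.dθ_ne_zero θ₀ s₀ hs₀)), (H.continuous_dθ.comp (by fun_prop : Continuous
      fun q : ℂ × ℝ × ℝ × ℝ => (q.2.1, q.2.2.2))).continuousAt.eventually_ne
      (H.dθ_ne_zero θ₀ s₀ hs₀)] with ⟨w, θ, x, s⟩ hnorm hne hw hoff
    simp only [H.periodic.add_int_mul, Function.comp_apply] at hnorm hne hoff
    set r := x + k * (2 * π) - θ
    rw [hoff, offset, add_sub_cancel_left, ← sub_mul, norm_mul] at hnorm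
    have hr : ‖I * w - r‖ ≤ |r| / 2 := le_of_mul_le_mul_right hnorm (norm_pos_iff.2 hne)
    have him : |w.re| ≤ |r| / 2 := by simpa using (abs_im_le_norm _).trans hr
    have hre : |w.im + r| ≤ |r| / 2 := by
      rw [← abs_neg, neg_add']
      simpa using (abs_re_le_norm _).trans hr
    have htri : |r| ≤ |w.im + r| + |w.im| := by simpa using abs_sub (w.im + r) w.im
    linarith
  · have hdiff : Continuous fun q : ℂ × ℝ × ℝ × ℝ =>
        h (q.2.2.1, q.2.2.2) - offset h (q.2.1, q.2.2.2) q.1 := by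
      have hdθ := H.continuous_dθ
      unfold offset
      fun_prop
    have hne : h (x₀, s₀) - offset h (θ₀, s₀) 0 ≠ 0 := by simpa [offset, sub_eq_zero] using heq
    filter_upwards [hdiff.continuousAt.eventually_ne hne] with q hq _ using sub_ne_zero.1 hq

theorem exists_pos_forall_apply_ne_offset (H : IsFraming h) :
    ∃ ε > 0, ∀ θ x : ℝ, ∀ s ∈ Icc (0 : ℝ) 1, ∀ w : ℂ, ‖w‖ < ε → |w.im| < |w.re| →
      h (x, s) ≠ offset h (θ, s) w := by
  have hK : IsCompact (Icc 0 (2 * π) ×ˢ Icc 0 (2 * π) ×ˢ Icc (0 : ℝ) 1) :=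
    isCompact_Icc.prod (isCompact_Icc.prod isCompact_Icc)
  obtain ⟨ε, hε, hball⟩ := Metric.eventually_nhds_iff.1 <|
    hK.eventually_forall_of_forall_eventually (x₀ := (0 : ℂ))
      (P := fun w q => |w.im| < |w.re| → h (q.2.1, q.2.2) ≠ offset h (q.1, q.2.2) w)
      fun q hq => eventually_apply_ne_offset H q.1 q.2.1 hq.2.2
  refine ⟨ε, hε, fun θ x s hs w hw hcone => ?_⟩
  obtain ⟨k, hk⟩ := exists_add_int_mul_two_pi_mem_Ico θ 0
  obtain ⟨l, hl⟩ := exists_add_int_mul_two_pi_mem_Ico x 0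
  rw [zero_add] at hk hl
  simpa only [offset, H.periodic.add_int_mul, H.periodic.dθ.add_int_mul] using
    hball (by simpa using hw) (_, _, s) ⟨Ico_subset_Icc_self hk, Ico_subset_Icc_self hl, hs⟩ hcone

end Collar

section Sides

variable {h : ℝ × ℝ → ℂ} {ε : ℝ} {R : ℂ}

/-- The cones of size `ε` about the normals of the curves `h (·, s)` avoid these curves, which wind
once more around the points of the left cones than around those of the right cones; `R` is the
winding integral on the right. -/
structure IsCollar (h : ℝ × ℝ → ℂ) (ε : ℝ) (R : ℂ) : Prop where
  pos : 0 < ε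
  apply_ne : ∀ θ x : ℝ, ∀ s ∈ Icc (0 : ℝ) 1, ∀ w : ℂ, ‖w‖ < ε → |w.im| < |w.re| →
    h (x, s) ≠ offset h (θ, s) w
  left : ∀ θ, ∀ s ∈ Icc (0 : ℝ) 1, ∀ w : ℂ, ‖w‖ < ε → |w.im| < w.re →
    windingIntegral h (offset h (θ, s) w) s = R + 2 * π * I
  right : ∀ θ, ∀ s ∈ Icc (0 : ℝ) 1, ∀ w : ℂ, ‖w‖ < ε → |w.im| < -w.re →
    windingIntegral h (offset h (θ, s) w) s = R

theorem convex_abs_im_lt_mul_re (σ : ℝ) : Convex ℝ {w : ℂ | |w.im| < σ * w.re} := by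
  have hinter : {w : ℂ | |w.im| < σ * w.re}
      = {w | 0 < (σ • reCLM - imCLM) w} ∩ {w | 0 < (σ • reCLM + imCLM) w} := by
    ext w
    simp only [mem_ofPred_eq, mem_inter_iff, abs_lt, sub_apply, add_apply, smul_apply, reCLM_apply,
      imCLM_apply, smul_eq_mul, sub_pos, neg_lt_iff_pos_add']
    exact and_comm
  rw [hinter]
  exact (convex_halfSpace_gt (σ • reCLM - imCLM).isLinear 0).inter
    (convex_halfSpace_gt (σ • reCLM + imCLM).isLinear 0)

theorem windingIntegral_offset_eq (H : IsFraming h)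
    (hne : ∀ θ x : ℝ, ∀ s ∈ Icc (0 : ℝ) 1, ∀ w : ℂ, ‖w‖ < ε → |w.im| < |w.re| →
      h (x, s) ≠ offset h (θ, s) w) {σ : ℝ} (hσ : |σ| = 1) {θ θ' s s' : ℝ} {w w' : ℂ}
    (hs : s ∈ Icc (0 : ℝ) 1) (hs' : s' ∈ Icc (0 : ℝ) 1) (hw : ‖w‖ < ε ∧ |w.im| < σ * w.re)
    (hw' : ‖w'‖ < ε ∧ |w'.im| < σ * w'.re) :
    windingIntegral h (offset h (θ, s) w) s = windingIntegral h (offset h (θ', s') w') s' := by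
  have hcont := H.continuous
  have hdθ := H.continuous_dθ
  let C : Set ℂ := Metric.ball 0 ε ∩ {w | |w.im| < σ * w.re}
  have hC : Convex ℝ C := (convex_ball 0 ε).inter (convex_abs_im_lt_mul_re σ)
  refine windingIntegral_eq_of_isPreconnected
    (S := (univ : Set ℝ) ×ˢ Icc (0 : ℝ) 1 ×ˢ C) (p := fun q => offset h (q.1, q.2.1) q.2.2)
    (s := fun q => q.2.1) (y := (θ, s, w)) (y' := (θ', s', w'))
    (isPreconnected_univ.prod (isPreconnected_Icc.prod hC.isPreconnected)) H.contDiff_one H.periodic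
    (Continuous.continuousOn (by unfold offset; fun_prop)) (by fun_prop) ?_
    ⟨trivial, hs, mem_ball_zero_iff.2 hw.1, hw.2⟩ ⟨trivial, hs', mem_ball_zero_iff.2 hw'.1, hw'.2⟩
  rintro ⟨θ, s, w⟩ ⟨-, hs, hw, hcone⟩ x
  refine hne θ x s hs w (mem_ball_zero_iff.1 hw) (lt_of_lt_of_le hcone ?_)
  simpa [abs_mul, hσ] using le_abs_self (σ * w.re)

theorem exists_eq_offset_of_notMem_slitPlane {z : ℝ × ℝ} {p : ℂ} {δ : ℝ} (hδ : 0 < δ)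
    (hp : p ≠ offset h z (-δ : ℝ))
    (hslit : (p - offset h z δ) / (p - offset h z (-δ : ℝ)) ∉ slitPlane) :
    ∃ r ∈ Icc (-δ) δ, p = offset h z r := by
  set ζ := (p - offset h z δ) / (p - offset h z (-δ : ℝ)) with hζ
  obtain ⟨hre, him⟩ : ζ.re ≤ 0 ∧ ζ.im = 0 := by simpa [mem_slitPlane_iff] using hslit
  have hreal : ζ = (ζ.re : ℂ) := Complex.ext rfl (by simpa using him)
  have hpos : 0 < 1 - ζ.re := by linarith
  have hposC : (1 - ζ.re : ℂ) ≠ 0 := by exact_mod_cast hpos.ne'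
  refine ⟨δ * (1 + ζ.re) / (1 - ζ.re), ⟨?_, ?_⟩, ?_⟩
  · rw [le_div_iff₀ hpos]
    nlinarith
  · rw [div_le_iff₀ hpos]
    nlinarith
  · rw [hreal, eq_div_iff (sub_ne_zero.2 hp)] at hζ
    simp only [offset] at hζ ⊢
    push_cast at hζ ⊢
    field_simp
    linear_combination -hζ

theorem windingIntegral_sub_windingIntegral (hh : ContDiff ℝ 1 h) {p q : ℂ} {s : ℝ}
    (hp : ∀ x, h (x, s) ≠ p) (hq : ∀ x, h (x, s) ≠ q) :
    windingIntegral h p s - windingIntegral h q s =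
      ∫ x in (0 : ℝ)..2 * π, (dθ h (x, s) * (h (x, s) - q) - (h (x, s) - p) * dθ h (x, s)) /
        (h (x, s) - q) ^ 2 / ((h (x, s) - p) / (h (x, s) - q)) := by
  have hdθ := continuous_dθ hh
  have hcont := hh.continuous
  have hint {r : ℂ} (hr : ∀ x, h (x, s) ≠ r) : IntervalIntegrable
      (fun x => dθ h (x, s) / (h (x, s) - r)) MeasureTheory.volume 0 (2 * π) :=
    Continuous.intervalIntegrable
      (.div (by fun_prop) (by fun_prop) fun x => sub_ne_zero.2 (hr x)) _ _
  rw [windingIntegral_eq, windingIntegral_eq, ← intervalIntegral.integral_sub (hint hp) (hint hq)]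
  refine intervalIntegral.integral_congr fun x _ => ?_
  have hxp := sub_ne_zero.2 (hp x)
  have hxq := sub_ne_zero.2 (hq x)
  field_simp

/-- The Möbius image `(h - p) / (h - q)` of the curve crosses the negative axis exactly once, namely
where the curve crosses the segment from `q` to `p`. -/
theorem windingIntegral_offset_sub_eq_two_pi_I (hh : ContDiff ℝ 1 h) (hper : AngularlyPeriodic h)
    {c s δ : ℝ} (hc : c ∈ Ioo 0 (2 * π)) (hδ : 0 < δ) (hdθ : dθ h (c, s) ≠ 0)
    (hne : ∀ x, ∀ r ∈ Icc (-δ) δ, r ≠ 0 → h (x, s) ≠ offset h (c, s) r)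
    (hsimple : ∀ x ∈ Icc 0 (2 * π), h (x, s) = h (c, s) → x = c) :
    windingIntegral h (offset h (c, s) δ) s - windingIntegral h (offset h (c, s) (-δ : ℝ)) s
      = 2 * π * I := by
  set p := offset h (c, s) δ with hp
  set q := offset h (c, s) (-δ : ℝ) with hq
  have hcont := hh.continuous
  have hcont' := continuous_dθ hh
  have hhp (x : ℝ) : h (x, s) - p ≠ 0 := sub_ne_zero.2 (hne x δ ⟨by linarith, le_rfl⟩ hδ.ne')
  have hhq (x : ℝ) : h (x, s) - q ≠ 0 :=
    sub_ne_zero.2 (hne x (-δ) ⟨le_rfl, by linarith⟩ (neg_ne_zero.2 hδ.ne'))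
  have hδC : (δ : ℂ) ≠ 0 := ofReal_ne_zero.2 hδ.ne'
  have hcp : h (c, s) - p = -(I * δ * dθ h (c, s)) := by rw [hp, offset]; ring
  have hcq : h (c, s) - q = I * δ * dθ h (c, s) := by rw [hq, offset]; push_cast; ring
  have hfc : (h (c, s) - p) / (h (c, s) - q) = -1 := by
    rw [hcp, hcq, neg_div, div_self (by simp [hdθ, hδC])]
  have hfc' : (dθ h (c, s) * (h (c, s) - q) - (h (c, s) - p) * dθ h (c, s)) / (h (c, s) - q) ^ 2
      = (-2 / δ : ℝ) * I := by
    rw [hcp, hcq]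
    push_cast
    field_simp
    rw [I_sq]
    ring
  have hjump := integral_logDeriv_eq_two_pi_I (f := fun x => (h (x, s) - p) / (h (x, s) - q)) hc
    (fun x => ((hasDerivAt_angle (hh.differentiable one_ne_zero) x s).sub_const p).div
      ((hasDerivAt_angle (hh.differentiable one_ne_zero) x s).sub_const q) (hhq x))
    (.div (by fun_prop) (by fun_prop) fun x => pow_ne_zero 2 (hhq x))
    (fun x hx hxc => by
      by_contra hslit
      obtain ⟨r, hr, hxr⟩ := exists_eq_offset_of_notMem_slitPlane hδ (sub_ne_zero.1 (hhq x)) hslit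
      rcases eq_or_ne r 0 with rfl | hr0
      · exact hxc (hsimple x hx (hxr.trans (by simp [offset])))
      · exact hne x r hr hr0 hxr)
    (by simp [hfc]) (by simp [hfc]) (by simpa [hfc'] using div_neg_of_neg_of_pos (by norm_num) hδ)
    (by simp only [show h (2 * π, s) = h (0, s) by simpa using hper 0 s])
  rw [windingIntegral_sub_windingIntegral hh (fun x => sub_ne_zero.1 (hhp x))
    fun x => sub_ne_zero.1 (hhq x), ← hjump]

theorem exists_isCollar (H : IsFraming h) : ∃ ε R, IsCollar h ε R := by
  obtain ⟨ε, hε, hne⟩ := exists_pos_forall_apply_ne_offset H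
  have h0 : (0 : ℝ) ∈ Icc (0 : ℝ) 1 := left_mem_Icc.2 zero_le_one
  let δ : ℝ := ε / 2
  have hδ : 0 < δ := half_pos hε
  have hδε : δ < ε := half_lt_self hε
  have hleft : ‖(δ : ℂ)‖ < ε ∧ |(δ : ℂ).im| < 1 * (δ : ℂ).re := by
    simpa [abs_of_pos hδ] using ⟨hδε, hδ⟩
  have hright : ‖((-δ : ℝ) : ℂ)‖ < ε ∧ |((-δ : ℝ) : ℂ).im| < -1 * ((-δ : ℝ) : ℂ).re := by
    simpa [abs_of_pos hδ] using ⟨hδε, hδ⟩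
  have hjump := windingIntegral_offset_sub_eq_two_pi_I H.contDiff_one H.periodic (c := π) (s := 0)
    ⟨pi_pos, by linarith [pi_pos]⟩ hδ (H.dθ_ne_zero _ 0 h0)
    (fun x r hr hr0 => hne π x 0 h0 r (by simpa using (abs_le.2 hr).trans_lt hδε) (by simpa))
    fun x hx hxπ => H.eq_of_apply_eq_of_abs_sub_lt h0 hxπ
      (abs_lt.2 ⟨by linarith [hx.1, pi_pos], by linarith [hx.2, pi_pos]⟩)
  refine ⟨ε, windingIntegral h (offset h (π, 0) (-δ : ℝ)) 0, hε, hne, fun θ s hs w hw hcone => ?_,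
    fun θ s hs w hw hcone => ?_⟩
  · rw [← hjump, add_sub_cancel]
    exact windingIntegral_offset_eq H hne abs_one hs h0 ⟨hw, by rwa [one_mul]⟩ hleft
  · exact windingIntegral_offset_eq H hne (by simp) hs h0 ⟨hw, by rwa [neg_one_mul]⟩ hright

end Sides

section Characteristics

variable {g h : ℝ × ℝ → ℂ} {φ : ℝ → ℝ} {a s α ε : ℝ}

/-- Picard–Lindelöf, applied to the autonomous system `(θ, t)' = (v (θ, t), 1)`. -/
theorem exists_eventually_hasDerivAt {v : ℝ × ℝ → ℝ} (hv : ContDiffAt ℝ 1 v (α, a)) :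
    ∃ φ : ℝ → ℝ, φ a = α ∧ ∀ᶠ s in 𝓝 a, HasDerivAt φ (v (φ s, s)) s := by
  obtain ⟨f, hfa, ε, hε, hf⟩ := (hv.prodMk (contDiffAt_const (c := (1 : ℝ)))
    ).exists_forall_mem_closedBall_exists_eq_forall_mem_Ioo_hasDerivAt₀ a
  have ha : a ∈ Ioo (a - ε) (a + ε) := ⟨by linarith, by linarith⟩
  have hfst (s : ℝ) (hs : s ∈ Ioo (a - ε) (a + ε)) : HasDerivAt (fun r => (f r).1) (v (f s)) s :=
    (hasFDerivAt_fst (p := f s)).comp_hasDerivAt s (hf s hs)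
  have hsnd (s : ℝ) (hs : s ∈ Ioo (a - ε) (a + ε)) : HasDerivAt (fun r => (f r).2) 1 s :=
    (hasFDerivAt_snd (p := f s)).comp_hasDerivAt s (hf s hs)
  have hclock : EqOn (fun r => (f r).2) id (Ioo (a - ε) (a + ε)) :=
    isOpen_Ioo.eqOn_of_deriv_eq isPreconnected_Ioo
      (fun r hr => (hsnd r hr).differentiableAt.differentiableWithinAt) differentiableOn_id
      (fun r hr => by rw [(hsnd r hr).deriv, deriv_id]) ha (by simp [hfa])
  refine ⟨fun r => (f r).1, by simp [hfa], ?_⟩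
  filter_upwards [isOpen_Ioo.mem_nhds ha] with s hs
  rw [show ((f s).1, s) = f s from Prod.ext rfl (hclock hs).symm]
  exact hfst s hs

theorem eventually_forall_mem_uIcc {P : ℝ → Prop} (hP : ∀ᶠ r in 𝓝 a, P r) :
    ∀ᶠ s in 𝓝 a, ∀ r ∈ uIcc a s, P r :=
  (tendsto_const_nhds.uIcc tendsto_id).eventually (eventually_smallSets_forall.2 hP)

theorem norm_integral_mul_sub_le {f : ℝ → ℝ} {m : ℝ → ℂ} {m₀ : ℂ} {c : ℝ}
    (hf : ContinuousOn f (uIcc a s)) (hf0 : ∀ r ∈ uIcc a s, 0 ≤ f r)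
    (hm : ContinuousOn m (uIcc a s)) (hmc : ∀ r ∈ uIcc a s, ‖m r - m₀‖ ≤ c) :
    ‖(∫ r in a..s, f r * m r) - (∫ r in a..s, f r : ℝ) * m₀‖ ≤ |∫ r in a..s, f r| * c := by
  have hfC : ContinuousOn (fun r => (f r : ℂ)) (uIcc a s) := continuous_ofReal.comp_continuousOn hf
  have hfm : IntervalIntegrable (fun r => f r * m r) MeasureTheory.volume a s :=
    (hfC.mul hm).intervalIntegrable
  have hfm₀ : IntervalIntegrable (fun r => f r * m₀) MeasureTheory.volume a s :=
    (hfC.mul continuousOn_const).intervalIntegrable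
  have hsub : (∫ r in a..s, f r * m r) - (∫ r in a..s, f r : ℝ) * m₀
      = ∫ r in a..s, f r * (m r - m₀) := by
    rw [← intervalIntegral.integral_ofReal, ← intervalIntegral.integral_mul_const,
      ← intervalIntegral.integral_sub hfm hfm₀]
    simp only [mul_sub]
  have hc : 0 ≤ c := (norm_nonneg _).trans (hmc a left_mem_uIcc)
  rw [hsub, ← abs_of_nonneg hc, ← abs_mul, ← intervalIntegral.integral_mul_const]
  refine intervalIntegral.norm_integral_le_abs_of_norm_le ?_
    (hf.mul continuousOn_const).intervalIntegrable
  filter_upwards [MeasureTheory.ae_restrict_mem measurableSet_uIoc] with r hr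
  have hr' := uIoc_subset_uIcc hr
  rw [norm_mul, norm_real, Real.norm_of_nonneg (hf0 r hr')]
  exact mul_le_mul_of_nonneg_left (hmc r hr') (hf0 r hr')

/-- `φ` is a characteristic of the transport equation of `path h` over the times `T ⊆ [0, 1]`: an
integral curve of the real part of the path. -/
structure IsCharacteristicOn (h : ℝ × ℝ → ℂ) (φ : ℝ → ℝ) (T : Set ℝ) : Prop where
  subset : T ⊆ Icc 0 1
  hasDerivAt : ∀ s ∈ T, HasDerivAt φ (path h (φ s, s)).re s

/-- The accumulated imaginary part of the path along `φ`: to first order, the distance travelled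
by the curves `h (·, s)` along their right normal. -/
def flux (h : ℝ × ℝ → ℂ) (φ : ℝ → ℝ) (a s : ℝ) : ℝ := ∫ r in a..s, (path h (φ r, r)).im

theorem exists_eventually_isCharacteristicOn (H : IsFraming h) (α : ℝ) (ha : a ∈ Icc (0 : ℝ) 1) :
    ∃ φ : ℝ → ℝ, φ a = α ∧ ∀ᶠ s in 𝓝[Icc 0 1] a, IsCharacteristicOn h φ (uIcc a s) := by
  obtain ⟨φ, hφa, hφ⟩ := exists_eventually_hasDerivAt
    (reCLM.contDiff.contDiffAt.comp (α, a) (H.contDiffAt_path (z := (α, a)) ha))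
  refine ⟨φ, hφa, ?_⟩
  filter_upwards [self_mem_nhdsWithin, nhdsWithin_le_nhds (eventually_forall_mem_uIcc hφ)]
    with s hs hder using ⟨uIcc_subset_Icc ha hs, hder⟩

namespace IsCharacteristicOn

variable {T : Set ℝ}

theorem continuousOn (hφ : IsCharacteristicOn h φ T) : ContinuousOn (fun r => (φ r, r)) T :=
  ContinuousOn.prodMk (fun r hr => (hφ.hasDerivAt r hr).continuousAt.continuousWithinAt)
    continuousOn_id

theorem continuousOn_path_im (hφ : IsCharacteristicOn h φ T) (H : IsFraming h) :
    ContinuousOn (fun r => (path h (φ r, r)).im) T :=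
  continuous_im.comp_continuousOn fun r hr =>
    (H.continuousAt_path (z := (φ r, r)) (hφ.subset hr)).comp_continuousWithinAt
      (f := fun r => (φ r, r)) (hφ.continuousOn r hr)

theorem path_im_nonneg (hφ : IsCharacteristicOn h φ T) (H : IsFraming h) :
    ∀ r ∈ T, 0 ≤ (path h (φ r, r)).im :=
  fun _ hr => H.path_im_nonneg _ (hφ.subset hr)

theorem hasDerivAt_comp (hφ : IsCharacteristicOn h φ T) (hg : Differentiable ℝ g)
    (gtr : Transported (path h) g) (hs : s ∈ T) : HasDerivAt (fun r => g (φ r, r))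
      (-((path h (φ s, s)).im * (I * dθ g (φ s, s)))) s := by
  convert hasDerivAt_comp_prodMk (hg _) (hφ.hasDerivAt s hs) (hasDerivAt_id' s) using 1
  have hpath := re_add_im (path h (φ s, s))
  rw [gtr _ _ (hφ.subset hs)]
  push_cast
  linear_combination -(dθ g (φ s, s)) * hpath

theorem sub_eq_integral (hφ : IsCharacteristicOn h φ (uIcc a s)) (H : IsFraming h)
    (hg : ContDiff ℝ 1 g) (gtr : Transported (path h) g) :
    g (φ a, a) - g (φ s, s) = ∫ r in a..s, (path h (φ r, r)).im * (I * dθ g (φ r, r)) := by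
  have hint := intervalIntegral.integral_eq_sub_of_hasDerivAt
    (fun r hr => hφ.hasDerivAt_comp (hg.differentiable one_ne_zero) gtr hr)
    (((continuous_ofReal.comp_continuousOn (hφ.continuousOn_path_im H)).mul (continuousOn_const.mul
      ((continuous_dθ hg).comp_continuousOn hφ.continuousOn))).neg.intervalIntegrable)
  rw [intervalIntegral.integral_neg] at hint
  rw [← neg_sub, ← hint, neg_neg]

theorem flux_nonneg (hφ : IsCharacteristicOn h φ (uIcc a s)) (H : IsFraming h) (has : a ≤ s) :
    0 ≤ flux h φ a s :=
  intervalIntegral.integral_nonneg has fun r hr =>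
    hφ.path_im_nonneg H r (Icc_subset_uIcc hr)

theorem flux_nonpos (hφ : IsCharacteristicOn h φ (uIcc a s)) (H : IsFraming h) (hsa : s ≤ a) :
    flux h φ a s ≤ 0 := by
  rw [flux, intervalIntegral.integral_symm, neg_nonpos]
  exact intervalIntegral.integral_nonneg hsa fun r hr =>
    hφ.path_im_nonneg H r (Icc_subset_uIcc' hr)

theorem flux_ne_zero (hφ : IsCharacteristicOn h φ (uIcc a s)) (H : IsFraming h)
    (hpath : (path h (φ a, a)).im ≠ 0) (hsa : s ≠ a) : flux h φ a s ≠ 0 := by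
  have hcont := hφ.continuousOn_path_im H
  have hnonneg := hφ.path_im_nonneg H
  have hpos : 0 < (path h (φ a, a)).im := (hnonneg a left_mem_uIcc).lt_of_ne' hpath
  rcases hsa.lt_or_gt with hlt | hlt
  · rw [uIcc_of_ge hlt.le] at hcont hnonneg
    rw [flux, intervalIntegral.integral_symm, neg_ne_zero]
    exact (intervalIntegral.integral_pos hlt hcont (fun r hr => hnonneg r (Ioc_subset_Icc_self hr))
      ⟨a, right_mem_Icc.2 hlt.le, hpos⟩).ne'
  · rw [uIcc_of_le hlt.le] at hcont hnonneg
    exact (intervalIntegral.integral_pos hlt hcont (fun r hr => hnonneg r (Ioc_subset_Icc_self hr))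
      ⟨a, left_mem_Icc.2 hlt.le, hpos⟩).ne'

theorem norm_sub_sub_flux_mul_le (hφ : IsCharacteristicOn h φ (uIcc a s)) (H : IsFraming h)
    (hg : ContDiff ℝ 1 g) (gtr : Transported (path h) g) {m₀ : ℂ} {c : ℝ}
    (hc : ∀ r ∈ uIcc a s, ‖I * dθ g (φ r, r) - m₀‖ ≤ c) :
    ‖g (φ a, a) - g (φ s, s) - flux h φ a s * m₀‖ ≤ |flux h φ a s| * c := by
  rw [hφ.sub_eq_integral H hg gtr]
  exact norm_integral_mul_sub_le (hφ.continuousOn_path_im H) (hφ.path_im_nonneg H)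
    (continuousOn_const.mul ((continuous_dθ hg).comp_continuousOn hφ.continuousOn)) hc

theorem apply_eq_of_flux_eq_zero (hφ : IsCharacteristicOn h φ (uIcc a s)) (H : IsFraming h)
    (hg : ContDiff ℝ 1 g) (gtr : Transported (path h) g) (hflux : flux h φ a s = 0) :
    g (φ s, s) = g (φ a, a) := by
  obtain ⟨c, hc⟩ := isCompact_uIcc.exists_bound_of_continuousOn
    (continuousOn_const (c := I) |>.mul
      ((continuous_dθ hg).comp_continuousOn hφ.continuousOn))
  have hle := hφ.norm_sub_sub_flux_mul_le H hg gtr (m₀ := 0) (c := c) (by simpa using hc)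
  rw [hflux, ofReal_zero, zero_mul, abs_zero, zero_mul, sub_zero, norm_le_zero_iff] at hle
  exact (sub_eq_zero.1 hle).symm

end IsCharacteristicOn

theorem exists_eventually_eq_offset (H : IsFraming h) (α : ℝ) (ha : a ∈ Icc (0 : ℝ) 1)
    (hε : 0 < ε) : ∃ φ : ℝ → ℝ, φ a = α ∧ ∀ᶠ s in 𝓝[Icc 0 1] a,
      IsCharacteristicOn h φ (uIcc a s) ∧ ∃ w, h (α, a) = offset h (φ s, s) w ∧ ‖w‖ < ε ∧
        ‖w - flux h φ a s‖ ≤ |flux h φ a s| / 4 := by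
  obtain ⟨φ, rfl, hφ⟩ := exists_eventually_isCharacteristicOn H α ha
  refine ⟨φ, rfl, ?_⟩
  set D := dθ h (φ a, a)
  have hD : D ≠ 0 := H.dθ_ne_zero _ a ha
  have hcurve : ContinuousAt (fun r => (φ r, r)) a :=
    ((hφ.self_of_nhdsWithin ha).hasDerivAt a left_mem_uIcc).continuousAt.prodMk continuousAt_id
  have hdθ : ContinuousAt (fun r => dθ h (φ r, r)) a :=
    H.continuous_dθ.continuousAt.comp (f := fun r => (φ r, r)) hcurve
  have hclose : ∀ᶠ r in 𝓝 a, ‖dθ h (φ r, r) - D‖ < ‖D‖ / 10 :=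
    (hdθ.sub continuousAt_const).norm.eventually_lt_const (by simpa [D] using hD)
  have hsmall : ∀ᶠ s in 𝓝 a, ‖(h (φ a, a) - h (φ s, s)) / (I * dθ h (φ s, s))‖ < ε :=
    ((continuousAt_const.sub (H.continuous.continuousAt.comp (f := fun r => (φ r, r)) hcurve)).div
      (continuousAt_const.mul hdθ) (mul_ne_zero I_ne_zero hD)).norm.eventually_lt_const
      (by simpa using hε)
  filter_upwards [hφ, nhdsWithin_le_nhds (eventually_forall_mem_uIcc hclose),
    nhdsWithin_le_nhds hsmall] with s hφs hclose hsmall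
  have hne : I * dθ h (φ s, s) ≠ 0 :=
    mul_ne_zero I_ne_zero (H.dθ_ne_zero _ s (hφs.subset right_mem_uIcc))
  refine ⟨hφs, _, ?_, hsmall, ?_⟩
  · rw [offset, mul_right_comm, mul_div_cancel₀ _ hne, add_sub_cancel]
  have hle := hφs.norm_sub_sub_flux_mul_le H H.contDiff_one H.transported
    (m₀ := I * dθ h (φ s, s)) (c := ‖I * dθ h (φ s, s)‖ / 4) fun r hr => by
      have hs := hclose s right_mem_uIcc
      have htri : ‖dθ h (φ r, r) - dθ h (φ s, s)‖ ≤ ‖dθ h (φ r, r) - D‖ + ‖dθ h (φ s, s) - D‖ :=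
        (norm_sub_le_norm_sub_add_norm_sub _ D _).trans_eq (by rw [norm_sub_rev D])
      have hDs : ‖D‖ ≤ ‖dθ h (φ s, s)‖ + ‖dθ h (φ s, s) - D‖ := norm_le_norm_add_norm_sub _ _
      rw [← mul_sub, norm_mul, norm_mul, norm_I, one_mul, one_mul]
      linarith [hclose r hr, norm_nonneg D]
  rw [div_sub' hne, norm_div, div_le_iff₀ (norm_pos_iff.2 hne), mul_comm (I * _)]
  linarith

end Characteristics

section HitTimes

variable {g h : ℝ × ℝ → ℂ} {p : ℂ} {a α s ε : ℝ} {R : ℂ}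

theorem abs_im_lt_re_of_norm_sub_le {w : ℂ} {r : ℝ} (hr : 0 < r) (hw : ‖w - r‖ ≤ |r| / 4) :
    |w.im| < w.re := by
  have hre := (abs_re_le_norm (w - r)).trans hw
  have him := (abs_im_le_norm (w - r)).trans hw
  rw [sub_re, ofReal_re, abs_of_pos hr] at hre
  rw [sub_im, ofReal_im, sub_zero, abs_of_pos hr] at him
  linarith [(abs_le.1 hre).1]

theorem abs_im_lt_neg_re_of_norm_sub_le {w : ℂ} {r : ℝ} (hr : r < 0) (hw : ‖w - r‖ ≤ |r| / 4) :
    |w.im| < -w.re := by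
  have hneg := abs_im_lt_re_of_norm_sub_le (w := -w) (neg_pos.2 hr)
    (by rwa [ofReal_neg, neg_sub_neg, norm_sub_rev, abs_neg])
  rwa [neg_im, abs_neg] at hneg

theorem abs_im_lt_abs_re_of_norm_sub_le {w : ℂ} {r : ℝ} (hr : r ≠ 0) (hw : ‖w - r‖ ≤ |r| / 4) :
    |w.im| < |w.re| := by
  rcases hr.lt_or_gt with hr | hr
  · exact (abs_im_lt_neg_re_of_norm_sub_le hr hw).trans_le (neg_le_abs _)
  · exact (abs_im_lt_re_of_norm_sub_le hr hw).trans_le (le_abs_self _)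

/-- The times `s ∈ [0, 1]` at which the curve `h (·, s)` passes through `p`. -/
def hitTimes (h : ℝ × ℝ → ℂ) (p : ℂ) : Set ℝ := {s ∈ Icc 0 1 | ∃ x, h (x, s) = p}

theorem mem_hitTimes (ha : a ∈ Icc (0 : ℝ) 1) : a ∈ hitTimes h (h (α, a)) := ⟨ha, α, rfl⟩

theorem hitTimes_nonempty : (hitTimes h p).Nonempty ↔ p ∈ annulus h := by
  rw [mem_annulus]
  exact ⟨fun ⟨t, ht, θ, hp⟩ => ⟨θ, t, ht, hp⟩, fun ⟨θ, t, ht, hp⟩ => ⟨t, ht, θ, hp⟩⟩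

theorem isCompact_hitTimes (hh : Continuous h) (hper : AngularlyPeriodic h) (p : ℂ) :
    IsCompact (hitTimes h p) := by
  have himage : hitTimes h p = Prod.snd '' ((Icc 0 (2 * π) ×ˢ Icc 0 1) ∩ h ⁻¹' {p}) := by
    ext s
    constructor
    · rintro ⟨hs, x, hx⟩
      obtain ⟨y, hy, hyx⟩ := hper.exists_mem_Ico 0 x s
      rw [zero_add] at hy
      exact ⟨(y, s), ⟨⟨Ico_subset_Icc_self hy, hs⟩, hyx.trans hx⟩, rfl⟩
    · rintro ⟨⟨x, s⟩, ⟨⟨-, hs⟩, hx⟩, rfl⟩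
      exact ⟨hs, x, hx⟩
  rw [himage]
  exact ((isCompact_Icc.prod isCompact_Icc).inter_right
    (isClosed_singleton.preimage hh)).image continuous_snd

theorem cauchyIntegral_eq_of_disjoint (H : IsFraming h) (hg : ContDiff ℝ 1 g)
    (gper : AngularlyPeriodic g) (gtr : Transported (path h) g) {s₁ s₂ : ℝ}
    (hs₁ : s₁ ∈ Icc (0 : ℝ) 1) (hs₂ : s₂ ∈ Icc (0 : ℝ) 1)
    (hdisj : Disjoint (uIcc s₁ s₂) (hitTimes h p)) :
    cauchyIntegral g h p s₁ = cauchyIntegral g h p s₂ :=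
  cauchyIntegral_eq_of_forall_ne hg H.contDiff gper H.periodic gtr H.transported hs₁ hs₂
    fun _ hs x hx => hdisj.notMem_of_mem_left hs ⟨uIcc_subset_Icc hs₁ hs₂ hs, x, hx⟩

theorem windingIntegral_eq_of_disjoint (H : IsFraming h) {s₁ s₂ : ℝ} (hs₁ : s₁ ∈ Icc (0 : ℝ) 1)
    (hs₂ : s₂ ∈ Icc (0 : ℝ) 1) (hdisj : Disjoint (uIcc s₁ s₂) (hitTimes h p)) :
    windingIntegral h p s₁ = windingIntegral h p s₂ :=
  cauchyIntegral_eq_of_disjoint H contDiff_const (fun _ _ => rfl) (transported_const _ 1) hs₁ hs₂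
    hdisj

namespace IsCollar

theorem eventually_windingIntegral_eq (C : IsCollar h ε R) (H : IsFraming h) (α : ℝ)
    (ha : a ∈ Icc (0 : ℝ) 1) : ∀ᶠ s in 𝓝[Icc 0 1] a, s ∉ hitTimes h (h (α, a)) →
      (a < s → windingIntegral h (h (α, a)) s = R + 2 * π * I) ∧
      (s < a → windingIntegral h (h (α, a)) s = R) := by
  obtain ⟨φ, -, hφ⟩ := exists_eventually_eq_offset H α ha C.pos
  filter_upwards [self_mem_nhdsWithin, hφ] with s hs ⟨hφs, w, hw, hwε, hwF⟩ hmiss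
  have hflux : flux h φ a s ≠ 0 := fun h0 => hmiss <| by
    rw [h0, abs_zero, zero_div, ofReal_zero, sub_zero, norm_le_zero_iff] at hwF
    exact ⟨hs, φ s, by rw [hw, hwF, offset, mul_zero, zero_mul, add_zero]⟩
  rw [hw]
  exact ⟨fun has => C.left _ s hs w hwε
      (abs_im_lt_re_of_norm_sub_le ((hφs.flux_nonneg H has.le).lt_of_ne' hflux) hwF),
    fun hsa => C.right _ s hs w hwε
      (abs_im_lt_neg_re_of_norm_sub_le ((hφs.flux_nonpos H hsa.le).lt_of_ne hflux) hwF)⟩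

theorem windingIntegral_eq_of_lt (C : IsCollar h ε R) (H : IsFraming h) {b : ℝ}
    (hs : s ∈ Icc (0 : ℝ) 1) (hmiss : s ∉ hitTimes h p) (hb : b ∈ hitTimes h p) (hsb : s < b) :
    windingIntegral h p s = R := by
  obtain ⟨c, ⟨hc, hsc⟩, hleast⟩ := ((isCompact_hitTimes H.continuous H.periodic p).inter_right
    isClosed_Ici).exists_isLeast ⟨b, hb, hsb.le⟩
  have hlt : s < c := (mem_Ici.1 hsc).lt_of_ne fun h => hmiss (h ▸ hc)
  have hIco : Disjoint (Ico s c) (hitTimes h p) :=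
    disjoint_left.2 fun r hr hrp => (hleast ⟨hrp, hr.1⟩).not_gt hr.2
  have hsub : Ico s c ⊆ Icc 0 1 := fun r hr => ⟨hs.1.trans hr.1, hr.2.le.trans hc.1.2⟩
  obtain ⟨γ, rfl⟩ := hc.2
  have := right_nhdsWithin_Ico_neBot hlt
  obtain ⟨r, hr, hrw⟩ := (eventually_mem_nhdsWithin.and
    ((C.eventually_windingIntegral_eq H γ hc.1).filter_mono (nhdsWithin_mono c hsub))).exists
  rw [← (hrw (hIco.notMem_of_mem_left hr)).2 hr.2]
  exact windingIntegral_eq_of_disjoint H hs (hsub hr)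
    (hIco.mono_left (ordConnected_Ico.uIcc_subset (left_mem_Ico.2 hlt) hr))

theorem windingIntegral_eq_of_gt (C : IsCollar h ε R) (H : IsFraming h) {b : ℝ}
    (hs : s ∈ Icc (0 : ℝ) 1) (hmiss : s ∉ hitTimes h p) (hb : b ∈ hitTimes h p) (hbs : b < s) :
    windingIntegral h p s = R + 2 * π * I := by
  obtain ⟨c, ⟨hc, hcs⟩, hgreatest⟩ := ((isCompact_hitTimes H.continuous H.periodic p).inter_right
    isClosed_Iic).exists_isGreatest ⟨b, hb, hbs.le⟩
  have hlt : c < s := (mem_Iic.1 hcs).lt_of_ne fun h => hmiss (h ▸ hc)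
  have hIoc : Disjoint (Ioc c s) (hitTimes h p) :=
    disjoint_left.2 fun r hr hrp => (hgreatest ⟨hrp, hr.2⟩).not_gt hr.1
  have hsub : Ioc c s ⊆ Icc 0 1 := fun r hr => ⟨hc.1.1.trans hr.1.le, hr.2.trans hs.2⟩
  obtain ⟨γ, rfl⟩ := hc.2
  have := left_nhdsWithin_Ioc_neBot hlt
  obtain ⟨r, hr, hrw⟩ := (eventually_mem_nhdsWithin.and
    ((C.eventually_windingIntegral_eq H γ hc.1).filter_mono (nhdsWithin_mono c hsub))).exists
  rw [← (hrw (hIoc.notMem_of_mem_left hr)).1 hr.1]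
  exact windingIntegral_eq_of_disjoint H hs (hsub hr)
    (hIoc.mono_left (ordConnected_Ioc.uIcc_subset (right_mem_Ioc.2 hlt) hr))

theorem apply_zero_notMem_interior (C : IsCollar h ε R) (H : IsFraming h) (θ : ℝ) :
    h (θ, 0) ∉ interior (annulus h) := fun hmem => by
  have h0 : (0 : ℝ) ∈ Icc (0 : ℝ) 1 := left_mem_Icc.2 zero_le_one
  have hcont : Continuous fun r : ℝ => offset h (θ, 0) r := by unfold offset; fun_prop
  have hnear : ∀ᶠ r : ℝ in 𝓝[>] 0, offset h (θ, 0) r ∈ annulus h :=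
    nhdsWithin_le_nhds (hcont.continuousAt (mem_interior_iff_mem_nhds.1 (by simpa [offset])))
  obtain ⟨r, hr, hrε, hr0⟩ := (hnear.and (Ioo_mem_nhdsGT C.pos)).exists.imp
    fun r hr => (⟨hr.1, hr.2.2, hr.2.1⟩ : _ ∧ r < ε ∧ 0 < r)
  have hnorm : ‖(r : ℂ)‖ < ε := by rwa [norm_real, Real.norm_of_nonneg hr0.le]
  have hmiss : 0 ∉ hitTimes h (offset h (θ, 0) r) := fun ⟨_, x, hx⟩ =>
    C.apply_ne θ x 0 h0 r hnorm (by simpa using hr0.ne') hx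
  obtain ⟨b, hb⟩ := hitTimes_nonempty.2 hr
  have hb0 : 0 < b := hb.1.1.lt_of_ne fun h => hmiss (h ▸ hb)
  have hjump := (C.left θ 0 h0 r hnorm (by simpa using hr0)).symm.trans
    (C.windingIntegral_eq_of_lt H h0 hmiss hb hb0)
  simp [pi_ne_zero] at hjump

theorem apply_one_notMem_interior (C : IsCollar h ε R) (H : IsFraming h) (θ : ℝ) :
    h (θ, 1) ∉ interior (annulus h) := fun hmem => by
  have h1 : (1 : ℝ) ∈ Icc (0 : ℝ) 1 := right_mem_Icc.2 zero_le_one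
  have hcont : Continuous fun r : ℝ => offset h (θ, 1) r := by unfold offset; fun_prop
  have hnear : ∀ᶠ r : ℝ in 𝓝[<] 0, offset h (θ, 1) r ∈ annulus h :=
    nhdsWithin_le_nhds (hcont.continuousAt (mem_interior_iff_mem_nhds.1 (by simpa [offset])))
  obtain ⟨r, hr, hrε, hr0⟩ := (hnear.and (Ioo_mem_nhdsLT (neg_lt_zero.2 C.pos))).exists.imp
    fun r hr => (⟨hr.1, hr.2.1, hr.2.2⟩ : _ ∧ -ε < r ∧ r < 0)
  have hnorm : ‖(r : ℂ)‖ < ε := by rw [norm_real, Real.norm_of_nonpos hr0.le]; linarith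
  have hmiss : 1 ∉ hitTimes h (offset h (θ, 1) r) := fun ⟨_, x, hx⟩ =>
    C.apply_ne θ x 1 h1 r hnorm (by simpa using hr0.ne) hx
  obtain ⟨b, hb⟩ := hitTimes_nonempty.2 hr
  have hb1 : b < 1 := hb.1.2.lt_of_ne fun h => hmiss (h ▸ hb)
  have hjump := (C.right θ 1 h1 r hnorm (by simpa using hr0)).symm.trans
    (C.windingIntegral_eq_of_gt H h1 hmiss hb hb1)
  simp [pi_ne_zero] at hjump

end IsCollar

theorem IsFraming.ordConnected_hitTimes (H : IsFraming h) (p : ℂ) :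
    OrdConnected (hitTimes h p) := by
  obtain ⟨ε, R, C⟩ := exists_isCollar H
  refine ⟨fun a ha b hb s hs => by_contra fun hmiss => ?_⟩
  have hs01 : s ∈ Icc (0 : ℝ) 1 := ⟨ha.1.1.trans hs.1, hs.2.trans hb.1.2⟩
  have hjump := (C.windingIntegral_eq_of_gt H hs01 hmiss ha
      (hs.1.lt_of_ne fun h => hmiss (h ▸ ha))).symm.trans
    (C.windingIntegral_eq_of_lt H hs01 hmiss hb (hs.2.lt_of_ne fun h => hmiss (h ▸ hb)))
  simp [pi_ne_zero] at hjump

theorem IsFraming.apply_eq_of_apply_eq_same_time (H : IsFraming h) (gper : AngularlyPeriodic g)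
    {x y : ℝ} (hs : s ∈ Icc (0 : ℝ) 1) (hxy : h (x, s) = h (y, s)) : g (x, s) = g (y, s) := by
  obtain ⟨k, rfl⟩ := H.exists_eq_add_int_mul hs hxy
  exact (gper.add_int_mul x s k).symm

theorem IsFraming.eventually_apply_eq (H : IsFraming h) (hg : ContDiff ℝ 1 g)
    (gper : AngularlyPeriodic g) (gtr : Transported (path h) g) (α : ℝ) (ha : a ∈ Icc (0 : ℝ) 1) :
    ∀ᶠ s in 𝓝[Icc 0 1] a, ∀ x, h (x, s) = h (α, a) → g (x, s) = g (α, a) := by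
  obtain ⟨ε, R, C⟩ := exists_isCollar H
  obtain ⟨φ, rfl, hφ⟩ := exists_eventually_eq_offset H α ha C.pos
  filter_upwards [self_mem_nhdsWithin, hφ] with s hs ⟨hφs, w, hw, hwε, hwF⟩ x hx
  have hflux : flux h φ a s = 0 := by_contra fun hne => C.apply_ne _ x s hs w hwε
    (abs_im_lt_abs_re_of_norm_sub_le hne hwF) (hx.trans hw)
  rw [← hφs.apply_eq_of_flux_eq_zero H hg gtr hflux]
  exact H.apply_eq_of_apply_eq_same_time gper hs
    (hx.trans (hφs.apply_eq_of_flux_eq_zero H H.contDiff_one H.transported hflux).symm)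

theorem IsFraming.apply_eq_of_apply_eq (H : IsFraming h) (hg : ContDiff ℝ 1 g)
    (gper : AngularlyPeriodic g) (gtr : Transported (path h) g) {z z' : ℝ × ℝ}
    (hz : z.2 ∈ Icc (0 : ℝ) 1) (hz' : z'.2 ∈ Icc (0 : ℝ) 1) (heq : h z = h z') : g z = g z' := by
  choose! f hf using fun s (hs : s ∈ hitTimes h (h z)) => hs.2
  have hloc : ∀ a ∈ hitTimes h (h z), ∀ᶠ s in 𝓝[hitTimes h (h z)] a, g (f a, a) = g (f s, s) :=
    fun a ha => by
      filter_upwards [self_mem_nhdsWithin, nhdsWithin_mono a (sep_subset _ _)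
        (H.eventually_apply_eq hg gper gtr (f a) ha.1)] with s hs hgs
      exact (hgs (f s) ((hf s hs).trans (hf a ha).symm)).symm
  have hmem : z.2 ∈ hitTimes h (h z) := ⟨hz, z.1, rfl⟩
  have hmem' : z'.2 ∈ hitTimes h (h z) := ⟨hz', z'.1, heq.symm⟩
  calc g z = g (f z.2, z.2) := (H.apply_eq_of_apply_eq_same_time gper hz (hf _ hmem)).symm
    _ = g (f z'.2, z'.2) :=
      (H.ordConnected_hitTimes _).isPreconnected.induction₂ (fun a b => g (f a, a) = g (f b, b))
        hloc (fun _ _ _ _ _ _ => Eq.trans) (fun _ _ _ _ => Eq.symm) hmem hmem'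
    _ = g z' := H.apply_eq_of_apply_eq_same_time gper hz' ((hf _ hmem').trans heq)

end HitTimes

section CauchyFormula

variable {g h : ℝ × ℝ → ℂ} {p : ℂ} {a b θ : ℝ}

theorem exists_forall_norm_le_of_isBoundedUnder {Y E : Type*} [TopologicalSpace Y] [Norm E]
    {K : Set Y} (hK : IsCompact K) {f : Y → E}
    (hf : ∀ y ∈ K, IsBoundedUnder (· ≤ ·) (𝓝 y) fun x => ‖f x‖) : ∃ C, ∀ y ∈ K, ‖f y‖ ≤ C := by
  refine hK.induction_on (p := fun S => ∃ C, ∀ y ∈ S, ‖f y‖ ≤ C) ⟨0, by simp⟩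
    (fun _ _ hST ⟨C, hC⟩ => ⟨C, fun y hy => hC y (hST hy)⟩)
    (fun _ _ ⟨C, hC⟩ ⟨D, hD⟩ => ⟨max C D, ?_⟩) fun y hy => ?_
  · rintro y (hy | hy)
    exacts [(hC y hy).trans (le_max_left _ _), (hD y hy).trans (le_max_right _ _)]
  · obtain ⟨C, hC⟩ := (hf y hy).eventually_le
    exact ⟨_, nhdsWithin_le_nhds hC, C, fun _ => id⟩

theorem ker_fderiv_eq_bot (hh : DifferentiableAt ℝ h (θ, a)) (hdθ : dθ h (θ, a) ≠ 0)
    (hpath : (path h (θ, a)).im ≠ 0) : LinearMap.ker (fderiv ℝ h (θ, a)).toLinearMap = ⊥ := by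
  refine LinearMap.ker_eq_bot'.2 fun v hv => ?_
  replace hv : fderiv ℝ h (θ, a) v = 0 := hv
  have hcomb : (v.1 : ℂ) - v.2 * path h (θ, a) = 0 := by
    rw [fderiv_apply_eq hh] at hv
    rw [path]
    field_simp
    linear_combination hv
  have hv₂ : v.2 = 0 := by simpa [hpath] using congrArg im hcomb
  exact Prod.ext (by simpa [hv₂] using hcomb) hv₂

theorem isBigO_sub_sub {z : ℝ × ℝ} (hg : DifferentiableAt ℝ g z) (hh : DifferentiableAt ℝ h z)
    (hdθ : dθ h z ≠ 0) (hpath : (path h z).im ≠ 0) :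
    (fun y => g y - g z) =O[𝓝 z] fun y => h y - h z :=
  hg.hasFDerivAt.isBigO_sub.trans (hh.hasFDerivAt.isTheta_sub
    (LinearMap.isClosedEmbedding_of_injective
      (ker_fderiv_eq_bot hh hdθ hpath)).isInducing).symm.isBigO

theorem cauchyIntegral_eq_integral_sub_pi_add_pi (gper : AngularlyPeriodic g)
    (hper : AngularlyPeriodic h) (p : ℂ) (s θ : ℝ) :
    cauchyIntegral g h p s
      = ∫ x in θ - π..θ + π, g (x, s) * dθ h (x, s) / (h (x, s) - p) := by
  have hperiodic : Function.Periodic (fun x => g (x, s) * dθ h (x, s) / (h (x, s) - p)) (2 * π) :=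
    fun x => by simp only [gper x s, hper x s, hper.dθ x s]
  have hshift := hperiodic.intervalIntegral_add_eq 0 (θ - π)
  rwa [zero_add, show θ - π + 2 * π = θ + π by ring] at hshift

namespace IsFraming

theorem eventually_notMem_hitTimes (H : IsFraming h) (ha : a ∈ Icc (0 : ℝ) 1)
    (hpath : (path h (θ, a)).im ≠ 0) :
    ∀ᶠ s in 𝓝[Icc 0 1] a, s ≠ a → s ∉ hitTimes h (h (θ, a)) := by
  obtain ⟨ε, R, C⟩ := exists_isCollar H
  obtain ⟨φ, rfl, hφ⟩ := exists_eventually_eq_offset H θ ha C.pos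
  filter_upwards [hφ] with s ⟨hφs, w, hw, hwε, hwF⟩ hsa ⟨hs, x, hx⟩
  exact C.apply_ne _ x s hs w hwε
    (abs_im_lt_abs_re_of_norm_sub_le (hφs.flux_ne_zero H hpath hsa) hwF) (hx.trans hw)

theorem hitTimes_eq_singleton (H : IsFraming h) (ha : a ∈ Icc (0 : ℝ) 1)
    (hpath : (path h (θ, a)).im ≠ 0) : hitTimes h (h (θ, a)) = {a} := by
  refine Subsingleton.eq_singleton_of_mem (not_nontrivial_iff.1 fun hnt => ?_) (mem_hitTimes ha)
  have hacc := (H.ordConnected_hitTimes _).isPreconnected.preperfect_of_nontrivial hnt a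
    (mem_hitTimes ha)
  refine accPt_iff_frequently.1 hacc ?_
  filter_upwards [eventually_nhdsWithin_iff.1 (H.eventually_notMem_hitTimes ha hpath)]
    with s hs ⟨hsa, hhit⟩ using hs hhit.1 hsa hhit

/-- The difference quotient is bounded: near `(θ, a)` because `h` is an immersion there, elsewhere
because `h` omits the value `h (θ, a)`. -/
theorem exists_forall_norm_sub_mul_div_le (H : IsFraming h) (hg : ContDiff ℝ 1 g)
    (ha : a ∈ Icc (0 : ℝ) 1) (hpath : (path h (θ, a)).im ≠ 0) :
    ∃ C, ∀ z ∈ Icc (θ - π) (θ + π) ×ˢ Icc (0 : ℝ) 1,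
      ‖(g z - g (θ, a)) * dθ h z / (h z - h (θ, a))‖ ≤ C := by
  have hdθ := H.continuous_dθ
  have hcont := H.continuous
  have gcont := hg.continuous
  refine exists_forall_norm_le_of_isBoundedUnder (isCompact_Icc.prod isCompact_Icc) ?_
  rintro ⟨x, s⟩ ⟨hx, hs⟩
  by_cases heq : h (x, s) = h (θ, a)
  · have hsa : s = a := by
      have hhit : s ∈ hitTimes h (h (θ, a)) := ⟨hs, x, heq⟩
      rwa [H.hitTimes_eq_singleton ha hpath] at hhit
    have hxθ : x = θ := H.eq_of_apply_eq_of_abs_sub_lt ha (hsa ▸ heq)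
      (abs_lt.2 ⟨by linarith [hx.1, pi_pos], by linarith [hx.2, pi_pos]⟩)
    rw [hsa, hxθ]
    refine Asymptotics.div_isBoundedUnder_of_isBigO ?_
    simpa using (isBigO_sub_sub (hg.differentiable one_ne_zero _) (H.differentiable _)
      (H.dθ_ne_zero _ _ ha) hpath).mul (hdθ.continuousAt.isBigO_one ℂ)
  · have hquot : ContinuousAt (fun z => (g z - g (θ, a)) * dθ h z / (h z - h (θ, a))) (x, s) :=
      ContinuousAt.div (by fun_prop) (by fun_prop) (sub_ne_zero.2 heq)
    exact hquot.norm.isBoundedUnder_le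

theorem continuousWithinAt_cauchyIntegral (H : IsFraming h) (hg : ContDiff ℝ 1 g)
    (gper : AngularlyPeriodic g) (ha : a ∈ Icc (0 : ℝ) 1) (hpath : (path h (θ, a)).im ≠ 0) :
    ContinuousWithinAt (cauchyIntegral (fun z => g z - g (θ, a)) h (h (θ, a))) (Icc 0 1) a := by
  have hdθ := H.continuous_dθ
  have hcont := H.continuous
  have gcont := hg.continuous
  have hper : AngularlyPeriodic fun z => g z - g (θ, a) := fun x s => by simp only [gper x s]
  obtain ⟨C, hC⟩ := H.exists_forall_norm_sub_mul_div_le hg ha hpath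
  rw [funext fun s => cauchyIntegral_eq_integral_sub_pi_add_pi hper H.periodic (h (θ, a)) s θ]
  have hIoc : uIoc (θ - π) (θ + π) = Ioc (θ - π) (θ + π) := uIoc_of_le (by linarith [pi_pos])
  refine intervalIntegral.continuousWithinAt_of_dominated_interval (bound := fun _ => C)
    (.of_forall fun s => Measurable.aestronglyMeasurable ?_) ?_ intervalIntegrable_const ?_
  · exact Measurable.div (Continuous.measurable (by fun_prop)) (Continuous.measurable (by fun_prop))
  · filter_upwards [self_mem_nhdsWithin] with s hs
    filter_upwards with x hx
    exact hC (x, s) ⟨Ioc_subset_Icc_self (hIoc ▸ hx), hs⟩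
  · filter_upwards [MeasureTheory.Measure.ae_ne MeasureTheory.volume θ] with x hxθ hx
    rw [hIoc] at hx
    refine (ContinuousAt.div (by fun_prop) (by fun_prop) fun h0 => hxθ ?_).continuousWithinAt
    exact H.eq_of_apply_eq_of_abs_sub_lt ha (sub_eq_zero.1 h0)
      (abs_lt.2 ⟨by linarith [hx.1, pi_pos], by linarith [hx.2, pi_pos]⟩)

theorem cauchyIntegral_eq_of_continuousWithinAt (H : IsFraming h) (hg : ContDiff ℝ 1 g)
    (gper : AngularlyPeriodic g) (gtr : Transported (path h) g) (ha : a ∈ Icc (0 : ℝ) 1)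
    (hhit : hitTimes h p = {a}) (hcont : ContinuousWithinAt (cauchyIntegral g h p) (Icc 0 1) a)
    (hb : b ∈ Icc (0 : ℝ) 1) : cauchyIntegral g h p a = cauchyIntegral g h p b := by
  rcases eq_or_ne b a with rfl | hba
  · rfl
  have hmem : a ∈ closure (openSegment ℝ a b) :=
    closure_openSegment (𝕜 := ℝ) a b ▸ left_mem_segment ℝ a b
  have hsub : openSegment ℝ a b ⊆ Icc 0 1 :=
    (openSegment_subset_segment ℝ a b).trans ((convex_Icc 0 1).segment_subset ha hb)
  have hconst : MapsTo (cauchyIntegral g h p) (openSegment ℝ a b) {cauchyIntegral g h p b} :=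
    fun s hs => cauchyIntegral_eq_of_disjoint H hg gper gtr (hsub hs) hb <| by
      rw [hhit, disjoint_singleton_right]
      rcases hba.lt_or_gt with hlt | hlt
      · rw [openSegment_symm, openSegment_eq_Ioo hlt] at hs
        exact fun has => has.2.not_gt (max_lt hs.2 hlt)
      · rw [openSegment_eq_Ioo hlt] at hs
        exact fun has => has.1.not_gt (lt_min hs.1 hlt)
  simpa using (hcont.mono hsub).mem_closure hmem hconst

theorem two_pi_I_mul_apply_eq (H : IsFraming h) (hg : ContDiff ℝ 1 g) (gper : AngularlyPeriodic g)
    (gtr : Transported (path h) g) (ha : a ∈ Ioo (0 : ℝ) 1) (hpath : (path h (θ, a)).im ≠ 0) :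
    2 * π * I * g (θ, a) = cauchyIntegral g h (h (θ, a)) 1 - cauchyIntegral g h (h (θ, a)) 0 := by
  obtain ⟨ε, R, C⟩ := exists_isCollar H
  have ha' := Ioo_subset_Icc_self ha
  have h0 : (0 : ℝ) ∈ Icc (0 : ℝ) 1 := left_mem_Icc.2 zero_le_one
  have h1 : (1 : ℝ) ∈ Icc (0 : ℝ) 1 := right_mem_Icc.2 zero_le_one
  have hhit := H.hitTimes_eq_singleton ha' hpath
  have hmiss₀ : 0 ∉ hitTimes h (h (θ, a)) := hhit ▸ ha.1.ne
  have hmiss₁ : 1 ∉ hitTimes h (h (θ, a)) := hhit ▸ ha.2.ne'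
  have hinvariant {b : ℝ} (hb : b ∈ Icc (0 : ℝ) 1) :=
    H.cauchyIntegral_eq_of_continuousWithinAt (hg.sub contDiff_const)
      (fun x s => by simp only [gper x s]) (gtr.sub_const (g (θ, a))) ha' hhit
      (H.continuousWithinAt_cauchyIntegral hg gper ha' hpath) hb
  have heq := (hinvariant h1).symm.trans (hinvariant h0)
  rw [cauchyIntegral_sub_const hg.continuous H.contDiff_one fun x hx => hmiss₁ ⟨h1, x, hx⟩,
    cauchyIntegral_sub_const hg.continuous H.contDiff_one fun x hx => hmiss₀ ⟨h0, x, hx⟩,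
    C.windingIntegral_eq_of_gt H h1 hmiss₁ (mem_hitTimes ha') ha.2,
    C.windingIntegral_eq_of_lt H h0 hmiss₀ (mem_hitTimes ha') ha.1] at heq
  linear_combination -heq

end IsFraming

end CauchyFormula

section RegularValues

variable {h : ℝ × ℝ → ℂ}

/-- Every preimage of `p` in the closed strip is a point at which the path is not real. Where
`dθ h ≠ 0`, these are the points at which `h` is a local diffeomorphism. -/
def IsRegularValue (h : ℝ × ℝ → ℂ) (p : ℂ) : Prop :=
  ∀ θ, ∀ t ∈ Icc (0 : ℝ) 1, h (θ, t) = p → (path h (θ, t)).im ≠ 0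

theorem volume_image_eq_zero_of_exists_fderiv_eq_zero {S : Set (ℝ × ℝ)}
    (hh : ∀ z ∈ S, DifferentiableAt ℝ h z) (hker : ∀ z ∈ S, ∃ v ≠ 0, fderiv ℝ h z v = 0) :
    MeasureTheory.volume (h '' S) = 0 := by
  let e := equivRealProdCLM
  rw [show h '' S = (h ∘ e) '' (e ⁻¹' S) by
    rw [image_comp, image_preimage_eq _ e.surjective]]
  refine MeasureTheory.addHaar_image_eq_zero_of_det_fderivWithin_eq_zero _
    (f' := fun w => (fderiv ℝ h (e w)).comp (e : ℂ →L[ℝ] ℝ × ℝ))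
    (fun w hw => ((hh _ hw).hasFDerivAt.comp w e.hasFDerivAt).hasFDerivWithinAt) fun w hw => ?_
  obtain ⟨v, hv, hv0⟩ := hker _ hw
  refine LinearMap.det_eq_zero_iff_ker_ne_bot.2 fun hbot => hv ?_
  simpa using LinearMap.ker_eq_bot'.1 hbot (e.symm v) (by simpa using hv0)

namespace IsFraming

theorem dense_isRegularValue (H : IsFraming h) : Dense {p | IsRegularValue h p} := by
  refine MeasureTheory.Measure.dense_of_ae (μ := MeasureTheory.volume) ?_
  refine MeasureTheory.measure_mono_null (t := h '' {z | z.2 ∈ Icc (0 : ℝ) 1 ∧ (path h z).im = 0})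
    (fun p hp => ?_) (volume_image_eq_zero_of_exists_fderiv_eq_zero
      (fun z _ => H.differentiable z) fun z ⟨hz, hpath⟩ => ⟨((path h z).re, 1), by simp, ?_⟩)
  · simp only [IsRegularValue, mem_compl_iff, mem_ofPred_eq, not_forall, not_not] at hp
    obtain ⟨θ, t, ht, hp, hpath⟩ := hp
    exact ⟨(θ, t), ⟨ht, hpath⟩, hp⟩
  · have hreal : ((path h z).re : ℂ) = path h z := conj_eq_iff_re.1 (conj_eq_iff_im.2 hpath)
    rw [fderiv_apply_eq (H.differentiable z), hreal, H.dt_eq z.1 hz]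
    push_cast
    ring

theorem apply_mem_interior (H : IsFraming h) {θ t : ℝ} (ht : t ∈ Ioo (0 : ℝ) 1)
    (hpath : (path h (θ, t)).im ≠ 0) : h (θ, t) ∈ interior (annulus h) := by
  have hsurj : LinearMap.range (fderiv ℝ h (θ, t)).toLinearMap = ⊤ :=
    LinearMap.range_eq_top.2 <| (LinearMap.injective_iff_surjective_of_finrank_eq_finrank
      (by simp [Complex.finrank_real_complex])).1 <| LinearMap.ker_eq_bot.1 <|
        ker_fderiv_eq_bot (H.differentiable _)
          (H.dθ_ne_zero θ t (Ioo_subset_Icc_self ht)) hpath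
  rw [mem_interior_iff_mem_nhds, ← (H.contDiff.contDiffAt.hasStrictFDerivAt
    two_ne_zero).map_nhds_eq_of_surj hsurj]
  exact image_mem_map (prod_mem_nhds univ_mem (Icc_mem_nhds ht.1 ht.2))

end IsFraming

end RegularValues

section Extension

variable {g h : ℝ × ℝ → ℂ} {ψ : ℂ → ℂ}

theorem continuousOn_image_of_comp {Y Z W : Type*} [TopologicalSpace Y] [TopologicalSpace Z]
    [T2Space Z] [TopologicalSpace W] {K : Set Y} (hK : IsCompact K) {f : Y → Z} {φ : Z → W}
    (hf : ContinuousOn f K) (hφ : ContinuousOn (φ ∘ f) K) : ContinuousOn φ (f '' K) := by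
  refine continuousOn_iff_isClosed.2 fun T hT => ?_
  obtain ⟨u, hu, hTu⟩ := continuousOn_iff_isClosed.1 hφ T hT
  refine ⟨f '' (u ∩ K), ((hK.inter_left hu).image_of_continuousOn
    (hf.mono inter_subset_right)).isClosed, ?_⟩
  rw [← hTu, preimage_comp, inter_eq_left.2 (image_mono inter_subset_right), inter_comm (f ⁻¹' _),
    image_inter_preimage, inter_comm]

namespace IsFraming

theorem differentiableOn_interior_of_apply_eq (H : IsFraming h) (hg : ContDiff ℝ 1 g)
    (gper : AngularlyPeriodic g) (gtr : Transported (path h) g) (hψ : ContinuousOn ψ (annulus h))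
    (hψh : ∀ θ, ∀ t ∈ Icc (0 : ℝ) 1, ψ (h (θ, t)) = g (θ, t)) :
    DifferentiableOn ℂ ψ (interior (annulus h)) := by
  obtain ⟨ε, R, C⟩ := exists_isCollar H
  let G : ℂ → ℂ := fun p => (cauchyIntegral g h p 1 - cauchyIntegral g h p 0) / (2 * π * I)
  have hG : DifferentiableOn ℂ G (interior (annulus h)) := by
    refine ((differentiableOn_cauchyIntegral hg.continuous H.contDiff_one isOpen_interior ?_).sub
      (differentiableOn_cauchyIntegral hg.continuous H.contDiff_one isOpen_interior ?_)).div_const _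
    · rintro _ hq x rfl
      exact C.apply_one_notMem_interior H x hq
    · rintro _ hq x rfl
      exact C.apply_zero_notMem_interior H x hq
  have hregular : EqOn ψ G (interior (annulus h) ∩ {p | IsRegularValue h p}) := by
    rintro p ⟨hp, hpreg⟩
    obtain ⟨θ, t, ht, rfl⟩ := mem_annulus.1 (interior_subset hp)
    have ht0 : t ≠ 0 := by rintro rfl; exact C.apply_zero_notMem_interior H θ hp
    have ht1 : t ≠ 1 := by rintro rfl; exact C.apply_one_notMem_interior H θ hp
    rw [hψh θ t ht, eq_div_iff two_pi_I_ne_zero, mul_comm]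
    exact H.two_pi_I_mul_apply_eq hg gper gtr ⟨ht.1.lt_of_ne' ht0, ht.2.lt_of_ne ht1⟩
      (hpreg θ t ht rfl)
  exact hG.congr <| hregular.of_subset_closure (hψ.mono interior_subset) hG.continuousOn
    inter_subset_left (H.dense_isRegularValue.open_subset_closure_inter isOpen_interior)

theorem exists_continuousOn_apply_eq (H : IsFraming h) (hg : ContDiff ℝ 1 g)
    (gper : AngularlyPeriodic g) (gtr : Transported (path h) g) :
    ∃ ψ : ℂ → ℂ, ContinuousOn ψ (annulus h) ∧
      ∀ θ, ∀ t ∈ Icc (0 : ℝ) 1, ψ (h (θ, t)) = g (θ, t) := by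
  let ψ : ℂ → ℂ := g ∘ Function.invFunOn h (univ ×ˢ Icc 0 1)
  have hψh (z : ℝ × ℝ) (hz : z.2 ∈ Icc (0 : ℝ) 1) : ψ (h z) = g z := by
    have hmem := apply_mem_annulus h hz
    exact H.apply_eq_of_apply_eq hg gper gtr (Function.invFunOn_mem hmem).2 hz
      (Function.invFunOn_eq hmem)
  refine ⟨ψ, ?_, fun θ t ht => hψh (θ, t) ht⟩
  rw [H.periodic.annulus_eq]
  exact continuousOn_image_of_comp (isCompact_Icc.prod isCompact_Icc) H.continuous.continuousOn
    (hg.continuous.continuousOn.congr fun z hz => hψh z hz.2)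

end IsFraming

end Extension

section Converse

variable {g h : ℝ × ℝ → ℂ} {ψ : ℂ → ℂ} {θ t : ℝ}

namespace IsFraming

theorem dt_eq_iff (H : IsFraming h) (ht : t ∈ Icc (0 : ℝ) 1) :
    dt g (θ, t) = -(path h (θ, t) * dθ g (θ, t)) ↔
      dt g (θ, t) * dθ h (θ, t) = dt h (θ, t) * dθ g (θ, t) := by
  have hdθ := H.dθ_ne_zero θ t ht
  rw [path, neg_div, neg_mul, neg_neg, div_mul_eq_mul_div, eq_div_iff hdθ]

theorem dt_mul_dθ_eq_of_differentiableAt (H : IsFraming h) (ht : t ∈ Ioo (0 : ℝ) 1)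
    (hψ : DifferentiableAt ℂ ψ (h (θ, t)))
    (hψh : ∀ θ, ∀ t ∈ Icc (0 : ℝ) 1, ψ (h (θ, t)) = g (θ, t)) :
    dt g (θ, t) * dθ h (θ, t) = dt h (θ, t) * dθ g (θ, t) := by
  have hdθ : dθ g (θ, t) = deriv ψ (h (θ, t)) * dθ h (θ, t) :=
    ((hψ.hasDerivAt.comp θ (hasDerivAt_angle H.differentiable θ t)).congr_of_eventuallyEq
      (.of_forall fun x => (hψh x t (Ioo_subset_Icc_self ht)).symm)).deriv
  have hdt : dt g (θ, t) = deriv ψ (h (θ, t)) * dt h (θ, t) := by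
    refine ((hψ.hasDerivAt.comp t (hasDerivAt_time H.differentiable θ t)).congr_of_eventuallyEq
      ?_).deriv
    filter_upwards [Icc_mem_nhds ht.1 ht.2] with s hs using (hψh θ s hs).symm
  rw [hdθ, hdt]
  ring

/-- Where the path is real, `h` is constant along characteristics, hence so is `g = ψ ∘ h`. -/
theorem dt_eq_of_eventually_path_im_eq_zero (H : IsFraming h) (hg : ContDiff ℝ 1 g)
    (ht : t ∈ Ioo (0 : ℝ) 1) (hpath : ∀ᶠ z in 𝓝 (θ, t), (path h z).im = 0)
    (hψh : ∀ θ, ∀ t ∈ Icc (0 : ℝ) 1, ψ (h (θ, t)) = g (θ, t)) :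
    dt g (θ, t) = -(path h (θ, t) * dθ g (θ, t)) := by
  have ht' := Ioo_subset_Icc_self ht
  obtain ⟨φ, rfl, hφ⟩ := exists_eventually_isCharacteristicOn H θ ht'
  have hreal : ((path h (φ t, t)).re : ℂ) = path h (φ t, t) :=
    conj_eq_iff_re.1 (conj_eq_iff_im.2 hpath.self_of_nhds)
  rw [nhdsWithin_eq_nhds.2 (Icc_mem_nhds ht.1 ht.2)] at hφ
  have hφt := hφ.self_of_nhds.hasDerivAt t left_mem_uIcc
  have hpathφ : ∀ᶠ s in 𝓝 t, (path h (φ s, s)).im = 0 :=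
    (hφt.continuousAt.prodMk continuousAt_id).eventually hpath
  have hconst : (fun s => g (φ s, s)) =ᶠ[𝓝 t] fun _ => g (φ t, t) := by
    filter_upwards [hφ, eventually_forall_mem_uIcc hpathφ] with s hφs hs
    have hflux : flux h φ t s = 0 := by
      rw [flux, intervalIntegral.integral_congr hs, intervalIntegral.integral_zero]
    rw [← hψh _ s (hφs.subset right_mem_uIcc), ← hψh _ t ht',
      hφs.apply_eq_of_flux_eq_zero H H.contDiff_one H.transported hflux]
  have hderiv := (hasDerivAt_comp_prodMk (hg.differentiable one_ne_zero _) hφt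
    (hasDerivAt_id' t)).unique ((hasDerivAt_const t _).congr_of_eventuallyEq hconst)
  rw [hreal, ofReal_one, one_mul, add_comm] at hderiv
  exact eq_neg_of_add_eq_zero_left hderiv

theorem transported_of_differentiableOn_interior (H : IsFraming h) (hg : ContDiff ℝ 1 g)
    (hψ : DifferentiableOn ℂ ψ (interior (annulus h)))
    (hψh : ∀ θ, ∀ t ∈ Icc (0 : ℝ) 1, ψ (h (θ, t)) = g (θ, t)) : Transported (path h) g := by
  let E : Set (ℝ × ℝ) := {z | dt g z * dθ h z = dt h z * dθ g z}
  have hE : IsClosed E :=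
    isClosed_eq ((continuous_dt hg).mul H.continuous_dθ)
      ((continuous_dt H.contDiff_one).mul (FramedAnnulus.continuous_dθ hg))
  have hnonreal : {z : ℝ × ℝ | z.2 ∈ Ioo (0 : ℝ) 1 ∧ (path h z).im ≠ 0} ⊆ E := fun z ⟨hz, hpath⟩ =>
    H.dt_mul_dθ_eq_of_differentiableAt hz
      (hψ.differentiableAt (isOpen_interior.mem_nhds (H.apply_mem_interior hz hpath))) hψh
  have hopen : univ ×ˢ Ioo (0 : ℝ) 1 ⊆ E := by
    rintro ⟨θ, t⟩ ⟨-, ht⟩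
    by_cases hcl : (θ, t) ∈ closure {z : ℝ × ℝ | z.2 ∈ Ioo (0 : ℝ) 1 ∧ (path h z).im ≠ 0}
    · exact closure_minimal hnonreal hE hcl
    · refine (H.dt_eq_iff (Ioo_subset_Icc_self ht)).1
        (H.dt_eq_of_eventually_path_im_eq_zero hg ht ?_ hψh)
      filter_upwards [isClosed_closure.isOpen_compl.mem_nhds hcl,
        continuous_snd.continuousAt.preimage_mem_nhds (isOpen_Ioo.mem_nhds ht)] with z hz hzt
      exact not_not.1 fun hne => hz (subset_closure ⟨hzt, hne⟩)
  intro θ t ht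
  refine (H.dt_eq_iff ht).2 (closure_minimal hopen hE ?_)
  rw [closure_prod_eq, closure_univ, closure_Ioo zero_ne_one]
  exact ⟨mem_univ _, ht⟩

end IsFraming

end Converse

theorem isFramedIso_annulus {h ht : ℝ × ℝ → ℂ} {ψ χ : ℂ → ℂ} (H : IsFraming h)
    (Ht : IsFraming ht) (hψ : ContinuousOn ψ (annulus h)) (hχ : ContinuousOn χ (annulus ht))
    (hpath : ∀ θ, ∀ t ∈ Icc (0 : ℝ) 1, path h (θ, t) = path ht (θ, t))
    (hψh : ∀ θ, ∀ t ∈ Icc (0 : ℝ) 1, ψ (h (θ, t)) = ht (θ, t))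
    (hχht : ∀ θ, ∀ t ∈ Icc (0 : ℝ) 1, χ (ht (θ, t)) = h (θ, t)) :
    IsFramedIso h ht (annulus h) (annulus ht) ψ χ := by
  refine ⟨hψ, hχ, ?_, ?_, ?_, ?_,
    H.differentiableOn_interior_of_apply_eq Ht.contDiff_one Ht.periodic
      (Ht.transported_iff.2 hpath) hψ hψh,
    Ht.differentiableOn_interior_of_apply_eq H.contDiff_one H.periodic
      (H.transported_iff.2 fun θ t ht => (hpath θ t ht).symm) hχ hχht, hψh⟩
  all_goals
    rintro _ ⟨⟨θ, t⟩, ⟨-, ht⟩, rfl⟩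
    simp only [hψh θ t ht, hχht θ t ht, apply_mem_annulus _ ht]

end

end FramedAnnulus

open FramedAnnulus in
theorem framed_annuli_isomorphic_iff_same_path_general {h ht : ℝ × ℝ → ℂ} (H : IsFraming h)
    (Ht : IsFraming ht) :
    ((∃ ψ χ : ℂ → ℂ, IsFramedIso h ht (annulus h) (annulus ht) ψ χ) ↔
      ∀ θ : ℝ, ∀ t ∈ Icc (0 : ℝ) 1, path h (θ, t) = path ht (θ, t)) ∧
    (∀ ψ χ ψ' χ' : ℂ → ℂ, IsFramedIso h ht (annulus h) (annulus ht) ψ χ →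
      IsFramedIso h ht (annulus h) (annulus ht) ψ' χ' → EqOn ψ ψ' (annulus h)) := by
  refine ⟨⟨?_, fun hpath => ?_⟩, ?_⟩
  · rintro ⟨ψ, χ, -, -, -, -, -, -, hψ, -, hψh⟩
    exact Ht.transported_iff.1 (H.transported_of_differentiableOn_interior Ht.contDiff_one hψ hψh)
  · obtain ⟨ψ, hψ, hψh⟩ := H.exists_continuousOn_apply_eq Ht.contDiff_one Ht.periodic
      (Ht.transported_iff.2 hpath)
    obtain ⟨χ, hχ, hχht⟩ := Ht.exists_continuousOn_apply_eq H.contDiff_one H.periodic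
      (H.transported_iff.2 fun θ t ht => (hpath θ t ht).symm)
    exact ⟨ψ, χ, isFramedIso_annulus H Ht hψ hχ hpath hψh hχht⟩
  · rintro ψ χ ψ' χ' ⟨-, -, -, -, -, -, -, -, hψh⟩ ⟨-, -, -, -, -, -, -, -, hψh'⟩ _
      ⟨⟨θ, t⟩, ⟨-, ht⟩, rfl⟩
    rw [hψh θ t ht, hψh' θ t ht]

theorem framed_annuli_isomorphic_iff_same_path
    (h ht : ℝ × ℝ → ℂ)
    (hsm : ContDiff ℝ (⊤ : ℕ∞) h) (htsm : ContDiff ℝ (⊤ : ℕ∞) ht)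
    (hper : ∀ θ t, h (θ + 2 * π, t) = h (θ, t))
    (htper : ∀ θ t, ht (θ + 2 * π, t) = ht (θ, t))
    (hinj : ∀ t ∈ Icc (0:ℝ) 1, InjOn (fun θ => h (θ, t)) (Ico 0 (2 * π)))
    (htinj : ∀ t ∈ Icc (0:ℝ) 1, InjOn (fun θ => ht (θ, t)) (Ico 0 (2 * π)))
    (hderiv : ∀ θ : ℝ, ∀ t ∈ Icc (0:ℝ) 1, deriv (fun x => h (x, t)) θ ≠ 0)
    (htderiv : ∀ θ : ℝ, ∀ t ∈ Icc (0:ℝ) 1, deriv (fun x => ht (x, t)) θ ≠ 0)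
    (hinward : ∀ θ : ℝ, ∀ t ∈ Icc (0:ℝ) 1,
      (deriv (fun s => h (θ, s)) t / deriv (fun x => h (x, t)) θ).im ≤ 0)
    (htinward : ∀ θ : ℝ, ∀ t ∈ Icc (0:ℝ) 1,
      (deriv (fun s => ht (θ, s)) t / deriv (fun x => ht (x, t)) θ).im ≤ 0)
    (A At : Set ℂ)
    (hA : A = h '' (univ ×ˢ Icc (0:ℝ) 1)) (hAt : At = ht '' (univ ×ˢ Icc (0:ℝ) 1))
    (hfront : frontier A ⊆ (range fun θ => h (θ, 0)) ∪ (range fun θ => h (θ, 1)))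
    (htfront : frontier At ⊆ (range fun θ => ht (θ, 0)) ∪ (range fun θ => ht (θ, 1)))
    (X Xt : ℝ × ℝ → ℂ)
    (hX : ∀ θ t, X (θ, t) = -(deriv (fun s => h (θ, s)) t) / deriv (fun x => h (x, t)) θ)
    (hXt : ∀ θ t, Xt (θ, t) = -(deriv (fun s => ht (θ, s)) t) / deriv (fun x => ht (x, t)) θ) :
    ((∃ ψ χ : ℂ → ℂ, IsFramedIso h ht A At ψ χ) ↔
      (∀ θ : ℝ, ∀ t ∈ Icc (0:ℝ) 1, X (θ, t) = Xt (θ, t))) ∧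
    (∀ ψ χ ψ' χ' : ℂ → ℂ, IsFramedIso h ht A At ψ χ → IsFramedIso h ht A At ψ' χ' →
      EqOn ψ ψ' A) := by
  subst hA hAt
  simp only [hX, hXt]
  exact framed_annuli_isomorphic_iff_same_path_general
    ⟨contDiff_infty.1 hsm 2, hper, hinj, hderiv, hinward⟩
    ⟨contDiff_infty.1 htsm 2, htper, htinj, htderiv, htinward⟩
end
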